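/- Let G be a finitely generated group of polynomial growth, fix a finite generating set S of G, and let φ : G → ℤ be a surjective group homomorphism. Then there exists a constant C > 0 such that for every A ⊆ ℤ, d_{(G,S)}(φ⁻¹(A)) ≤ C · d_ℤ(A). -/

import Mathlib

/-!
The density comparison follows from doubling of balls. Choose `t` with `φ t = 1`, lying in the ball
of radius `L`. The translates of `φ⁻¹(A) ∩ B_r` by the first `r` powers of `t` stay in the ball of
radius `(L + 1) r`; every fibre of `φ` over a point of `A` thus has at most `|B_{(L + 1) r}| / r`
elements in `B_r`, and only points of `A ∩ [-c r, c r]` occur (`mul_ncard_preimage_le`). If balls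
are doubling, then `r |φ⁻¹(A) ∩ B_r| ≤ M |A ∩ [-c r, c r]| |B_r|`, and passing to upper limits
(`limsup_le_mul_limsup`) gives the theorem. Doubling (`PG.doubling`) is deduced from Gromov's theorem,
proved here in the form `PG.noetherianVirtuallyNilpotent`, and from the case of nilpotent groups.

Nilpotent groups (`nilpotent_doubling`). Words in iterated commutators are weighted so that a letter
of weight `n` costs `r ^ (-n)` at scale `r`. Elements of the ball of radius `r` are words of bounded
cost; words of bounded cost lie in a ball of radius `O(r)`, since powers `t ^ a` with `a ≤ r ^ n` of
a commutator of weight `n` are commutators of powers up to terms of higher weight; and words of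
bounded cost are covered by boundedly many translates of words of small cost. Both facts are proved
by removing one letter of smallest weight at a time.

Gromov's theorem, by induction on the degree of growth. An infinite finitely generated group of
polynomial growth has a finite-index subgroup with a surjection onto `ℤ` (`PG.virtuallyOntoInt`).
The kernel is finitely generated and grows at least one degree slower (`PG.ker_fg`, `PG.ker`), so it
is virtually nilpotent. A lift `t` of `1` acts on the abelian factors of a nilpotent subgroup of the
kernel; coincidences between words in `t` and `x` give polynomials with coefficients in `{-1, 0, 1}`
annihilating `x`, for all powers of `t`, so all eigenvalues have modulus one and by Kronecker some
power of `t` acts unipotently (`PG.nilpotent_sup_zpowers`).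

The virtual surjection onto `ℤ` comes from random walks. The distributions of the walk in `ℓ²(G)`
yield almost harmonic vectors, and an ultralimit of their coboundaries is a nonzero harmonic cocycle
`b` in a Hilbert space (`exists_harmonic_cocycle`). The entropy of the walk grows logarithmically,
hence at infinitely many times the increment is `O(1 / n)`; along such times the normalized second
moments of `⟪b x, v⟫` converge to an invariant quadratic form of trace class dominating the cocycle
(`exists_invariant_form`). Its top eigenspace is finite-dimensional and invariant
(`exists_top_eigenspace`), and projecting gives a nonzero harmonic cocycle in a finite-dimensional
orthogonal representation (`PG.exists_finiteDimensional_cocycle`). The image of this representation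
is virtually nilpotent, because iterated commutators of elements close to the identity shrink so fast
that a non-nilpotent group would have too many distinct short words
(`PG.virtuallyNilpotent_isometries`). If the image is infinite, it has a virtual surjection onto `ℤ`;
if it is finite, the cocycle restricts to a nonzero homomorphism on a finite-index subgroup.
-/

open Filter

/-- The closed ball of radius `r` about the identity in the word metric of `G` with respect to
the generating set `S`: elements expressible as a product of at most `r` elements of
`S ∪ S⁻¹`. -/
def wordBall {G : Type*} [Group G] (S : Finset G) (r : ℕ) : Set G :=
  {g : G | ∃ l : List G, (∀ x ∈ l, x ∈ S ∨ x⁻¹ ∈ S) ∧ l.length ≤ r ∧ l.prod = g}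

/-- The density of `A ⊆ G` with respect to the finite generating set `S`:
`limsup_{r → ∞} |A ∩ B_r| / |B_r|`. -/
noncomputable def wordDensity {G : Type*} [Group G] (S : Finset G) (A : Set G) : ℝ :=
  Filter.limsup
    (fun r : ℕ => ((A ∩ wordBall S r).ncard : ℝ) / ((wordBall S r).ncard : ℝ))
    Filter.atTop

/-- The density of `A ⊆ ℤ`: `limsup_{r → ∞} |A ∩ [-r, r]| / (2r + 1)`. -/
noncomputable def densityZ (A : Set ℤ) : ℝ :=
  Filter.limsup
    (fun r : ℕ => ((A ∩ Set.Icc (-(r : ℤ)) (r : ℤ)).ncard : ℝ) / (2 * (r : ℝ) + 1))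
    Filter.atTop

/-! ### Growth and kernels of maps onto `ℤ` -/

section

open scoped Pointwise

/-- Polynomial growth of degree at most `d`: every finite subset `S` satisfies `#(S ^ n) ≤ C (n +
1) ^ d`. Quantifying over all finite subsets, rather than one generating set, makes the notion
inherited by subgroups and quotients without any finite generation hypothesis. -/
def PG (d : ℕ) (G : Type*) [Group G] : Prop :=
  ∀ S : Set G, S.Finite → ∃ C : ℕ, ∀ n : ℕ, (S ^ n).ncard ≤ C * (n + 1) ^ d

theorem setFinite_pow {M : Type*} [Monoid M] {S : Set M} (hS : S.Finite) (n : ℕ) :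
    (S ^ n).Finite := by
  induction n with
  | zero => simp
  | succ n ih => rw [pow_succ]; exact ih.mul hS

theorem PG.of_injective {d : ℕ} {G H : Type*} [Group G] [Group H] (hG : PG d G) (f : H →* G)
    (hf : Function.Injective f) : PG d H := by
  intro S hS
  obtain ⟨C, hC⟩ := hG (f '' S) (hS.image f)
  refine ⟨C, fun n => ?_⟩
  have := hC n
  rwa [← Set.image_pow, Set.ncard_image_of_injective _ hf] at this

theorem PG.of_surjective {d : ℕ} {G H : Type*} [Group G] [Group H] (hG : PG d G) (f : G →* H)
    (hf : Function.Surjective f) : PG d H := by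
  intro S hS
  obtain ⟨g, hg⟩ := hf.hasRightInverse
  obtain ⟨C, hC⟩ := hG (g '' S) (hS.image g)
  refine ⟨C, fun n => ?_⟩
  have h1 : f '' (g '' S) = S := by
    rw [← Set.image_comp, hg.comp_eq_id, Set.image_id]
  have h2 : S ^ n = f '' ((g '' S) ^ n) := by rw [Set.image_pow, h1]
  rw [h2]
  exact (Set.ncard_image_le (setFinite_pow (hS.image g) n)).trans (hC n)

theorem PG.subgroup {d : ℕ} {G : Type*} [Group G] (hG : PG d G) (H : Subgroup G) : PG d H :=
  hG.of_injective H.subtype H.subtype_injective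

theorem exists_poly_lt_two_pow (C d : ℕ) : ∃ n : ℕ, C * (n + 1) ^ d < 2 ^ n := by
  have h : Tendsto (fun n : ℕ => ((n : ℝ)) ^ d / 2 ^ n) atTop (nhds 0) :=
    tendsto_pow_const_div_const_pow_of_one_lt d (by norm_num : (1 : ℝ) < 2)
  have h2 := (h.comp (tendsto_add_atTop_nat 1)).const_mul (2 * C : ℝ)
  rw [mul_zero] at h2
  obtain ⟨n, hn⟩ := (h2.eventually (gt_mem_nhds (zero_lt_one' ℝ))).exists
  refine ⟨n, ?_⟩
  simp only [Function.comp, pow_succ (2 : ℝ) n, Nat.cast_add, Nat.cast_one] at hn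
  rw [mul_div_assoc', div_lt_one (by positivity)] at hn
  have : (C : ℝ) * (n + 1) ^ d < 2 ^ n := by linarith
  exact_mod_cast this

/-- The product `∏_{k < n} (t ^ k * e * t ^ (-k)) ^ (c k)`. -/
def wordProd {G : Type*} [Group G] (t e : G) (c : ℕ → Bool) : ℕ → G
  | 0 => 1
  | n + 1 => wordProd t e c n * (if c n then t ^ n * e * (t ^ n)⁻¹ else 1)

theorem wordProd_mul_mem {G : Type*} [Group G] (t e : G) (c : ℕ → Bool) (n : ℕ) :
    wordProd t e c n * t ^ n ∈ ({t, e * t} : Set G) ^ n := by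
  induction n with
  | zero => simp [wordProd]
  | succ n ih =>
    rw [pow_succ ({t, e * t} : Set G)]
    have : wordProd t e c (n + 1) * t ^ (n + 1)
        = (wordProd t e c n * t ^ n) * (if c n then e * t else t) := by
      rw [wordProd]
      split_ifs <;> simp [pow_succ, mul_assoc]
    rw [this]
    refine Set.mul_mem_mul ih ?_
    split_ifs <;> simp

theorem wordProd_congr {G : Type*} [Group G] (t e : G) {c c' : ℕ → Bool} {n : ℕ}
    (h : ∀ k < n, c k = c' k) : wordProd t e c n = wordProd t e c' n := by
  induction n with
  | zero => rfl
  | succ n ih =>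
    rw [wordProd, wordProd, ih fun k hk => h k (hk.trans n.lt_succ_self), h n n.lt_succ_self]

/-- If two different exponent sequences give the same product, cancelling common top factors
reaches an index where they differ and where the truncated products still agree. -/
theorem wordProd_top_ne {G : Type*} [Group G] (t e : G) (c c' : ℕ → Bool) (n : ℕ)
    (h : wordProd t e c n = wordProd t e c' n) (hne : ∃ k < n, c k ≠ c' k) :
    ∃ m, c m ≠ c' m ∧ wordProd t e c (m + 1) = wordProd t e c' (m + 1) := by
  induction n with
  | zero => obtain ⟨k, hk, _⟩ := hne; omega
  | succ n ih =>
    by_cases hn : c n = c' n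
    · refine ih ?_ ?_
      · rw [wordProd, wordProd, hn] at h
        exact mul_right_cancel h
      · obtain ⟨k, hk, hk'⟩ := hne
        refine ⟨k, ?_, hk'⟩
        rcases Nat.lt_succ_iff_lt_or_eq.mp hk with h1 | h1
        · exact h1
        · subst h1; exact absurd hn hk'
    · exact ⟨n, hn, h⟩

/-- Polynomial growth forces a coincidence between two positive words in `t` and `e * t`. -/
theorem PG.exists_relation {d : ℕ} {G : Type*} [Group G] (hG : PG d G) (t e : G) :
    ∃ (m : ℕ) (c c' : ℕ → Bool), c m ≠ c' m ∧
      wordProd t e c (m + 1) = wordProd t e c' (m + 1) := by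
  obtain ⟨C, hC⟩ := hG {t, e * t} (by simp)
  obtain ⟨n, hn⟩ := exists_poly_lt_two_pow C d
  let ext : (Fin n → Bool) → ℕ → Bool := fun c k => if h : k < n then c ⟨k, h⟩ else false
  let F : (Fin n → Bool) → G := fun c => wordProd t e (ext c) n * t ^ n
  have hfin : (({t, e * t} : Set G) ^ n).Finite := setFinite_pow (by simp) n
  -- There are `2 ^ n` positive words of length `n` in `t` and `e * t`, more than elements of the
  -- ball, so two of them coincide.
  have hni : ¬ Function.Injective F := by
    intro hinj
    have h1 : (Set.range F).ncard = 2 ^ n := by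
      rw [← Set.image_univ, Set.ncard_image_of_injective _ hinj, Set.ncard_univ]
      simp
    have h2 : (Set.range F).ncard ≤ (({t, e * t} : Set G) ^ n).ncard := by
      refine Set.ncard_le_ncard ?_ hfin
      rintro _ ⟨c, rfl⟩
      exact wordProd_mul_mem t e _ n
    have := hC n
    omega
  simp only [Function.Injective, not_forall] at hni
  obtain ⟨a, b, hab, hne⟩ := hni
  obtain ⟨k, hk⟩ := Function.ne_iff.mp hne
  obtain ⟨m, hm⟩ := wordProd_top_ne t e (ext a) (ext b) n (mul_right_cancel hab)
    ⟨k, k.2, by simpa [ext] using hk⟩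
  exact ⟨m, _, _, hm⟩

theorem wordProd_mem {G : Type*} [Group G] (t e : G) (c : ℕ → Bool) (n : ℕ) (L : Subgroup G)
    (h : ∀ k < n, t ^ k * e * (t ^ k)⁻¹ ∈ L) : wordProd t e c n ∈ L := by
  induction n with
  | zero => exact one_mem _
  | succ n ih =>
    rw [wordProd]
    refine mul_mem (ih fun k hk => h k (hk.trans n.lt_succ_self)) ?_
    split_ifs
    · exact h n n.lt_succ_self
    · exact one_mem _

/-- The conjugates of `e` by nonnegative powers of `t` generate a finitely generated group. -/
theorem PG.exists_conj_mem {d : ℕ} {G : Type*} [Group G] (hG : PG d G) (t e : G) :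
    ∃ m : ℕ, ∀ k : ℕ, t ^ k * e * (t ^ k)⁻¹ ∈
      Subgroup.closure ((fun j : ℕ => t ^ j * e * (t ^ j)⁻¹) '' Set.Iio m) := by
  obtain ⟨m, c, c', hne, heq⟩ := hG.exists_relation t e
  refine ⟨m, ?_⟩
  set L := Subgroup.closure ((fun j : ℕ => t ^ j * e * (t ^ j)⁻¹) '' Set.Iio m) with hL
  have hlt : ∀ k < m, t ^ k * e * (t ^ k)⁻¹ ∈ L := fun k hk =>
    Subgroup.subset_closure ⟨k, hk, rfl⟩
  have hm : t ^ m * e * (t ^ m)⁻¹ ∈ L := by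
    have h1 := wordProd_mem t e c m L hlt
    have h2 := wordProd_mem t e c' m L hlt
    rw [wordProd, wordProd] at heq
    rcases hc : c m <;> rcases hc' : c' m <;> simp only [hc, hc', ne_eq, not_true] at hne heq
    · simp only [Bool.false_eq_true, if_false, if_true, mul_one] at heq
      rw [eq_comm, ← eq_inv_mul_iff_mul_eq] at heq
      rw [heq]
      exact mul_mem (inv_mem h2) h1
    · simp only [Bool.false_eq_true, if_false, if_true, mul_one] at heq
      rw [← eq_inv_mul_iff_mul_eq] at heq
      rw [heq]
      exact mul_mem (inv_mem h1) h2
  have hconj : ∀ x ∈ L, t * x * t⁻¹ ∈ L := by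
    intro x hx
    induction hx using Subgroup.closure_induction with
    | mem x hx =>
      obtain ⟨j, hj, rfl⟩ := hx
      have h3 : t * (t ^ j * e * (t ^ j)⁻¹) * t⁻¹ = t ^ (j + 1) * e * (t ^ (j + 1))⁻¹ := by
        rw [pow_succ']; group
      simp only [h3]
      rcases Nat.lt_or_ge (j + 1) m with h | h
      · exact hlt _ h
      · have : j + 1 = m := le_antisymm hj h
        rw [this]; exact hm
    | one => simp
    | mul x y _ _ hx hy =>
      have : t * (x * y) * t⁻¹ = (t * x * t⁻¹) * (t * y * t⁻¹) := by group
      rw [this]; exact mul_mem hx hy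
    | inv x _ hx =>
      have : t * x⁻¹ * t⁻¹ = (t * x * t⁻¹)⁻¹ := by group
      rw [this]; exact inv_mem hx
  intro k
  induction k with
  | zero =>
    rcases Nat.eq_zero_or_pos m with h | h
    · rw [h] at hm; exact hm
    · exact hlt 0 h
  | succ k ih =>
    have h3 : t ^ (k + 1) * e * (t ^ (k + 1))⁻¹ = t * (t ^ k * e * (t ^ k)⁻¹) * t⁻¹ := by
      rw [pow_succ']; group
    rw [h3]; exact hconj _ ih

/-- The kernel of a surjection onto `ℤ` grows at least one degree slower. -/
theorem PG.ker {d : ℕ} {G : Type*} [Group G] (hG : PG (d + 1) G) (φ : G →* Multiplicative ℤ)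
    (hφ : Function.Surjective φ) : PG d φ.ker := by
  intro S hS
  obtain ⟨t, ht⟩ := hφ (Multiplicative.ofAdd 1)
  set S' : Set G := φ.ker.subtype '' S ∪ {1, t} with hS'
  have hfin : S'.Finite := (hS.image _).union (by simp)
  obtain ⟨C, hC⟩ := hG S' hfin
  refine ⟨C * 2 ^ (d + 1), fun n => ?_⟩
  let F : (φ.ker × ℕ) → G := fun p => (p.1 : G) * t ^ p.2
  have hF : Function.Injective F := by
    rintro ⟨a, i⟩ ⟨b, j⟩ h
    have h1 := congrArg φ h
    simp only [F, map_mul, map_pow, ht] at h1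
    rw [MonoidHom.mem_ker.mp a.2, MonoidHom.mem_ker.mp b.2, one_mul, one_mul,
      ← ofAdd_nsmul, ← ofAdd_nsmul] at h1
    have h2 : i = j := by simpa using Multiplicative.ofAdd.injective h1
    subst h2
    have h3 : a = b := Subtype.ext (mul_right_cancel h)
    rw [h3]
  -- Elements of `S ^ n` times the `n + 1` powers of `t` are pairwise distinct and lie in a ball of
  -- radius `2 n`, which gains one degree.
  have hsub : F '' ((S ^ n) ×ˢ (Set.Iic n)) ⊆ S' ^ (2 * n) := by
    rintro _ ⟨⟨a, j⟩, ⟨ha, hj⟩, rfl⟩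
    rw [two_mul, pow_add]
    refine Set.mul_mem_mul ?_ ?_
    · have : (a : G) ∈ (φ.ker.subtype '' S) ^ n := by
        rw [← Set.image_pow]; exact ⟨a, ha, rfl⟩
      exact Set.pow_subset_pow_left Set.subset_union_left this
    · have h1 : t ^ j ∈ S' ^ j := Set.pow_mem_pow (by simp [hS'])
      exact Set.pow_subset_pow_right (by simp [hS']) hj h1
  have h1 := (Set.ncard_le_ncard hsub (setFinite_pow hfin _)).trans (hC (2 * n))
  rw [Set.ncard_image_of_injective _ hF, Set.ncard_prod] at h1
  have h2 : (Set.Iic n).ncard = n + 1 := by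
    rw [← Finset.coe_Iic, Set.ncard_coe_finset]; simp
  rw [h2] at h1
  have h3 : C * (2 * n + 1) ^ (d + 1) ≤ C * 2 ^ (d + 1) * (n + 1) ^ d * (n + 1) := by
    calc C * (2 * n + 1) ^ (d + 1) ≤ C * (2 * (n + 1)) ^ (d + 1) := by gcongr; omega
      _ = _ := by rw [mul_pow]; ring
  exact Nat.le_of_mul_le_mul_right (h1.trans h3) n.succ_pos

/-- Milnor: in a finitely generated group of polynomial growth the kernel of a surjection onto
`ℤ` is finitely generated. -/
theorem PG.ker_fg {d : ℕ} {G : Type*} [Group G] (hG : PG d G) [hfg : Group.FG G]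
    (φ : G →* Multiplicative ℤ) (hφ : Function.Surjective φ) : φ.ker.FG := by
  obtain ⟨t, ht⟩ := hφ (Multiplicative.ofAdd 1)
  obtain ⟨X, hX, hXfin⟩ := Group.fg_iff.mp hfg
  have hpow : ∀ k : ℤ, φ (t ^ k) = Multiplicative.ofAdd k := by
    intro k; rw [map_zpow, ht, ← ofAdd_zsmul]; simp
  let e : G → G := fun x => x * t ^ (-(Multiplicative.toAdd (φ x)))
  have he : ∀ x, φ (e x) = 1 := by
    intro x
    simp only [e, map_mul, hpow, ofAdd_neg, ofAdd_toAdd, mul_inv_cancel]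
  choose m hm using fun x => hG.exists_conj_mem t (e x)
  choose m' hm' using fun x => hG.exists_conj_mem t⁻¹ (e x)
  let Y : Set G := ⋃ x ∈ X, ((fun j : ℕ => t ^ j * e x * (t ^ j)⁻¹) '' Set.Iio (m x) ∪
    (fun j : ℕ => t⁻¹ ^ j * e x * (t⁻¹ ^ j)⁻¹) '' Set.Iio (m' x))
  have hYfin : Y.Finite := hXfin.biUnion fun x _ =>
    ((Set.finite_Iio _).image _).union ((Set.finite_Iio _).image _)
  let L := Subgroup.closure Y
  have hLconj : ∀ x ∈ X, ∀ k : ℤ, t ^ k * e x * (t ^ k)⁻¹ ∈ L := by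
    intro x hx k
    rcases Int.eq_nat_or_neg k with ⟨n, rfl | rfl⟩
    · rw [zpow_natCast]
      exact Subgroup.closure_mono (Set.subset_union_left.trans
        (Set.subset_biUnion_of_mem (u := fun x => ((fun j : ℕ => t ^ j * e x * (t ^ j)⁻¹) ''
          Set.Iio (m x) ∪ (fun j : ℕ => t⁻¹ ^ j * e x * (t⁻¹ ^ j)⁻¹) '' Set.Iio (m' x))) hx))
        (hm x n)
    · have : t ^ (-(n : ℤ)) = t⁻¹ ^ n := by rw [zpow_neg, zpow_natCast, inv_pow]
      rw [this]
      exact Subgroup.closure_mono (Set.subset_union_right.trans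
        (Set.subset_biUnion_of_mem (u := fun x => ((fun j : ℕ => t ^ j * e x * (t ^ j)⁻¹) ''
          Set.Iio (m x) ∪ (fun j : ℕ => t⁻¹ ^ j * e x * (t⁻¹ ^ j)⁻¹) '' Set.Iio (m' x))) hx))
        (hm' x n)
  have hLker : L ≤ φ.ker := by
    rw [Subgroup.closure_le]
    intro y hy
    simp only [Y, Set.mem_iUnion] at hy
    obtain ⟨x, hx, ⟨j, _, rfl⟩ | ⟨j, _, rfl⟩⟩ := hy <;>
      simp [MonoidHom.mem_ker, he]
  have hnorm : ∀ l ∈ L, ∀ k : ℤ, t ^ k * l * (t ^ k)⁻¹ ∈ L := by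
    intro l hl k
    induction hl using Subgroup.closure_induction with
    | mem y hy =>
      simp only [Y, Set.mem_iUnion] at hy
      obtain ⟨x, hx, ⟨j, _, rfl⟩ | ⟨j, _, rfl⟩⟩ := hy
      · have := hLconj x hx (k + j)
        rw [zpow_add, zpow_natCast] at this
        convert this using 1; group
      · have := hLconj x hx (k - j)
        rw [sub_eq_add_neg, zpow_add, zpow_neg t j, zpow_natCast, ← inv_pow] at this
        convert this using 1; group
    | one => simp
    | mul x y _ _ hx hy =>
      have : t ^ k * (x * y) * (t ^ k)⁻¹ = (t ^ k * x * (t ^ k)⁻¹) * (t ^ k * y * (t ^ k)⁻¹) := by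
        group
      rw [this]; exact mul_mem hx hy
    | inv x _ hx =>
      have : t ^ k * x⁻¹ * (t ^ k)⁻¹ = (t ^ k * x * (t ^ k)⁻¹)⁻¹ := by group
      rw [this]; exact inv_mem hx
  have hall : ∀ g : G, ∃ l ∈ L, ∃ k : ℤ, g = l * t ^ k := by
    intro g
    have hg : g ∈ Subgroup.closure X := by rw [hX]; trivial
    induction hg using Subgroup.closure_induction with
    | mem x hx =>
      refine ⟨e x, by simpa using hLconj x hx 0, Multiplicative.toAdd (φ x), ?_⟩
      simp [e]
    | one => exact ⟨1, one_mem _, 0, by simp⟩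
    | mul x y _ _ hx hy =>
      obtain ⟨l, hl, k, rfl⟩ := hx
      obtain ⟨l', hl', k', rfl⟩ := hy
      refine ⟨l * (t ^ k * l' * (t ^ k)⁻¹), mul_mem hl (hnorm l' hl' k), k + k', ?_⟩
      rw [zpow_add]; group
    | inv x _ hx =>
      obtain ⟨l, hl, k, rfl⟩ := hx
      refine ⟨t ^ (-k) * l⁻¹ * (t ^ (-k))⁻¹, hnorm _ (inv_mem hl) _, -k, ?_⟩
      group
  rw [Subgroup.fg_iff]
  refine ⟨Y, le_antisymm hLker ?_, hYfin⟩
  intro g hg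
  obtain ⟨l, hl, k, rfl⟩ := hall g
  have h1 : φ (l * t ^ k) = 1 := hg
  rw [map_mul, hpow, MonoidHom.mem_ker.mp (hLker hl), one_mul] at h1
  have h2 : k = 0 := by simpa using h1
  rw [h2, zpow_zero, mul_one]
  exact hl

theorem pow_symm_exhaust {G : Type*} [Group G] {S : Set G}
    (hinv : ∀ x ∈ S, x⁻¹ ∈ S) (hS : Subgroup.closure S = ⊤) (g : G) : ∃ n, g ∈ S ^ n := by
  have hg : g ∈ Subgroup.closure S := by rw [hS]; trivial
  induction hg using Subgroup.closure_induction with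
  | mem x hx => exact ⟨1, by simpa using hx⟩
  | one => exact ⟨0, by simp⟩
  | mul x y _ _ hx hy =>
    obtain ⟨n, hn⟩ := hx
    obtain ⟨m, hm⟩ := hy
    exact ⟨n + m, by rw [pow_add]; exact Set.mul_mem_mul hn hm⟩
  | inv x _ hx =>
    obtain ⟨n, hn⟩ := hx
    refine ⟨n, ?_⟩
    have : S⁻¹ = S := by
      ext x; exact ⟨fun h => by simpa using hinv _ h, fun h => hinv _ h⟩
    rw [← this, inv_pow]
    simpa using hn

theorem exists_symm_generators (G : Type*) [Group G] [hfg : Group.FG G] :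
    ∃ S : Set G, S.Finite ∧ (1 : G) ∈ S ∧ (∀ x ∈ S, x⁻¹ ∈ S) ∧ Subgroup.closure S = ⊤ := by
  obtain ⟨X, hX, hXfin⟩ := Group.fg_iff.mp hfg
  refine ⟨X ∪ X⁻¹ ∪ {1}, (hXfin.union hXfin.inv).union (by simp), by simp, ?_, ?_⟩
  · rintro x ((h | h) | h)
    · left; right; simpa using h
    · left; left; simpa using h
    · right; simp at h; simp [h]
  · rw [eq_top_iff, ← hX]
    exact Subgroup.closure_mono (Set.subset_union_left.trans Set.subset_union_left)

theorem PG.finite_of_zero {G : Type*} [Group G] (hG : PG 0 G) [hfg : Group.FG G] : Finite G := by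
  obtain ⟨S, hS, h1, hinv, hgen⟩ := exists_symm_generators G
  obtain ⟨C, hC⟩ := hG S hS
  by_contra hinf
  rw [not_finite_iff_infinite] at hinf
  obtain ⟨T, hT⟩ := Infinite.exists_subset_card_eq G (C + 1)
  choose n hn using fun g => pow_symm_exhaust hinv hgen g
  have hsub : (T : Set G) ⊆ S ^ (T.sup n) := by
    intro g hg
    exact Set.pow_subset_pow_right h1 (Finset.le_sup hg) (hn g)
  have := (Set.ncard_le_ncard hsub (setFinite_pow hS _)).trans (hC _)
  rw [Set.ncard_coe_finset, hT] at this
  simp at this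

end

section

open scoped Pointwise commutatorElement

/-! ### Doubling for nilpotent groups -/

/-- The iterated commutators of elements of `S`; the weight is the number of entries from `S`,
counted with multiplicity. A group element may be a letter of several weights. -/
inductive Letter {G : Type*} [Group G] (S : Set G) : ℕ → G → Prop
  | base {s : G} : s ∈ S → Letter S 1 s
  | comm {i j : ℕ} {a b : G} : Letter S i a → Letter S j b → Letter S (i + j) ⁅a, b⁆

/-- Letters of weight at least `k`. -/
def letters {G : Type*} [Group G] (S : Set G) (k : ℕ) : Set (ℕ × G) :=
  {p | k ≤ p.1 ∧ Letter S p.1 p.2}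

/-- A set of weighted letters closed under inversion and under commutators with arbitrary letters.
-/
structure IsIdeal {G : Type*} [Group G] (S : Set G) (P : Set (ℕ × G)) : Prop where
  letter : ∀ p ∈ P, Letter S p.1 p.2
  inv : ∀ n t, (n, t) ∈ P → (n, t⁻¹) ∈ P
  comm : ∀ n t m y, (n, t) ∈ P → Letter S m y → (n + m, ⁅t, y⁆) ∈ P

/-- The cost of a word at scale `r`: a letter of weight `n` counts `r ^ (-n)`, so that `r ^ n`
repetitions of it cost `1`, as `r` generators do. -/
noncomputable def cost {G : Type*} (r : ℕ) (l : List (ℕ × G)) : ℝ :=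
  (l.map fun p => ((r : ℝ) ^ p.1)⁻¹).sum

/-- The element `g` is the product of a word over `P` of cost at most `K` at scale `r`. -/
def IsWd {G : Type*} [Group G] (P : Set (ℕ × G)) (r : ℕ) (K : ℝ) (g : G) : Prop :=
  ∃ l : List (ℕ × G), (∀ p ∈ l, p ∈ P) ∧ cost r l ≤ K ∧ (l.map Prod.snd).prod = g

section
variable {G : Type*} [Group G] {S : Set G}

theorem Letter.inv (hS : ∀ x ∈ S, x⁻¹ ∈ S) {n : ℕ} {t : G} (h : Letter S n t) :
    Letter S n t⁻¹ := by
  cases h with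
  | base h => exact .base (hS _ h)
  | comm ha hb =>
    rw [commutatorElement_inv, add_comm]
    exact .comm hb ha

theorem Letter.pos {n : ℕ} {t : G} (h : Letter S n t) : 1 ≤ n := by
  induction h with
  | base => exact le_rfl
  | comm _ _ h1 _ => omega

theorem isIdeal_letters (hS : ∀ x ∈ S, x⁻¹ ∈ S) (k : ℕ) : IsIdeal S (letters S k) where
  letter p hp := hp.2
  inv n t hp := ⟨hp.1, hp.2.inv hS⟩
  comm n t m y hp hy := ⟨le_add_right hp.1, hp.2.comm hy⟩

theorem Letter.finite (hS : S.Finite) (n : ℕ) : {t : G | Letter S n t}.Finite := by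
  induction n using Nat.strong_induction_on with
  | _ n ih =>
    have hsub : {t : G | Letter S n t} ⊆ S ∪ ⋃ i ∈ Finset.range n, ⋃ j ∈ Finset.range n,
        Set.image2 (fun a b => ⁅a, b⁆) {t : G | Letter S i t} {t : G | Letter S j t} := by
      intro t ht
      cases ht with
      | base h => left; exact h
      | @comm i j a b ha hb =>
        right
        have := ha.pos
        have := hb.pos
        simp only [Set.mem_iUnion]
        exact ⟨i, by simp; omega, j, by simp; omega, a, ha, b, hb, rfl⟩
    refine Set.Finite.subset (hS.union ?_) hsub
    refine Set.Finite.biUnion (Finset.finite_toSet _) fun i hi => ?_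
    refine Set.Finite.biUnion (Finset.finite_toSet _) fun j hj => ?_
    exact Set.Finite.image2 _ (ih i (by simpa using hi)) (ih j (by simpa using hj))

/-- Weight at least `2 ^ m` forces depth at least `m`: in `⁅a, b⁆` one of the two entries carries
at least half of the weight. The bound is far from sharp. -/
theorem Letter.mem_lowerCentralSeries {n : ℕ} {t : G} (h : Letter S n t) :
    ∀ m : ℕ, 2 ^ m ≤ n → t ∈ (⊤ : Subgroup G).lowerCentralSeries m := by
  induction h with
  | base h =>
    intro m hm
    rcases m with _ | m
    · simp
    · have : 2 ≤ 2 ^ (m + 1) := by rw [pow_succ]; have := Nat.one_le_two_pow (n := m); omega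
      omega
  | @comm i j a b ha hb iha ihb =>
    intro m hm
    rcases m with _ | m
    · simp
    · rw [pow_succ] at hm
      rcases Nat.lt_or_ge i (2 ^ m) with h | h
      · have hb' := ihb m (by omega)
        rw [← commutatorElement_inv]
        exact inv_mem (Subgroup.commutator_mem_commutator hb' (Subgroup.mem_top _))
      · exact Subgroup.commutator_mem_commutator (iha m h) (Subgroup.mem_top _)

/-- In a nilpotent group the letters of large weight are trivial. -/
theorem exists_letter_trivial [hG : Group.IsNilpotent G] (S : Set G) :
    ∃ N, ∀ n t, N ≤ n → Letter S n t → t = 1 := by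
  obtain ⟨c, hc⟩ := Subgroup.nilpotent_iff_lowerCentralSeries.mp hG
  refine ⟨2 ^ c, fun n t hn ht => ?_⟩
  have := ht.mem_lowerCentralSeries c hn
  rw [hc] at this
  exact this

@[simp] theorem cost_nil (r : ℕ) : cost r ([] : List (ℕ × G)) = 0 := rfl

@[simp] theorem cost_cons (r : ℕ) (p : ℕ × G) (l : List (ℕ × G)) :
    cost r (p :: l) = ((r : ℝ) ^ p.1)⁻¹ + cost r l := by simp [cost]

@[simp] theorem cost_append (r : ℕ) (l l' : List (ℕ × G)) :
    cost r (l ++ l') = cost r l + cost r l' := by simp [cost]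

theorem cost_nonneg (r : ℕ) (l : List (ℕ × G)) : 0 ≤ cost r l := by
  induction l with
  | nil => simp
  | cons p l ih => rw [cost_cons]; positivity

variable {P Q P' : Set (ℕ × G)} {r : ℕ} {K K' : ℝ}

theorem IsWd.mono {g : G} (h : IsWd P r K g) (hK : K ≤ K') : IsWd P r K' g := by
  obtain ⟨l, h1, h2, h3⟩ := h
  exact ⟨l, h1, h2.trans hK, h3⟩

theorem IsWd.sub {g : G} (h : IsWd P r K g) (hP : P ⊆ Q) : IsWd Q r K g := by
  obtain ⟨l, h1, h2, h3⟩ := h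
  exact ⟨l, fun p hp => hP (h1 p hp), h2, h3⟩

theorem IsWd.one (P : Set (ℕ × G)) (r : ℕ) (hK : 0 ≤ K) : IsWd P r K (1 : G) :=
  ⟨[], by simp, by simpa, by simp⟩

theorem IsWd.nonneg {g : G} (h : IsWd P r K g) : 0 ≤ K := by
  obtain ⟨l, h1, h2, h3⟩ := h
  exact (cost_nonneg r l).trans h2

theorem IsWd.mul {g h : G} (hg : IsWd P r K g) (hh : IsWd P r K' h) : IsWd P r (K + K') (g * h) := by
  obtain ⟨l, h1, h2, h3⟩ := hg
  obtain ⟨l', h1', h2', h3'⟩ := hh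
  refine ⟨l ++ l', ?_, by rw [cost_append]; linarith, by simp [h3, h3']⟩
  intro p hp
  rcases List.mem_append.mp hp with h | h
  · exact h1 p h
  · exact h1' p h

theorem IsWd.of_mem {n : ℕ} {t : G} (h : (n, t) ∈ P) : IsWd P r ((r : ℝ) ^ n)⁻¹ t :=
  ⟨[(n, t)], by simpa, by simp, by simp⟩

theorem IsWd.inv (hP : IsIdeal S P) {g : G} (h : IsWd P r K g) : IsWd P r K g⁻¹ := by
  obtain ⟨l, h1, h2, rfl⟩ := h
  induction l generalizing K with
  | nil => exact ⟨[], by simp, by simpa using h2, by simp⟩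
  | cons p l ih =>
    rw [cost_cons] at h2
    have := ih (K := cost r l) (fun p hp => h1 p (by simp [hp])) le_rfl
    have h3 := IsWd.mul this (IsWd.of_mem (r := r) (hP.inv p.1 p.2 (h1 p (by simp))))
    simp only [List.map_cons, List.prod_cons, mul_inv_rev]
    exact h3.mono (by linarith)

theorem IsWd.pow {n : ℕ} {t : G} (h : (n, t) ∈ P) (a : ℕ) :
    IsWd P r (a * ((r : ℝ) ^ n)⁻¹) (t ^ a) := by
  induction a with
  | zero => simpa using IsWd.one P r le_rfl
  | succ a ih =>
    rw [pow_succ]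
    exact (ih.mul (IsWd.of_mem h)).mono (by push_cast; linarith)

theorem IsWd.zpow (hP : IsIdeal S P) {n : ℕ} {t : G} (h : (n, t) ∈ P) (a : ℤ) :
    IsWd P r (|(a : ℝ)| * ((r : ℝ) ^ n)⁻¹) (t ^ a) := by
  rcases Int.eq_nat_or_neg a with ⟨m, rfl | rfl⟩
  · simpa using IsWd.pow (r := r) h m
  · simpa using (IsWd.pow (r := r) h m).inv hP

/-- Conjugation by a letter `y` of weight `j` replaces each letter `t` by `⁅y, t⁆ t`, which
multiplies the cost by at most `1 + r ^ (-j)`. -/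
theorem IsWd.conj_letter (hP : IsIdeal S P) {j : ℕ} {y : G} (hy : Letter S j y) {w : G}
    (h : IsWd P r K w) : IsWd P r (K * (1 + ((r : ℝ) ^ j)⁻¹)) (y * w * y⁻¹) := by
  obtain ⟨l, h1, h2, rfl⟩ := h
  induction l generalizing K with
  | nil => 
    have : 0 ≤ K := by simpa using h2
    simpa using IsWd.one P r (by positivity)
  | cons p l ih =>
    rw [cost_cons] at h2
    have h3 := ih (K := cost r l) (fun p hp => h1 p (by simp [hp])) le_rfl
    have hp : (p.1, p.2) ∈ P := h1 p (by simp)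
    have h4 := IsWd.of_mem (r := r) (hP.comm _ _ _ _ (hP.inv _ _ hp) hy)
    have h5 := ((IsWd.of_mem (r := r) hp).mul h4).mul h3
    have h6 : y * (List.map Prod.snd (p :: l)).prod * y⁻¹
        = p.2 * ⁅p.2⁻¹, y⁆ * (y * (List.map Prod.snd l).prod * y⁻¹) := by
      simp only [List.map_cons, List.prod_cons, commutatorElement_def]; group
    rw [h6]
    refine h5.mono ?_
    have h7 : (((r : ℝ) ^ (p.1 + j)))⁻¹ = ((r : ℝ) ^ p.1)⁻¹ * ((r : ℝ) ^ j)⁻¹ := by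
      rw [pow_add, mul_inv]
    rw [h7]
    have : (0 : ℝ) ≤ ((r : ℝ) ^ j)⁻¹ := by positivity
    nlinarith

theorem one_add_mul_exp_le (x κ : ℝ) : (1 + x) * Real.exp κ ≤ Real.exp (x + κ) := by
  rw [Real.exp_add]
  have := Real.add_one_le_exp x
  have := Real.exp_pos κ
  nlinarith

/-- Conjugation by a word of cost `κ` multiplies the cost by at most `exp κ`. -/
theorem IsWd.conj (hP : IsIdeal S P) {q : G} {κ : ℝ} (hq : IsWd Q r κ q)
    (hQ : ∀ p ∈ Q, Letter S p.1 p.2) {w : G}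
    (h : IsWd P r K w) : IsWd P r (K * Real.exp κ) (q * w * q⁻¹) := by
  obtain ⟨l, h1, h2, rfl⟩ := hq
  induction l generalizing κ with
  | nil =>
    have h2 : 0 ≤ κ := by simpa using h2
    have := h.nonneg
    have := Real.one_le_exp h2
    simpa using h.mono (by nlinarith)
  | cons p l ih =>
    rw [cost_cons] at h2
    have h3 := ih (κ := cost r l) (fun p hp => h1 p (by simp [hp])) le_rfl
    have h4 := h3.conj_letter hP (hQ p (h1 p (by simp)))
    have h6 : (List.map Prod.snd (p :: l)).prod * w * (List.map Prod.snd (p :: l)).prod⁻¹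
        = p.2 * ((List.map Prod.snd l).prod * w * (List.map Prod.snd l).prod⁻¹) * p.2⁻¹ := by
      simp only [List.map_cons, List.prod_cons]; group
    rw [h6]
    refine h4.mono ?_
    rw [mul_assoc]
    refine mul_le_mul_of_nonneg_left ?_ h.nonneg
    rw [mul_comm]
    exact (one_add_mul_exp_le _ _).trans (Real.exp_le_exp.mpr h2)

/-- Conjugating a letter `t` by `q` changes it by letters of higher weight only. -/
theorem IsWd.comm_letter (hP' : IsIdeal S P') {n : ℕ} {t : G} {q : G} {κ : ℝ}
    (hQ : ∀ p ∈ Q, Letter S p.1 p.2)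
    (h : ∀ p ∈ Q, (n + p.1, ⁅t, p.2⁆) ∈ P') (hq : IsWd Q r κ q) :
    IsWd P' r (((r : ℝ) ^ n)⁻¹ * (Real.exp κ - 1)) ⁅t, q⁆ 
    := by
  obtain ⟨l, h1, h2, rfl⟩ := hq
  induction l generalizing κ with
  | nil =>
    have h2 : 0 ≤ κ := by simpa using h2
    have := Real.one_le_exp h2
    simpa using IsWd.one P' r (mul_nonneg (by positivity) (by linarith))
  | cons p l ih =>
    rw [cost_cons] at h2
    have h3 := ih (κ := cost r l) (fun p hp => h1 p (by simp [hp])) le_rfl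
    have h4 := h3.conj_letter hP' (hQ p (h1 p (by simp)))
    have h5 := (IsWd.of_mem (r := r) (h p (h1 p (by simp)))).mul h4
    have h6 : ⁅t, (List.map Prod.snd (p :: l)).prod⁆
        = ⁅t, p.2⁆ * (p.2 * ⁅t, (List.map Prod.snd l).prod⁆ * p.2⁻¹) := by
      simp only [List.map_cons, List.prod_cons, commutatorElement_def]; group
    rw [h6]
    refine h5.mono ?_
    have h7 : (((r : ℝ) ^ (n + p.1)))⁻¹ = ((r : ℝ) ^ n)⁻¹ * ((r : ℝ) ^ p.1)⁻¹ := by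
      rw [pow_add, mul_inv]
    rw [h7, mul_assoc, ← mul_add]
    refine mul_le_mul_of_nonneg_left ?_ (by positivity)
    have := (one_add_mul_exp_le ((r : ℝ) ^ p.1)⁻¹ (cost r l)).trans (Real.exp_le_exp.mpr h2)
    nlinarith

/-- The commutator of a word in letters of weight at least `i` with a word in letters of weight at
least `j` is a word in letters of weight at least `i + j`. -/
theorem IsWd.comm (hS : ∀ x ∈ S, x⁻¹ ∈ S) {i j : ℕ} {p q : G} {κ κ' : ℝ}
    (hp : IsWd (letters S i) r κ p) (hq : IsWd (letters S j) r κ' q) :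
    IsWd (letters S (i + j)) r ((Real.exp κ - 1) * Real.exp κ') ⁅p, q⁆ 
    := by
  obtain ⟨l, h1, h2, rfl⟩ := hp
  induction l generalizing κ with
  | nil =>
    have h2 : 0 ≤ κ := by simpa using h2
    have := Real.one_le_exp h2
    simpa using IsWd.one _ r (mul_nonneg (by linarith) (Real.exp_pos _).le)
  | cons p l ih =>
    rw [cost_cons] at h2
    have h3 := ih (κ := cost r l) (fun p hp => h1 p (by simp [hp])) le_rfl
    have hp := h1 p (by simp)
    have h4 := h3.conj_letter (isIdeal_letters hS _) hp.2
    have h5 := IsWd.comm_letter (isIdeal_letters hS (i + j)) (n := p.1) (t := p.2)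
      (Q := letters S j) (fun p hp => hp.2)
      (fun q hq => ⟨add_le_add hp.1 hq.1, hp.2.comm hq.2⟩) hq
    have h6 : ⁅(List.map Prod.snd (p :: l)).prod, q⁆
        = (p.2 * ⁅(List.map Prod.snd l).prod, q⁆ * p.2⁻¹) * ⁅p.2, q⁆ := by
      simp only [List.map_cons, List.prod_cons, commutatorElement_def]; group
    rw [h6]
    refine (h4.mul h5).mono ?_
    have := (one_add_mul_exp_le ((r : ℝ) ^ p.1)⁻¹ (cost r l)).trans (Real.exp_le_exp.mpr h2)
    have h8 := Real.exp_pos κ'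
    have h9 : (0 : ℝ) ≤ ((r : ℝ) ^ p.1)⁻¹ := by positivity
    nlinarith [mul_le_mul_of_nonneg_right this h8.le]

/-- Moving all occurrences of the letter `t` to the front of a word. -/
theorem IsWd.extract (hP : IsIdeal S P) (hP' : IsIdeal S P') {n : ℕ} {t : G} (hr : 1 ≤ r)
    (ht : (n, t) ∈ P) (hsub : P ⊆ P' ∪ {(n, t), (n, t⁻¹)}) {g : G} (hg : IsWd P r K g) :
    ∃ a : ℤ, ∃ g', IsWd P' r (K * Real.exp K) g' ∧ |(a : ℝ)| * ((r : ℝ) ^ n)⁻¹ ≤ K ∧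
      g = t ^ a * g' := by
  obtain ⟨l, h1, h2, rfl⟩ := hg
  induction l generalizing K with
  | nil =>
    have h2 : 0 ≤ K := by simpa using h2
    exact ⟨0, 1, IsWd.one _ _ (by positivity), by simpa, by simp⟩
  | cons p l ih =>
    rw [cost_cons] at h2
    obtain ⟨a, g', hg', ha, hl⟩ := ih (K := cost r l) (fun p hp => h1 p (by simp [hp])) le_rfl
    have hρ : (0 : ℝ) < ((r : ℝ) ^ p.1)⁻¹ := by positivity
    have hc := cost_nonneg r l
    have hE : cost r l * Real.exp (cost r l) ≤ K * Real.exp K := by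
      gcongr <;> linarith
    have hpm : ∀ e : ℤ, |e| = 1 → p = (n, t ^ e) → ∃ a : ℤ, ∃ g', IsWd P' r (K * Real.exp K) g' ∧
        |(a : ℝ)| * ((r : ℝ) ^ n)⁻¹ ≤ K ∧ (List.map Prod.snd (p :: l)).prod = t ^ a * g' := by
      intro e he hpe
      refine ⟨e + a, g', hg'.mono hE, ?_, ?_⟩
      · have h3 : |((e + a : ℤ) : ℝ)| ≤ 1 + |(a : ℝ)| := by
          push_cast
          refine (abs_add_le _ _).trans ?_
          have : |(e : ℝ)| = 1 := by exact_mod_cast he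
          rw [this]
        subst hpe
        simp only at hρ h2
        nlinarith
      · simp only [List.map_cons, List.prod_cons, hl, hpe, zpow_add, mul_assoc]
    rcases hsub (h1 p (by simp)) with h | h | h
    · refine ⟨a, (t ^ (-a) * p.2 * (t ^ (-a))⁻¹) * g', ?_, by linarith, ?_⟩
      · have h3 := IsWd.conj hP' (IsWd.zpow (r := r) hP ht (-a)) hP.letter
          (IsWd.of_mem (r := r) (n := p.1) (t := p.2) h)
        refine (h3.mul hg').mono ?_
        have h4 : Real.exp (|((-a : ℤ) : ℝ)| * ((r : ℝ) ^ n)⁻¹) ≤ Real.exp K := by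
          apply Real.exp_le_exp.mpr
          push_cast
          rw [abs_neg]
          linarith
        have h5 : Real.exp (cost r l) ≤ Real.exp K := Real.exp_le_exp.mpr (by linarith)
        have := Real.exp_pos K
        nlinarith
      · simp only [List.map_cons, List.prod_cons, hl]; group
    · exact hpm 1 (by simp) (by rw [h]; simp)
    · exact hpm (-1) (by simp) (by rw [Set.mem_singleton_iff.mp h]; simp)

/-- Induction over ideals of letters, removing one letter of smallest weight at a time. -/
theorem ideal_induction [hG : Group.IsNilpotent G] (hSfin : S.Finite) (hS : ∀ x ∈ S, x⁻¹ ∈ S)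
    (motive : Set (ℕ × G) → Prop)
    (base : ∀ P : Set (ℕ × G), (∀ p ∈ P, p.2 = 1) → motive P)
    (step : ∀ k P P' t, IsIdeal S P → IsIdeal S P' → (k, t) ∈ P →
      P ⊆ P' ∪ {(k, t), (k, t⁻¹)} → motive (letters S (k + 1)) → motive P' → motive P) :
    motive (letters S 1) := by
  obtain ⟨N, hN⟩ := exists_letter_trivial S
  have inner : ∀ k, motive (letters S (k + 1)) → ∀ c : ℕ, ∀ A : Set G, (A ⊆ {t | Letter S k t}) →
      (∀ t ∈ A, t⁻¹ ∈ A) → A.ncard = c →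
      motive (letters S (k + 1) ∪ (Prod.mk k) '' A) := by
    intro k hk c
    have hideal : ∀ A : Set G, (A ⊆ {t | Letter S k t}) →
      (∀ t ∈ A, t⁻¹ ∈ A) → IsIdeal S (letters S (k + 1) ∪ (Prod.mk k) '' A) := by
      intro A hA hinv
      constructor
      · rintro p (hp | ⟨t, ht, rfl⟩)
        · exact hp.2
        · exact hA ht
      · rintro n t (hp | ⟨t, ht, h⟩)
        · left; exact (isIdeal_letters hS _).inv _ _ hp
        · cases h; right; exact ⟨_, hinv _ ht, rfl⟩
      · rintro n t m y (hp | ⟨t, ht, h⟩) hy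
        · left; exact (isIdeal_letters hS _).comm _ _ _ _ hp hy
        · cases h; left
          exact ⟨by have := hy.pos; simp; omega, (hA ht).comm hy⟩
    induction c using Nat.strong_induction_on with
    | _ c ih =>
      intro A hA hinv hc
      have hAfin : A.Finite := (Letter.finite hSfin k).subset hA
      rcases A.eq_empty_or_nonempty with rfl | ⟨t, ht⟩
      · simpa using hk
      · have hA' : A \ {t, t⁻¹} ⊆ {t | Letter S k t} := Set.sdiff_subset.trans hA
        have hinv' : ∀ u ∈ A \ {t, t⁻¹}, u⁻¹ ∈ A \ {t, t⁻¹} := by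
          rintro u ⟨hu, hu'⟩
          refine ⟨hinv u hu, ?_⟩
          simp only [Set.mem_insert_iff, Set.mem_singleton_iff, not_or] at hu' ⊢
          exact ⟨fun h => hu'.2 (by rw [← h, inv_inv]), fun h => hu'.1 (inv_injective h)⟩
        refine step k _ (letters S (k + 1) ∪ (Prod.mk k) '' (A \ {t, t⁻¹})) t (hideal A hA hinv)
          (hideal _ hA' hinv') (Or.inr ⟨t, ht, rfl⟩) ?_ hk
          (ih _ ?_ _ hA' hinv' rfl)
        · rintro p (hp | ⟨u, hu, rfl⟩)
          · left; left; exact hp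
          · by_cases h : u ∈ ({t, t⁻¹} : Set G)
            · right
              rcases h with rfl | h
              · left; rfl
              · right; rw [Set.mem_singleton_iff.mp h]; rfl
            · left; right; exact ⟨u, ⟨hu, h⟩, rfl⟩
        · rw [← hc]
          exact Set.ncard_lt_ncard ⟨Set.sdiff_subset, fun h => (h ht).2 (by simp)⟩ hAfin
  have outer : ∀ m, motive (letters S (N + 1 - m)) := by
    intro m
    induction m with
    | zero => exact base _ fun p hp => hN p.1 p.2 (by have := hp.1; omega) hp.2
    | succ m ih =>
      rcases Nat.lt_or_ge N m with h | h
      · have : N + 1 - (m + 1) = N + 1 - m := by omega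
        rwa [this]
      · have h1 : N + 1 - m = (N - m) + 1 := by omega
        have h2 : N + 1 - (m + 1) = N - m := by omega
        rw [h1] at ih
        rw [h2]
        have := inner (N - m) ih _ {t | Letter S (N - m) t} (subset_refl _)
          (fun t ht => Letter.inv hS ht) rfl
        convert this using 1
        ext ⟨n, t⟩
        constructor
        · rintro ⟨h3, h4⟩
          rcases Nat.lt_or_ge (N - m) n with h5 | h5
          · left; exact ⟨h5, h4⟩
          · right
            have : n = N - m := le_antisymm h5 h3
            subst this
            exact ⟨t, h4, rfl⟩
        · rintro (h3 | ⟨u, hu, h3⟩)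
          · exact ⟨by have := h3.1; simp at this ⊢; omega, h3.2⟩
          · cases h3; exact ⟨le_rfl, hu⟩
  have := outer N
  simpa using this

end

end

/-! ### Balls and weighted words -/

section

open scoped Pointwise commutatorElement

section
variable {G : Type*} [Group G] {S : Set G}
variable {P Q P' : Set (ℕ × G)} {r : ℕ} {K K' : ℝ}

theorem isWd_eq_one {P : Set (ℕ × G)} (hP : ∀ p ∈ P, p.2 = 1) {g : G} (h : IsWd P r K g) :
    g = 1 := by
  obtain ⟨l, h1, _, rfl⟩ := h
  apply List.prod_eq_one
  intro x hx
  obtain ⟨p, hp, rfl⟩ := List.mem_map.mp hx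
  exact hP p (h1 p hp)

/-- An interval of integers of length comparable to `ρ⁻¹` is covered by boundedly many classes
of diameter at most `δ * ρ⁻¹`. -/
theorem exists_int_net (K δ : ℝ) (hδ : 0 < δ) : ∃ M : ℕ, ∀ ρ : ℝ, 0 < ρ → ∃ X : Finset ℤ,
    X.card ≤ M ∧ (∀ a ∈ X, |(a : ℝ)| * ρ ≤ K) ∧
    ∀ a : ℤ, |(a : ℝ)| * ρ ≤ K → ∃ b ∈ X, |((a - b : ℤ) : ℝ)| * ρ ≤ δ := by
  classical
  set N : ℤ := ⌈K / δ⌉ + 1 with hN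
  refine ⟨(Finset.Icc (-N) N).card, fun ρ hρ => ?_⟩
  let f : ℤ → ℤ := fun a => ⌊(a : ℝ) * ρ / δ⌋
  let A : Set ℤ := {a : ℤ | |(a : ℝ)| * ρ ≤ K}
  have hf : ∀ a ∈ A, f a ∈ Finset.Icc (-N) N := by
    intro a ha
    have h1 : |(a : ℝ) * ρ / δ| ≤ K / δ := by
      rw [abs_div, abs_mul, abs_of_pos hρ, abs_of_pos hδ]
      exact div_le_div_of_nonneg_right ha hδ.le
    have h2 := abs_le.mp h1
    have h3 := Int.le_ceil (K / δ)
    have h4 := Int.floor_le ((a : ℝ) * ρ / δ)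
    have h5 := Int.lt_floor_add_one ((a : ℝ) * ρ / δ)
    rw [Finset.mem_Icc]
    constructor
    · have : (-(⌈K / δ⌉ : ℤ) : ℝ) < (f a : ℝ) + 1 := by simp only [f]; linarith
      have : (-(⌈K / δ⌉ : ℤ)) < f a + 1 := by exact_mod_cast this
      omega
    · have : (f a : ℝ) ≤ (⌈K / δ⌉ : ℝ) := by simp only [f]; linarith
      have : f a ≤ ⌈K / δ⌉ := by exact_mod_cast this
      omega
  let V : Finset ℤ := (Finset.Icc (-N) N).filter fun v => ∃ a ∈ A, f a = v
  let g : ℤ → ℤ := fun v => if h : ∃ a ∈ A, f a = v then h.choose else 0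
  have hg : ∀ v, (∃ a ∈ A, f a = v) → g v ∈ A ∧ f (g v) = v := by
    intro v h
    simp only [g, dif_pos h]
    exact h.choose_spec
  refine ⟨V.image g, Finset.card_image_le.trans (Finset.card_filter_le _ _), ?_, ?_⟩
  · intro a ha
    obtain ⟨v, hv, rfl⟩ := Finset.mem_image.mp ha
    exact (hg v (Finset.mem_filter.mp hv).2).1
  · intro a ha
    have h1 := hg (f a) ⟨a, ha, rfl⟩
    refine ⟨g (f a), Finset.mem_image_of_mem g (Finset.mem_filter.mpr
      ⟨hf a ha, a, ha, rfl⟩), ?_⟩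
    have h2 : |(a : ℝ) * ρ / δ - (g (f a) : ℝ) * ρ / δ| < 1 :=
      Int.abs_sub_lt_one_of_floor_eq_floor h1.2.symm
    have h3 : (a : ℝ) * ρ / δ - (g (f a) : ℝ) * ρ / δ = ((a - g (f a) : ℤ) : ℝ) * ρ / δ := by
      push_cast; ring
    rw [h3, abs_div, abs_mul, abs_of_pos hρ, abs_of_pos hδ, div_lt_one hδ] at h2
    exact h2.le

/-- Words of bounded cost are covered by boundedly many translates of words of small cost. -/
theorem isWd_cover [Group.IsNilpotent G] (hSfin : S.Finite) (hS : ∀ x ∈ S, x⁻¹ ∈ S)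
    (K δ : ℝ) (hδ : 0 < δ) : ∃ M : ℕ, ∀ r : ℕ, 1 ≤ r → ∃ X : Finset G, X.card ≤ M ∧
      ∀ g, IsWd (letters S 1) r K g → ∃ x ∈ X, IsWd (letters S 1) r δ (x⁻¹ * g) := by
  classical
  have hL := isIdeal_letters hS 1
  suffices h : ∀ K δ : ℝ, 0 < δ → ∃ (M : ℕ) (K' : ℝ), ∀ r : ℕ, 1 ≤ r → ∃ X : Finset G,
      X.card ≤ M ∧ (∀ x ∈ X, IsWd (letters S 1) r K' x) ∧
      ∀ g, IsWd (letters S 1) r K g → ∃ x ∈ X, IsWd (letters S 1) r δ (x⁻¹ * g) by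
    obtain ⟨M, K', h⟩ := h K δ hδ
    refine ⟨M, fun r hr => ?_⟩
    obtain ⟨X, h1, _, h2⟩ := h r hr
    exact ⟨X, h1, h2⟩
  refine ideal_induction hSfin hS (fun P => ∀ K δ : ℝ, 0 < δ → ∃ (M : ℕ) (K' : ℝ),
    ∀ r : ℕ, 1 ≤ r → ∃ X : Finset G,
      X.card ≤ M ∧ (∀ x ∈ X, IsWd (letters S 1) r K' x) ∧
      ∀ g, IsWd P r K g → ∃ x ∈ X, IsWd (letters S 1) r δ (x⁻¹ * g)) ?_ ?_
  · intro P hP K δ hδ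
    refine ⟨1, 0, fun r _ => ⟨{1}, by simp, ?_, ?_⟩⟩
    · simpa using IsWd.one _ r le_rfl
    · intro g hg
      rw [isWd_eq_one hP hg]
      exact ⟨1, by simp, by simpa using IsWd.one _ r hδ.le⟩
  · intro n P P' t hP hP' ht hsub _ ih K δ hδ
    have htl : (n, t) ∈ letters S 1 := ⟨(hP.letter _ ht).pos, hP.letter _ ht⟩
    obtain ⟨M, K', ih⟩ := ih (K * Real.exp K) (δ / 2) (by positivity)
    have hδ2 : 0 < δ / (2 * Real.exp K') := by positivity
    obtain ⟨M2, hM2⟩ := exists_int_net K (δ / (2 * Real.exp K')) hδ2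
    refine ⟨M2 * M, K + K', fun r hr => ?_⟩
    obtain ⟨X, hX, hXK, hXcov⟩ := ih r hr
    have hρ : (0 : ℝ) < ((r : ℝ) ^ n)⁻¹ := by
      have : (0 : ℝ) < r := by exact_mod_cast hr
      positivity
    obtain ⟨Y, hY, hYK, hYcov⟩ := hM2 _ hρ
    refine ⟨(Y ×ˢ X).image fun p => t ^ p.1 * p.2, ?_, ?_, ?_⟩
    · refine Finset.card_image_le.trans ?_
      rw [Finset.card_product]
      exact Nat.mul_le_mul hY hX
    · intro x hx
      obtain ⟨⟨b, x⟩, hp, rfl⟩ := Finset.mem_image.mp hx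
      rw [Finset.mem_product] at hp
      exact ((IsWd.zpow hL htl b).mono (hYK b hp.1)).mul (hXK x hp.2)
    · intro g hg
      obtain ⟨a, g', hg', ha, rfl⟩ := hg.extract hP hP' hr ht hsub
      obtain ⟨b, hb, hab⟩ := hYcov a ha
      obtain ⟨x, hx, hxg⟩ := hXcov g' hg'
      refine ⟨t ^ b * x, Finset.mem_image.mpr ⟨(b, x), by simp [hb, hx], rfl⟩, ?_⟩
      have h1 := IsWd.conj hL ((hXK x hx).inv hL) (fun p hp => hp.2)
        ((IsWd.zpow (r := r) hL htl (a - b)).mono hab)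
      have h2 : (t ^ b * x)⁻¹ * (t ^ a * g') = (x⁻¹ * t ^ (a - b) * x⁻¹⁻¹) * (x⁻¹ * g') := by
        rw [zpow_sub]
        have : t ^ a * (t ^ b)⁻¹ = (t ^ b)⁻¹ * t ^ a := by
          rw [← zpow_neg, ← zpow_add, ← zpow_add, add_comm]
        rw [this]; group
      rw [h2]
      refine (h1.mul hxg).mono (le_of_eq ?_)
      field_simp
      ring

/-- If every factor `u` of a product differs from the letter `t` by an error of cost `ε`, then the
product of `N ≤ r ^ k` such factors differs from `t ^ N` by an error of cost `N ε e`. -/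
theorem IsWd.list_prod (hS : ∀ x ∈ S, x⁻¹ ∈ S) (hP : IsIdeal S P) {k : ℕ} {t : G}
    (ht : Letter S k t) {ε : ℝ} (l : List G) (hl : ∀ u ∈ l, IsWd P r ε (t⁻¹ * u))
    (hN : (l.length : ℝ) * ((r : ℝ) ^ k)⁻¹ ≤ 1) :
    IsWd P r (l.length * ε * Real.exp 1) ((t ^ l.length)⁻¹ * l.prod) := by
  induction l with
  | nil => simpa using IsWd.one P r le_rfl
  | cons u l ih =>
    have hN' : (l.length : ℝ) * ((r : ℝ) ^ k)⁻¹ ≤ 1 := by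
      refine le_trans ?_ hN
      gcongr
      simp
    have h1 := ih (fun v hv => hl v (by simp [hv])) hN'
    have h2 : IsWd ({(k, t⁻¹)} : Set (ℕ × G)) r 1 (t⁻¹ ^ l.length) :=
      (IsWd.pow (P := {(k, t⁻¹)}) (by simp) _).mono hN'
    have h3 := IsWd.conj hP h2
      (by rintro p hp; rw [Set.mem_singleton_iff.mp hp]; exact ht.inv hS) (hl u (by simp))
    have h4 : (t ^ (u :: l).length)⁻¹ * (u :: l).prod
        = (t⁻¹ ^ l.length * (t⁻¹ * u) * (t⁻¹ ^ l.length)⁻¹) * ((t ^ l.length)⁻¹ * l.prod) := by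
      rw [List.length_cons, List.prod_cons, pow_succ', inv_pow]
      simp only [mul_inv_rev, inv_inv, mul_assoc, mul_inv_cancel_left]
    rw [h4]
    refine (h3.mul h1).mono (le_of_eq ?_)
    rw [List.length_cons]
    push_cast; ring

/-- The commutator `⁅x ^ b, y ^ c⁆` is a product of `b * c` conjugates of `⁅x, y⁆`. -/
theorem comm_pow_list (x y : G) (b c : ℕ) : ∃ l : List G, l.length = b * c ∧
    l.prod = ⁅x ^ b, y ^ c⁆ ∧
    ∀ u ∈ l, ∃ m n : ℕ, m ≤ b ∧ n ≤ c ∧ u = (x ^ m * y ^ n) * ⁅x, y⁆ * (x ^ m * y ^ n)⁻¹ := by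
  induction b with
  | zero => exact ⟨[], by simp, by simp [commutatorElement_def], by simp⟩
  | succ b ih =>
    obtain ⟨l, h1, h2, h3⟩ := ih
    have : ∀ c : ℕ, ∃ l : List G, l.length = c ∧ l.prod = x ^ b * ⁅x, y ^ c⁆ * (x ^ b)⁻¹ ∧
        ∀ u ∈ l, ∃ n : ℕ, n ≤ c ∧ u = (x ^ b * y ^ n) * ⁅x, y⁆ * (x ^ b * y ^ n)⁻¹ := by
      intro c
      induction c with
      | zero => exact ⟨[], by simp, by simp [commutatorElement_def], by simp⟩
      | succ c ih =>
        obtain ⟨l, h1, h2, h3⟩ := ih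
        refine ⟨l ++ [(x ^ b * y ^ c) * ⁅x, y⁆ * (x ^ b * y ^ c)⁻¹], by simp [h1], ?_, ?_⟩
        · rw [List.prod_append, h2, List.prod_singleton]
          simp only [commutatorElement_def, pow_succ]
          group
        · intro u hu
          rcases List.mem_append.mp hu with hu | hu
          · obtain ⟨n, hn, rfl⟩ := h3 u hu
            exact ⟨n, by omega, rfl⟩
          · exact ⟨c, by omega, by simpa using hu⟩
    obtain ⟨l', h1', h2', h3'⟩ := this c
    refine ⟨l' ++ l, by simp [h1, h1']; ring, ?_, ?_⟩
    · rw [List.prod_append, h2, h2', pow_succ]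
      simp only [commutatorElement_def]
      group
    · intro u hu
      rcases List.mem_append.mp hu with hu | hu
      · obtain ⟨n, hn, rfl⟩ := h3' u hu
        exact ⟨b, n, by omega, hn, rfl⟩
      · obtain ⟨m, n, hm, hn, rfl⟩ := h3 u hu
        exact ⟨m, n, by omega, hn, rfl⟩

/-- Bilinearity of commutators of powers up to terms of higher weight. -/
theorem IsWd.comm_pow (hS : ∀ x ∈ S, x⁻¹ ∈ S) {i j : ℕ} {x y : G} (hx : Letter S i x)
    (hy : Letter S j y) (hr : 1 ≤ r) {b c : ℕ} (hb : b ≤ r ^ i) (hc : c ≤ r ^ j) :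
    IsWd (letters S (i + j + 1)) r ((Real.exp 2 - 1) * Real.exp 1)
      ((⁅x, y⁆ ^ (b * c))⁻¹ * ⁅x ^ b, y ^ c⁆) := by
  obtain ⟨l, h1, h2, h3⟩ := comm_pow_list x y b c
  have hr0 : (0 : ℝ) < r := by exact_mod_cast hr
  have hpow : ∀ (m i : ℕ), m ≤ r ^ i → (m : ℝ) * ((r : ℝ) ^ i)⁻¹ ≤ 1 := by
    intro m i hm
    rw [← div_eq_mul_inv, div_le_one (by positivity)]
    exact_mod_cast hm
  have ht : Letter S (i + j) ⁅x, y⁆ := hx.comm hy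
  have hlen : (l.length : ℝ) * ((r : ℝ) ^ (i + j))⁻¹ ≤ 1 := by
    apply hpow
    rw [h1, pow_add]
    exact Nat.mul_le_mul hb hc
  have := IsWd.list_prod (P := letters S (i + j + 1)) (r := r) hS (isIdeal_letters hS _) ht
    (ε := ((r : ℝ) ^ (i + j))⁻¹ * (Real.exp 2 - 1)) l ?_ hlen
  · rw [h1, h2] at this
    refine this.mono ?_
    have h5 : 0 ≤ (Real.exp 2 - 1) * Real.exp 1 := by
      have := Real.add_one_le_exp 2
      have := Real.exp_pos 1
      apply mul_nonneg <;> linarith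
    rw [h1] at hlen
    calc _ = ((b * c : ℕ) : ℝ) * ((r : ℝ) ^ (i + j))⁻¹ * ((Real.exp 2 - 1) * Real.exp 1) := by ring
      _ ≤ _ := mul_le_of_le_one_left h5 hlen
  · intro u hu
    obtain ⟨m, n, hm, hn, rfl⟩ := h3 u hu
    have hq : IsWd (letters S 1) r (1 + 1) (x ^ m * y ^ n) :=
      ((IsWd.pow (P := letters S 1) (r := r) ⟨hx.pos, hx⟩ m).mono (hpow _ _ (hm.trans hb))).mul
        ((IsWd.pow (P := letters S 1) (r := r) ⟨hy.pos, hy⟩ n).mono (hpow _ _ (hn.trans hc)))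
    have := IsWd.comm_letter (isIdeal_letters hS (i + j + 1)) (n := i + j) (t := ⁅x, y⁆⁻¹)
      (fun p hp => hp.2) (fun p hp => ⟨by have := hp.1; simp; omega, (ht.inv hS).comm hp.2⟩) hq
    norm_num at this
    convert this using 1
    simp only [commutatorElement_def]
    group

/-- The element `z` is a product of an element of the ball of radius `n * r` and a correction of
cost at most `K` at scale `r` in letters of weight at least `k`. -/
def IsNear (S : Set G) (k r n : ℕ) (K : ℝ) (z : G) : Prop :=
  ∃ g ∈ S ^ (n * r), ∃ v, IsWd (letters S k) r K v ∧ z = g * v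

theorem IsWd.of_pow {n : ℕ} {g : G} (hr : 1 ≤ r) (hg : g ∈ S ^ (n * r)) :
    IsWd (letters S 1) r n g := by
  have : ∀ N : ℕ, ∀ g ∈ S ^ N, IsWd (letters S 1) r (N * (r : ℝ)⁻¹) g := by
    intro N
    induction N with
    | zero => intro g hg; rw [pow_zero, Set.mem_one] at hg; subst hg; exact IsWd.one _ _ (by simp)
    | succ N ih =>
      intro g hg
      rw [pow_succ] at hg
      obtain ⟨a, ha, b, hb, rfl⟩ := Set.mem_mul.mp hg
      refine ((ih a ha).mul (IsWd.of_mem (n := 1) ⟨le_rfl, .base hb⟩)).mono (le_of_eq ?_)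
      push_cast; ring
  refine (this _ g hg).mono (le_of_eq ?_)
  have hr0 : (0 : ℝ) < r := by exact_mod_cast hr
  push_cast
  field_simp

theorem inv_mem_pow (hS : ∀ x ∈ S, x⁻¹ ∈ S) {N : ℕ} {g : G} (hg : g ∈ S ^ N) : g⁻¹ ∈ S ^ N := by
  have : S⁻¹ = S := Set.ext fun x => ⟨fun h => by simpa using hS _ h, fun h => hS _ h⟩
  rw [← Set.mem_inv, ← inv_pow, this]; exact hg

theorem IsNear.mul (hS : ∀ x ∈ S, x⁻¹ ∈ S) (hr : 1 ≤ r) {k n n' : ℕ} {z z' : G}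
    (h : IsNear S k r n K z) (h' : IsNear S k r n' K' z') :
    IsNear S k r (n + n') (K * Real.exp n' + K') (z * z') := by
  obtain ⟨g, hg, v, hv, rfl⟩ := h
  obtain ⟨g', hg', v', hv', rfl⟩ := h'
  refine ⟨g * g', ?_, (g'⁻¹ * v * g'⁻¹⁻¹) * v', ?_, by group⟩
  · rw [add_mul, pow_add]; exact Set.mul_mem_mul hg hg'
  · exact (IsWd.conj (isIdeal_letters hS k) (IsWd.of_pow hr (inv_mem_pow hS hg'))
      (fun p hp => hp.2) hv).mul hv'

theorem IsNear.of_isWd {k : ℕ} {z : G} (h : IsWd (letters S k) r K z) :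
    IsNear S k r 0 K z := ⟨1, by simp, z, h, by simp⟩

theorem letters_mono {i j : ℕ} (h : i ≤ j) : letters S j ⊆ letters S i :=
  fun _ hp => ⟨h.trans hp.1, hp.2⟩

/-- Commutators of elements close to short elements of the ball are close to short elements of the
ball, with an error of one weight more. -/
theorem comm_near (hS : ∀ x ∈ S, x⁻¹ ∈ S) (hr : 1 ≤ r) {i j n n' : ℕ} {p q : G} {κ κ' : ℝ}
    (hp : IsWd (letters S i) r κ p) (hq : IsWd (letters S j) r κ' q)
    (hp' : IsNear S (i + 1) r n K p) (hq' : IsNear S (j + 1) r n' K' q) :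
    IsNear S (i + j + 1) r (2 * (n + n'))
      ((Real.exp K - 1) * Real.exp κ' * Real.exp n * Real.exp (2 * (n + n') : ℕ)
        + (Real.exp (κ + K) - 1) * Real.exp K' * Real.exp n') ⁅p, q⁆ := by
  obtain ⟨g, hg, v, hv, rfl⟩ := hp'
  obtain ⟨g', hg', v', hv', rfl⟩ := hq'
  have hgW : IsWd (letters S i) r (κ + K) g := by
    have := hp.mul ((hv.inv (isIdeal_letters hS _)).sub (letters_mono (Nat.le_succ i)))
    simpa using this
  have h1 := IsWd.comm hS hv hq
  have h2 := IsWd.comm hS hgW hv'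
  rw [show i + 1 + j = i + j + 1 by ring] at h1
  rw [show i + (j + 1) = i + j + 1 by ring] at h2
  have hI := isIdeal_letters hS (i + j + 1)
  have h3 := IsWd.conj hI (IsWd.of_pow hr hg) (fun p hp => hp.2) h1
  have h4 := IsWd.conj hI (IsWd.of_pow hr hg') (fun p hp => hp.2) h2
  have h5 : ⁅g, g'⁆ ∈ S ^ (2 * (n + n') * r) := by
    rw [show 2 * (n + n') * r = n * r + n' * r + n * r + n' * r by ring, pow_add, pow_add, pow_add]
    exact Set.mul_mem_mul (Set.mul_mem_mul (Set.mul_mem_mul hg hg') (inv_mem_pow hS hg))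
      (inv_mem_pow hS hg')
  have h6 := IsWd.conj hI (IsWd.of_pow hr (inv_mem_pow hS h5)) (fun p hp => hp.2) h3
  refine ⟨_, h5, _, h6.mul h4, ?_⟩
  simp only [commutatorElement_def]
  group

/-- A power `t ^ a` of a letter of weight `k` with `a ≤ r ^ k` lies in a ball of radius `O(r)`, up
to a correction of higher weight. -/
theorem letter_pow_near (hS : ∀ x ∈ S, x⁻¹ ∈ S) (hS1 : 1 ∈ S) {k : ℕ} {t : G}
    (ht : Letter S k t) :
    ∃ (n : ℕ) (K : ℝ), ∀ r : ℕ, 1 ≤ r → ∀ a ≤ r ^ k, IsNear S (k + 1) r n K (t ^ a) := by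
  induction ht with
  | @base s hs =>
    refine ⟨1, 0, fun r hr a ha => ⟨s ^ a, ?_, 1, IsWd.one _ _ le_rfl, by simp⟩⟩
    exact Set.pow_subset_pow_right hS1 (by simpa using ha) (Set.pow_mem_pow hs)
  | @comm i j x y hx hy ihx ihy =>
    obtain ⟨n, K, ihx⟩ := ihx
    obtain ⟨n', K', ihy⟩ := ihy
    set N := 2 * (n + n')
    set L := ((Real.exp K - 1) * Real.exp 1 * Real.exp n * Real.exp (2 * (n + n') : ℕ)
        + (Real.exp (1 + K) - 1) * Real.exp K' * Real.exp n')
    set L0 := ((Real.exp 2 - 1) * Real.exp 1)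
    have hpow : ∀ (r : ℕ), 1 ≤ r → ∀ (m i : ℕ), m ≤ r ^ i → (m : ℝ) * ((r : ℝ) ^ i)⁻¹ ≤ 1 := by
      intro r hr m i hm
      have hr0 : (0 : ℝ) < r := by exact_mod_cast hr
      rw [← div_eq_mul_inv, div_le_one (by positivity)]
      exact_mod_cast hm
    have key : ∀ r : ℕ, 1 ≤ r → ∀ b ≤ r ^ i, ∀ c ≤ r ^ j,
        IsNear S (i + j + 1) r (N + 0) (L * Real.exp (0 : ℕ) + L0) (⁅x, y⁆ ^ (b * c)) := by
      intro r hr b hb c hc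
      have h1 := comm_near hS hr
        ((IsWd.pow (P := letters S i) (r := r) ⟨le_rfl, hx⟩ b).mono (hpow r hr _ _ hb))
        ((IsWd.pow (P := letters S j) (r := r) ⟨le_rfl, hy⟩ c).mono (hpow r hr _ _ hc))
        (ihx r hr b hb) (ihy r hr c hc)
      have h2 := IsNear.mul hS hr h1
        (IsNear.of_isWd ((IsWd.comm_pow hS hx hy hr hb hc).inv (isIdeal_letters hS _)))
      convert h2 using 1
      group
    refine ⟨(N + 0) + (N + 0), (L * Real.exp (0 : ℕ) + L0) * Real.exp (N + 0 : ℕ)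
      + (L * Real.exp (0 : ℕ) + L0), fun r hr a ha => ?_⟩
    have hrj : 0 < r ^ j := by positivity
    -- Euclidean division writes the exponent as `a = (a / r ^ j) * r ^ j + a % r ^ j`, so only
    -- exponents `b * c` with `b ≤ r ^ i`, `c ≤ r ^ j` are needed.
    have h1 := key r hr (a / r ^ j)
      (Nat.div_le_of_le_mul (by rw [← pow_add, add_comm]; exact ha)) (r ^ j) le_rfl
    have h2 := key r hr 1 (Nat.one_le_pow _ _ hr) (a % r ^ j) (Nat.mod_lt _ hrj).le
    have := h1.mul hS hr h2
    rw [← pow_add] at this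
    convert this using 2
    rw [one_mul, mul_comm]
    exact (Nat.div_add_mod _ _).symm

theorem pow_pow_mem {T : Set G} {g : G} {n m : ℕ} (h : g ∈ T ^ n) : g ^ m ∈ T ^ (n * m) := by
  rw [pow_mul]; exact Set.pow_mem_pow h

/-- Words of bounded cost at scale `r` lie in a ball of radius `O(r)`. -/
theorem isWd_subset_ball [Group.IsNilpotent G] (hSfin : S.Finite) (hS : ∀ x ∈ S, x⁻¹ ∈ S)
    (hS1 : 1 ∈ S) (K : ℝ) :
    ∃ n : ℕ, ∀ r : ℕ, 1 ≤ r → ∀ g, IsWd (letters S 1) r K g → g ∈ S ^ (n * r) := by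
  revert K
  refine ideal_induction hSfin hS (fun P => ∀ K : ℝ, ∃ n : ℕ, ∀ r : ℕ, 1 ≤ r →
    ∀ g, IsWd P r K g → g ∈ S ^ (n * r)) ?_ ?_
  · intro P hP K
    refine ⟨0, fun r _ g hg => ?_⟩
    rw [isWd_eq_one hP hg]; simp
  · intro k P P' t hP hP' ht hsub ihk ih K
    obtain ⟨n, L, hn⟩ := letter_pow_near hS hS1 (hP.letter _ ht)
    obtain ⟨n1, h1⟩ := ihk L
    obtain ⟨n2, h2⟩ := ih (K * Real.exp K)
    have hmono : ∀ {a b : ℕ}, a ≤ b → S ^ a ⊆ S ^ b := fun h => Set.pow_subset_pow_right hS1 h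
    have hsmall : ∀ r : ℕ, 1 ≤ r → ∀ a ≤ r ^ k, t ^ a ∈ S ^ ((n + n1) * r) := by
      intro r hr a ha
      obtain ⟨g, hg, v, hv, h⟩ := hn r hr a ha
      rw [h, add_mul, pow_add]
      exact Set.mul_mem_mul hg (h1 r hr v hv)
    refine ⟨(n + n1) * (⌈K⌉₊ + 1) + n2, fun r hr g hg => ?_⟩
    -- All occurrences of the letter `t` of smallest weight move to the front and form one power.
    obtain ⟨a, g', hg', ha, rfl⟩ := hg.extract hP hP' hr ht hsub
    rw [add_mul, pow_add]
    refine Set.mul_mem_mul ?_ (h2 r hr g' hg')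
    have hr0 : (0 : ℝ) < r := by exact_mod_cast hr
    have hnat : ∀ m : ℕ, (m : ℝ) * ((r : ℝ) ^ k)⁻¹ ≤ K →
        t ^ m ∈ S ^ ((n + n1) * (⌈K⌉₊ + 1) * r) := by
      intro m hm
      have hrk : 0 < r ^ k := by positivity
      have hm' : m / r ^ k ≤ ⌈K⌉₊ := by
        apply Nat.div_le_of_le_mul
        have h3 : (m : ℝ) ≤ (r : ℝ) ^ k * K := by
          rw [mul_inv_le_iff₀ (by positivity)] at hm; linarith
        have h4 : (m : ℝ) ≤ (r : ℝ) ^ k * ⌈K⌉₊ :=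
          h3.trans (by gcongr; exact Nat.le_ceil K)
        exact_mod_cast h4
      have h5 : t ^ m = (t ^ (r ^ k)) ^ (m / r ^ k) * t ^ (m % r ^ k) := by
        rw [← pow_mul, ← pow_add, Nat.div_add_mod]
      rw [h5, show (n + n1) * (⌈K⌉₊ + 1) * r = (n + n1) * r * ⌈K⌉₊ + (n + n1) * r by ring, pow_add]
      exact Set.mul_mem_mul (hmono (Nat.mul_le_mul le_rfl hm')
        (pow_pow_mem (hsmall r hr _ le_rfl))) (hsmall r hr _ (Nat.mod_lt _ hrk).le)
    rcases Int.eq_nat_or_neg a with ⟨m, rfl | rfl⟩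
    · rw [zpow_natCast]; exact hnat m (by simpa using ha)
    · rw [zpow_neg, zpow_natCast]; exact inv_mem_pow hS (hnat m (by simpa using ha))

/-- Doubling at all scales for finitely generated nilpotent groups. -/
theorem nilpotent_doubling [Group.IsNilpotent G] (hSfin : S.Finite) (hS : ∀ x ∈ S, x⁻¹ ∈ S)
    (hS1 : 1 ∈ S) (K : ℕ) :
    ∃ M : ℕ, ∀ r : ℕ, 1 ≤ r → (S ^ (K * r)).ncard ≤ M * (S ^ r).ncard := by
  classical
  obtain ⟨n, hn⟩ := isWd_subset_ball hSfin hS hS1 1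
  -- rescaling: with `r = (n + 1) r' + r''`, cover the ball of radius `K (2 n + 2) r'` by balls of
  -- radius `n r' ≤ r`
  obtain ⟨M, hM⟩ := isWd_cover hSfin hS ((K * (2 * (n + 1)) : ℕ) : ℝ) 1 one_pos
  refine ⟨max M ((S ^ (K * (n + 1))).ncard), fun r hr => ?_⟩
  have hfin : ∀ m, (S ^ m).Finite := fun m => setFinite_pow hSfin m
  have hpos : 0 < (S ^ r).ncard := by
    rw [Set.ncard_pos (hfin r)]
    exact ⟨1, Set.one_mem_pow hS1⟩
  rcases lt_or_ge r (n + 1) with h | h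
  · calc (S ^ (K * r)).ncard ≤ (S ^ (K * (n + 1))).ncard :=
        Set.ncard_le_ncard (Set.pow_subset_pow_right hS1 (Nat.mul_le_mul le_rfl h.le)) (hfin _)
      _ ≤ max M ((S ^ (K * (n + 1))).ncard) * 1 := by simp
      _ ≤ _ := Nat.mul_le_mul le_rfl hpos
  · set ρ := r / (n + 1) with hρ
    have hρ1 : 1 ≤ ρ := (Nat.one_le_div_iff (by omega)).mpr h
    have h1 : (n + 1) * ρ ≤ r := Nat.mul_div_le r (n + 1)
    have h2 : r < (n + 1) * (ρ + 1) := Nat.lt_mul_div_succ r (Nat.succ_pos n)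
    obtain ⟨X, hX, hXc⟩ := hM ρ hρ1
    have hsub : S ^ (K * r) ⊆ (X : Set G) * S ^ r := by
      intro g hg
      have hg' : g ∈ S ^ (K * (2 * (n + 1)) * ρ) := by
        refine Set.pow_subset_pow_right hS1 ?_ hg
        rw [mul_assoc]
        refine Nat.mul_le_mul le_rfl ?_
        nlinarith
      obtain ⟨x, hx, hxg⟩ := hXc g (IsWd.of_pow hρ1 hg')
      refine Set.mem_mul.mpr ⟨x, hx, x⁻¹ * g, ?_, by group⟩
      exact Set.pow_subset_pow_right hS1 (by nlinarith) (hn ρ hρ1 _ hxg)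
    calc (S ^ (K * r)).ncard ≤ ((X : Set G) * S ^ r).ncard :=
          Set.ncard_le_ncard hsub ((Finset.finite_toSet X).mul (hfin r))
      _ ≤ (X : Set G).ncard * (S ^ r).ncard := by
          rw [← Set.image2_mul, ← Set.image_prod, ← Set.ncard_prod]
          exact Set.ncard_image_le ((Finset.finite_toSet X).prod (hfin r))
      _ ≤ _ := by
          rw [Set.ncard_coe_finset]
          exact Nat.mul_le_mul (hX.trans (le_max_left _ _)) le_rfl

end

end

/-! ### Unipotence from small polynomials -/

section

section
open Polynomial

/-- Integer polynomials with all coefficients in `{-1, 0, 1}`, not all of them zero (the zero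
polynomial is excluded because its leading coefficient `0` is not a unit). -/
def IsSmallPoly (P : ℤ[X]) : Prop := IsUnit P.leadingCoeff ∧ ∀ i, |P.coeff i| ≤ 1

theorem IsSmallPoly.norm_lt_two {P : ℤ[X]} (h : IsSmallPoly P) {z : ℂ} (hz : aeval z P = 0) :
    ‖z‖ < 2 := by
  have hinj : Function.Injective (algebraMap ℤ ℂ) := Int.cast_injective
  have h0 : P ≠ 0 := by
    rintro rfl
    simpa using h.1
  have h1 : (P.map (algebraMap ℤ ℂ)).IsRoot z := by
    rw [IsRoot.def, eval_map_algebraMap]; exact hz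
  have h2 := h1.norm_lt_cauchyBound ((Polynomial.map_ne_zero_iff hinj).mpr h0)
  have h3 : cauchyBound (P.map (algebraMap ℤ ℂ)) ≤ 2 := by
    unfold cauchyBound
    have : ‖(P.map (algebraMap ℤ ℂ)).leadingCoeff‖₊ = 1 := by
      rw [leadingCoeff_map_of_injective hinj]
      rcases Int.isUnit_iff.mp h.1 with h | h <;> rw [h] <;> simp
    rw [this, div_one, ← one_add_one_eq_two]
    gcongr
    refine Finset.sup_le fun i _ => ?_
    rw [coeff_map, ← NNReal.coe_le_coe, coe_nnnorm]
    simp only [algebraMap_int_eq, eq_intCast, Complex.norm_intCast, NNReal.coe_one]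
    exact_mod_cast h.2 i
  exact_mod_cast h2.trans_le h3

theorem isIntegral_of_small {P : ℤ[X]} (h : IsSmallPoly P) {z : ℂ} (hz : aeval z P = 0) :
    IsIntegral ℤ z := by
  rcases Int.isUnit_iff.mp h.1 with h | h
  · exact ⟨P, h, hz⟩
  · refine ⟨-P, by simp [Monic, h], ?_⟩
    have : eval₂ (algebraMap ℤ ℂ) z (-P) = -aeval z P := by simp [aeval_def]
    rw [this, hz, neg_zero]

/-- A consequence of the Nullstellensatz in one variable. -/
theorem dvd_pow_of_roots {p q : ℂ[X]} (hp : p ≠ 0) (h : ∀ z, p.IsRoot z → q.IsRoot z) :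
    ∃ n, p ∣ q ^ n := by
  refine ⟨p.roots.card, ?_⟩
  have hs := IsAlgClosed.splits p
  nth_rewrite 1 [hs.eq_prod_roots]
  have h1 : (p.roots.map fun a => X - C a).prod ∣ q ^ p.roots.card := by
    have h2 : (p.roots.map fun _ => q).prod = q ^ p.roots.card := by simp
    rw [← h2]
    apply Multiset.prod_dvd_prod_of_dvd
    intro a ha
    exact dvd_iff_isRoot.mpr (h a (isRoot_of_mem_roots ha))
  have hu : IsUnit (C p.leadingCoeff) := isUnit_C.mpr (by simpa using hp)
  exact (IsUnit.mul_left_dvd hu).mpr h1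

open IntermediateField in
/-- Kronecker: a nonzero algebraic integer all of whose conjugates lie in the closed unit disc is
a root of unity. The conjugates are among the roots of any rational polynomial `m` vanishing at
it. -/
theorem root_of_unity_of_conj {m : ℚ[X]} {z : ℂ} (hz : aeval z m = 0) (hz0 : z ≠ 0)
    (hint : IsIntegral ℤ z) (h : ∀ w : ℂ, aeval w m = 0 → ‖w‖ ≤ 1) : ∃ n, 0 < n ∧ z ^ n = 1 := by
  let K := ℚ⟮z⟯
  let : NumberField K := {
    to_charZero := ℚ⟮z⟯.charZero,
    to_finiteDimensional := adjoin.finiteDimensional hint.tower_top }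
  let y : K := ⟨z, mem_adjoin_simple_self ℚ z⟩
  suffices ∃ (n : ℕ) (_ : 0 < n), y ^ n = 1 by
    obtain ⟨n, hn₀, hn₁⟩ := this
    exact ⟨n, hn₀, congrArg (algebraMap K ℂ) hn₁⟩
  refine NumberField.Embeddings.pow_eq_one_of_norm_le_one (x := y) K ℂ
    (Subtype.coe_ne_coe.mp hz0) (coe_isIntegral_iff.mp hint) fun φ ↦ h _ ?_
  have H (ψ : K →+* ℂ) : ψ ((aeval y) m) = (aeval (ψ y)) m := by
    conv_rhs => rw [← map_id (p := m)]
    exact m.map_aeval_eq_aeval_map (by ext; simp) y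
  rw [← H, map_eq_zero_iff _ φ.injective,
    ← map_eq_zero_iff _ (FaithfulSMul.algebraMap_injective ↥K ℂ), H]
  exact hz


attribute [local instance] Polynomial.algebra in
/-- Up to torsion, some power of `α` is unipotent. The complex roots `z` of the generator `m` of
the rational annihilating ideal of `α` have `‖z‖ ^ k < 2` for every `k`, because `z ^ k` is a root
of a small polynomial. Hence `‖z‖ ≤ 1`, nonzero roots are roots of unity by Kronecker, and `m`
divides a power of `X * (X ^ K - 1)`. Injectivity of `α` removes the factor `X`. -/
theorem exists_pow_sub_one_torsion {A : Type*} [AddCommGroup A] [Module.Finite ℤ A]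
    (α : Module.End ℤ A) (hα : Function.Injective α)
    (h : ∀ k, 1 ≤ k → ∀ a : A, ∃ P : ℤ[X], IsSmallPoly P ∧ aeval (α ^ k) P a = 0) :
    ∃ k n : ℕ, 1 ≤ k ∧ ∃ N : ℤ, N ≠ 0 ∧ N • (α ^ k - 1) ^ n = 0 := by
  classical
  -- finitely many small polynomials whose product annihilates `α ^ k`
  have hprod : ∀ k, 1 ≤ k → ∃ Qs : List ℤ[X], (∀ P ∈ Qs, IsSmallPoly P) ∧
      aeval (α ^ k) Qs.prod = 0 := by
    intro k hk
    obtain ⟨s, hs⟩ := (Module.Finite.fg_top : (⊤ : Submodule ℤ A).FG)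
    choose P hP using h k hk
    refine ⟨s.toList.map P, ?_, ?_⟩
    · intro p hp
      obtain ⟨a, _, rfl⟩ := List.mem_map.mp hp
      exact (hP a).1
    · refine LinearMap.ext_on_range (v := ((↑) : s → A)) (by simpa using hs) ?_
      rintro ⟨a, ha⟩
      obtain ⟨q, hq⟩ := List.dvd_prod (List.mem_map_of_mem (f := P) (Finset.mem_toList.mpr ha))
      rw [hq, mul_comm, map_mul, Module.End.mul_apply, (hP a).2]
      simp
  -- The rational annihilating ideal of `α`: polynomials that kill `α` after clearing denominators.
  let J : Ideal ℚ[X] := Ideal.map (algebraMap ℤ[X] ℚ[X]) (RingHom.ker (aeval (R := ℤ) α))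
  have hloc : IsLocalization ((nonZeroDivisors ℤ).map (C : ℤ →+* ℤ[X])) ℚ[X] :=
    Polynomial.isLocalization (nonZeroDivisors ℤ) ℚ
  obtain ⟨m, hm⟩ := (IsPrincipalIdealRing.principal J).principal
  have hmJ : ∀ P, P ∈ J ↔ m ∣ P := fun P => by rw [hm]; exact Ideal.mem_span_singleton
  have hker : ∀ {Q : ℤ[X]}, aeval α Q = 0 → ∀ z : ℂ, aeval z m = 0 → aeval z Q = 0 := by
    intro Q hQ z hz
    have h1 : algebraMap ℤ[X] ℚ[X] Q ∈ J := Ideal.mem_map_of_mem _ hQ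
    obtain ⟨R, hR⟩ := (hmJ _).mp h1
    have h2 : aeval z (algebraMap ℤ[X] ℚ[X] Q) = aeval z Q := by
      change aeval z (Polynomial.map _ Q) = _
      rw [aeval_map_algebraMap]
    rw [← h2, hR, map_mul, hz, zero_mul]
  have hsmall : ∀ k, 1 ≤ k → ∀ z : ℂ, aeval z m = 0 →
      ∃ P, IsSmallPoly P ∧ aeval (z ^ k) P = 0 := by
    intro k hk z hz
    obtain ⟨Qs, h1, h2⟩ := hprod k hk
    have h3 := hker (Q := expand ℤ k Qs.prod) (by rw [expand_aeval]; exact h2) z hz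
    rw [expand_aeval, map_list_prod, List.prod_eq_zero_iff] at h3
    obtain ⟨P, hP, hP0⟩ := List.mem_map.mp h3
    exact ⟨P, h1 P hP, hP0⟩
  have hm0 : m ≠ 0 := by
    rintro rfl
    obtain ⟨P, hP, hP0⟩ := hsmall 1 le_rfl 2 (by simp)
    have := hP.norm_lt_two hP0
    norm_num at this
  -- If `‖z‖ > 1`, then some power of `z` has norm at least `2` and cannot be a root of a small
  -- polynomial.
  have hnorm : ∀ z : ℂ, aeval z m = 0 → ‖z‖ ≤ 1 := by
    intro z hz
    by_contra hcon
    push Not at hcon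
    obtain ⟨k, hk⟩ := pow_unbounded_of_one_lt 2 hcon
    have hk1 : 1 ≤ k := by
      rcases Nat.eq_zero_or_pos k with rfl | h
      · norm_num at hk
      · exact h
    obtain ⟨P, hP, hP0⟩ := hsmall k hk1 z hz
    have := hP.norm_lt_two hP0
    rw [norm_pow] at this
    linarith
  have hunit : ∀ z : ℂ, aeval z m = 0 → ∃ n, 0 < n ∧ (z = 0 ∨ z ^ n = 1) := by
    intro z hz
    by_cases hz0 : z = 0
    · exact ⟨1, one_pos, .inl hz0⟩
    obtain ⟨P, hP, hP0⟩ := hsmall 1 le_rfl z hz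
    rw [pow_one] at hP0
    obtain ⟨n, hn, h⟩ := root_of_unity_of_conj hz hz0 (isIntegral_of_small hP hP0) hnorm
    exact ⟨n, hn, .inr h⟩
  choose! e he using hunit
  set mC : ℂ[X] := m.map (algebraMap ℚ ℂ) with hmC
  have hmC0 : mC ≠ 0 := (Polynomial.map_ne_zero_iff (algebraMap ℚ ℂ).injective).mpr hm0
  have hroot : ∀ z, mC.IsRoot z ↔ aeval z m = 0 := fun z => by
    rw [IsRoot.def, hmC, eval_map_algebraMap]
  set K := ∏ z ∈ mC.roots.toFinset, e z with hK
  have hK1 : 1 ≤ K := by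
    refine Nat.one_le_iff_ne_zero.mpr (Finset.prod_ne_zero_iff.mpr fun z hz => ?_)
    rw [Multiset.mem_toFinset, mem_roots hmC0, hroot] at hz
    exact (he z hz).1.ne'
  obtain ⟨n, hn⟩ := dvd_pow_of_roots (p := mC) (q := X * (X ^ K - 1)) hmC0 (by
    intro z hz
    have hz' := (hroot z).mp hz
    rw [IsRoot.def]
    simp only [eval_mul, eval_X, eval_sub, eval_pow, eval_one]
    rcases (he z hz').2 with h | h
    · simp [h]
    · obtain ⟨j, hj⟩ := Finset.dvd_prod_of_mem e (by
        rw [Multiset.mem_toFinset, mem_roots hmC0]; exact hz : z ∈ mC.roots.toFinset)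
      rw [hK, hj, pow_mul, h]; simp)
  -- Divisibility of rational polynomials may be tested over `ℂ`, where it follows from the roots.
  have hdvd : m ∣ (X * (X ^ K - 1)) ^ n := by
    rw [← Polynomial.map_dvd_map' (algebraMap ℚ ℂ)]
    simpa [hmC] using hn
  obtain ⟨⟨Q, c⟩, hQ⟩ := (IsLocalization.mem_map_algebraMap_iff
    ((nonZeroDivisors ℤ).map (C : ℤ →+* ℤ[X])) ℚ[X]).mp ((hmJ _).mpr hdvd)
  obtain ⟨N, hN, hNc⟩ := Submonoid.mem_map.mp c.2
  have hQ' : (X * (X ^ K - 1)) ^ n * C N = (Q : ℤ[X]) := by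
    have hinj : Function.Injective (algebraMap ℤ[X] ℚ[X]) :=
      Polynomial.map_injective _ Int.cast_injective
    apply hinj
    have h1 : algebraMap ℤ[X] ℚ[X] X = X := Polynomial.map_X _
    rw [← hQ, ← hNc]
    simp only [map_mul, map_pow, map_sub, map_one, h1]
  refine ⟨K, n, hK1, N, nonZeroDivisors.ne_zero hN, ?_⟩
  have h0 : aeval α (Q : ℤ[X]) = 0 := Q.2
  rw [← hQ'] at h0
  simp only [mul_pow, map_mul, map_pow, aeval_X, map_sub, map_one, aeval_C] at h0
  have hαn : Function.Injective (α ^ n : Module.End ℤ A) := by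
    rw [Module.End.coe_pow]; exact hα.iterate n
  ext a
  apply hαn
  have := LinearMap.congr_fun h0 a
  simp only [Module.End.mul_apply, algebraMap_int_eq, eq_intCast, Module.End.intCast_apply,
    LinearMap.zero_apply, map_zsmul, LinearMap.smul_apply, map_zero] at this ⊢
  exact this

/-- If an injective endomorphism of a finitely generated abelian group satisfies small polynomials
on all powers, then some positive power of it is unipotent. -/
theorem exists_pow_unipotent {A : Type*} [AddCommGroup A] [Module.Finite ℤ A]
    (α : Module.End ℤ A) (hα : Function.Injective α)
    (h : ∀ k, 1 ≤ k → ∀ a : A, ∃ P : ℤ[X], IsSmallPoly P ∧ aeval (α ^ k) P a = 0) :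
    ∃ k n : ℕ, 1 ≤ k ∧ (α ^ k - 1) ^ n = 0 := by
  obtain ⟨k, n, hk, N, hN, h0⟩ := exists_pow_sub_one_torsion α hα h
  set β := α ^ k with hβ
  have hβi : Function.Injective β := by rw [hβ, Module.End.coe_pow]; exact hα.iterate k
  let B := LinearMap.range ((β - 1) ^ n)
  have hfin : Finite B := by
    apply Module.finite_of_fg_torsion
    rintro ⟨b, a, rfl⟩
    refine ⟨⟨N, mem_nonZeroDivisors_of_ne_zero hN⟩, Subtype.ext ?_⟩
    have := LinearMap.congr_fun h0 a
    simpa using this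
  have hcomm : ∀ j, Commute (β ^ j) ((β - 1) ^ n) := fun j =>
    (((Commute.refl β).sub_right (Commute.one_right β)).pow_pow j n)
  have hmem : ∀ (j : ℕ) (b : B), (β ^ j) b ∈ B := by
    rintro j ⟨b, a, rfl⟩
    refine ⟨(β ^ j) a, ?_⟩
    exact (LinearMap.congr_fun (hcomm j).eq a).symm
  obtain ⟨i, j, hij, he⟩ := Finite.exists_ne_map_eq_of_infinite
    (fun j : ℕ => fun b : B => (⟨(β ^ j) b, hmem j b⟩ : B))
  wlog hlt : i < j generalizing i j
  · exact this j i hij.symm he.symm (by omega)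
  have hL : ∀ b : B, (β ^ (j - i)) b = b := by
    intro b
    have h1 := congrArg Subtype.val (congrFun he b)
    simp only at h1
    have h2 : (β ^ i) ((β ^ (j - i)) b) = (β ^ i) b := by
      rw [← Module.End.mul_apply, ← pow_add, Nat.add_sub_of_le hlt.le, h1]
    have : Function.Injective (β ^ i : Module.End ℤ A) := by
      rw [Module.End.coe_pow]; exact hβi.iterate i
    exact this h2
  refine ⟨k * (j - i), n + 1, Nat.one_le_iff_ne_zero.mpr (mul_ne_zero (by omega) (by omega)), ?_⟩
  rw [pow_mul, ← hβ]
  have h3 : (β ^ (j - i) - 1) * (β - 1) ^ n = 0 := by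
    ext a
    have := hL ⟨((β - 1) ^ n) a, a, rfl⟩
    simp only [Module.End.mul_apply, LinearMap.sub_apply, Module.End.one_apply,
      LinearMap.zero_apply] at this ⊢
    rw [this, sub_self]
  have hc : Commute (β - 1) (∑ l ∈ Finset.range (j - i), β ^ l) :=
    Commute.sum_right _ _ _ fun l _ =>
      ((Commute.refl β).sub_left (Commute.one_left β)).pow_right l
  have h4 : β ^ (j - i) - 1 = (β - 1) * ∑ l ∈ Finset.range (j - i), β ^ l := by
    rw [hc.eq]; exact (geom_sum_mul β (j - i)).symm
  rw [pow_succ']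
  have h5 : (β ^ (j - i) - 1) ^ n = (β - 1) ^ n * (∑ l ∈ Finset.range (j - i), β ^ l) ^ n := by
    rw [h4]; exact hc.mul_pow n
  rw [h5, ← mul_assoc, h3, zero_mul]
end

end

/-! ### Nilpotent extensions in polynomial growth -/

section

section
open scoped commutatorElement
open Polynomial

/-- On a finitely generated abelian normal subgroup, some power of conjugation by `t` is
unipotent: coincidences between words in `t ^ k` and `x` are small polynomials annihilating `x`. A
single step number `n` serves all multiples `k * j` of the exponent. -/
theorem PG.conj_unipotent {Q : Type*} [Group Q] {d : ℕ} (hQ : PG d Q) (B : Subgroup Q) [B.Normal]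
    (hB : ∀ x ∈ B, ∀ y ∈ B, x * y = y * x) (hfg : B.FG) (t : Q) :
    ∃ k n : ℕ, 1 ≤ k ∧ ∀ j, ∀ x ∈ B, (fun x => ⁅t ^ (k * j), x⁆)^[n] x = 1 := by
  letI : CommGroup B := { (inferInstance : Group B) with
    mul_comm := fun a b => Subtype.ext (hB a a.2 b b.2) }
  let A := Additive B
  have : Module.Finite ℤ A := by
    rw [Module.Finite.iff_addGroup_fg]
    have : Group.FG B := (Group.fg_iff_subgroup_fg B).mpr hfg
    exact AddGroup.fg_iff_mul_fg.mpr this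
  let c : Q → Module.End ℤ A := fun g =>
    (MonoidHom.toAdditive (MulAut.conjNormal (H := B) g).toMonoidHom).toIntLinearMap
  have hc : ∀ g (x : B), ((Additive.toMul (c g (Additive.ofMul x)) : B) : Q) = g * x * g⁻¹ :=
    fun g x => rfl
  have hext : ∀ {a b : A}, ((Additive.toMul a : B) : Q) = ((Additive.toMul b : B) : Q) → a = b :=
    fun h => Additive.toMul.injective (Subtype.ext h)
  have hpow : ∀ g (i : ℕ), c g ^ i = c (g ^ i) := by
    intro g i
    induction i with
    | zero =>
      refine LinearMap.ext fun a => hext ?_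
      change ((Additive.toMul a : B) : Q) = g ^ 0 * ((Additive.toMul a : B) : Q) * (g ^ 0)⁻¹
      simp
    | succ i ih =>
      rw [pow_succ, ih]
      refine LinearMap.ext fun a => hext ?_
      change g ^ i * (g * ((Additive.toMul a : B) : Q) * g⁻¹) * (g ^ i)⁻¹ =
        g ^ (i + 1) * ((Additive.toMul a : B) : Q) * (g ^ (i + 1))⁻¹
      rw [pow_succ]; group
  have hword : ∀ (g : Q) (e : B) (f : ℕ → Bool) (m : ℕ),
      ((Additive.toMul (∑ i ∈ Finset.range m, (if f i then (1 : ℤ) else 0) •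
        (c g ^ i) (Additive.ofMul e)) : B) : Q) = wordProd g e f m := by
    intro g e f m
    induction m with
    | zero => simp [wordProd]
    | succ m ih =>
      rw [Finset.sum_range_succ, toMul_add, Subgroup.coe_mul, ih, wordProd]
      congr 1
      by_cases h : f m
      · simp only [h, if_true, one_smul]
        rw [hpow, hc]
      · simp [h]
  have hinj : Function.Injective (c t) := by
    intro a b hab
    apply hext
    have := congrArg (fun a : A => ((Additive.toMul a : B) : Q)) hab
    have h1 : t * ((Additive.toMul a : B) : Q) * t⁻¹ = t * ((Additive.toMul b : B) : Q) * t⁻¹ := this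
    simpa using h1
  obtain ⟨k, n, hk, hn⟩ := exists_pow_unipotent (c t) hinj (by
    intro k hk a
    obtain ⟨m, f, f', hne, heq⟩ := hQ.exists_relation (t ^ k) ((Additive.toMul a : B) : Q)
    set p : ℤ[X] := ∑ i ∈ Finset.range (m + 1),
      Polynomial.monomial i ((if f i then (1 : ℤ) else 0) - if f' i then 1 else 0) with hp
    have hcoeff : ∀ i, p.coeff i = if i < m + 1 then
        ((if f i then (1 : ℤ) else 0) - if f' i then 1 else 0) else 0 := by
      intro i
      rw [hp, finsetSum_coeff]
      simp only [coeff_monomial]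
      rw [Finset.sum_ite_eq' (Finset.range (m + 1)) i]
      simp only [Finset.mem_range]
    have hdeg : p.natDegree = m := by
      apply le_antisymm
      · rw [natDegree_le_iff_coeff_eq_zero]
        intro i hi
        rw [hcoeff, if_neg (by omega)]
      · apply le_natDegree_of_ne_zero
        rw [hcoeff, if_pos (by omega)]
        cases hf : f m <;> cases hf' : f' m <;> simp_all
    refine ⟨p, ⟨?_, ?_⟩, ?_⟩
    · rw [leadingCoeff, hdeg, hcoeff, if_pos (by omega), Int.isUnit_iff]
      cases hf : f m <;> cases hf' : f' m <;> simp_all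
    · intro i
      rw [hcoeff]
      split_ifs <;> simp
    · rw [hp, map_sum, LinearMap.sum_apply]
      simp only [aeval_monomial, sub_smul, map_sub, sub_mul, LinearMap.sub_apply]
      rw [Finset.sum_sub_distrib, sub_eq_zero]
      have h1 := hword (t ^ k) (Additive.toMul a) f (m + 1)
      have h2 := hword (t ^ k) (Additive.toMul a) f' (m + 1)
      rw [heq, ← h2] at h1
      have h3 := hext h1
      rw [← hpow] at h3
      convert h3 using 2 <;> simp <;> split_ifs <;> rfl)
  refine ⟨k, n, hk, fun j x hx => ?_⟩
  have hfin : (c (t ^ (k * j)) - 1) ^ n = 0 := by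
    rw [← hpow, pow_mul]
    set β := c t ^ k
    have hcm : Commute (β - 1) (∑ l ∈ Finset.range j, β ^ l) :=
      Commute.sum_right _ _ _ fun l _ =>
        ((Commute.refl β).sub_left (Commute.one_left β)).pow_right l
    have h4 : β ^ j - 1 = (β - 1) * ∑ l ∈ Finset.range j, β ^ l := by
      rw [hcm.eq]; exact (geom_sum_mul β j).symm
    rw [h4, hcm.mul_pow, hn, zero_mul]
  have hiter : ∀ (n : ℕ) (x : B), ((Additive.toMul (((c (t ^ (k * j)) - 1) ^ n)
      (Additive.ofMul x)) : B) : Q) = (fun x => ⁅t ^ (k * j), x⁆)^[n] (x : Q) := by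
    intro n
    induction n with
    | zero => intro x; simp
    | succ n ih =>
      intro x
      rw [pow_succ, Module.End.mul_apply, Function.iterate_succ_apply]
      have h5 : (((c (t ^ (k * j)) - 1)) (Additive.ofMul x)) = Additive.ofMul
          (⟨⁅t ^ (k * j), (x : Q)⁆, by
            rw [commutatorElement_def]
            exact B.mul_mem (Subgroup.Normal.conj_mem inferInstance _ x.2 _) (B.inv_mem x.2)⟩ : B) := by
        apply hext
        rw [LinearMap.sub_apply, toMul_sub, Subgroup.coe_div, hc]
        simp [commutatorElement_def, div_eq_mul_inv]
      rw [h5, ih]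
  have := hiter n ⟨x, hx⟩
  rw [hfin] at this
  simpa using this.symm

/-- Unipotence, modulo `Z`, of a power of conjugation by `t` on a finitely generated normal
subgroup `Z'` that is abelian modulo `Z`. -/
theorem PG.factor_unipotent {H : Type*} [Group H] {d : ℕ} (hH : PG d H) (Z Z' : Subgroup H)
    [Z.Normal] [Z'.Normal] (hcomm : ∀ x ∈ Z', ∀ y ∈ Z', ⁅x, y⁆ ∈ Z) (hfg : Z'.FG) (t : H) :
    ∃ k n : ℕ, 1 ≤ k ∧ ∀ j, ∀ x ∈ Z', (fun x => ⁅t ^ (k * j), x⁆)^[n] x ∈ Z := by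
  have hsurj : Function.Surjective (QuotientGroup.mk' Z) := QuotientGroup.mk'_surjective Z
  have : (Z'.map (QuotientGroup.mk' Z)).Normal := Subgroup.Normal.map inferInstance _ hsurj
  obtain ⟨k, n, hk, h⟩ := (hH.of_surjective (QuotientGroup.mk' Z) hsurj).conj_unipotent
    (Z'.map (QuotientGroup.mk' Z)) (by
      rintro _ ⟨x, hx, rfl⟩ _ ⟨y, hy, rfl⟩
      rw [← commutatorElement_eq_one_iff_mul_comm, ← map_commutatorElement]
      exact (QuotientGroup.eq_one_iff _).mpr (hcomm x hx y hy))
    (by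
      obtain ⟨s, hs⟩ := hfg
      classical
      exact ⟨s.image (QuotientGroup.mk' Z), by
        rw [Finset.coe_image, ← MonoidHom.map_closure, hs]⟩)
    (QuotientGroup.mk' Z t)
  refine ⟨k, n, hk, fun j x hx => ?_⟩
  have h1 := h j _ ⟨x, hx, rfl⟩
  have h2 : ∀ (n : ℕ) (x : H), (fun y => ⁅(QuotientGroup.mk' Z t) ^ (k * j), y⁆)^[n]
      (QuotientGroup.mk' Z x) = QuotientGroup.mk' Z ((fun x => ⁅t ^ (k * j), x⁆)^[n] x) := by
    intro n
    induction n with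
    | zero => intro x; rfl
    | succ n ih =>
      intro x
      rw [Function.iterate_succ_apply, Function.iterate_succ_apply, ← ih, map_commutatorElement,
        map_pow]
  rw [h2] at h1
  exact (QuotientGroup.eq_one_iff _).mp h1

/-- Extending a normal nilpotent subgroup by a power of an element, in polynomial growth. -/
theorem PG.nilpotent_sup_zpowers {H : Type*} [Group H] {d : ℕ} (hH : PG d H) (M : Subgroup H)
    [M.Normal] (hM : Group.IsNilpotent M) (hfg : ∀ K ≤ M, K.FG) (t : H) :
    ∃ k : ℕ, 1 ≤ k ∧ Group.IsNilpotent (M ⊔ Subgroup.zpowers (t ^ k) : Subgroup H) := by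
  let Z : ℕ → Subgroup H := fun i => (Subgroup.upperCentralSeries M i).map M.subtype
  have hZn : ∀ i, (Z i).Normal := fun i => inferInstance
  have hZM : ∀ i, Z i ≤ M := fun i => Subgroup.map_subtype_le _
  have hZs : ∀ i, ∀ x ∈ Z (i + 1), ∀ y ∈ M, ⁅x, y⁆ ∈ Z i := by
    rintro i _ ⟨x, hx, rfl⟩ y hy
    exact ⟨⁅x, ⟨y, hy⟩⁆, Subgroup.mem_upperCentralSeries_succ_iff.mp hx ⟨y, hy⟩, rfl⟩
  obtain ⟨c, hc⟩ := hM.nilpotent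
  have hZc : Z c = M := by
    change (Subgroup.upperCentralSeries M c).map M.subtype = M
    rw [hc, ← MonoidHom.range_eq_map, Subgroup.range_subtype]
  -- One exponent `k` serves all factors of the upper central series of `M`: exponents of different
  -- factors are multiplied.
  have hk : ∀ c : ℕ, ∃ k : ℕ, 1 ≤ k ∧ ∀ i < c, ∃ n, ∀ j, ∀ x ∈ Z (i + 1),
      (fun x => ⁅t ^ (k * j), x⁆)^[n] x ∈ Z i := by
    intro c
    induction c with
    | zero => exact ⟨1, le_rfl, by simp⟩
    | succ c ih =>
      obtain ⟨k, hk, ih⟩ := ih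
      obtain ⟨k', n, hk', h⟩ := hH.factor_unipotent (Z c) (Z (c + 1))
        (fun x hx y hy => hZs c x hx y (hZM _ hy)) (hfg _ (hZM _)) t
      refine ⟨k * k', Nat.mul_pos hk hk', fun i hi => ?_⟩
      rcases Nat.lt_succ_iff_lt_or_eq.mp hi with hi | rfl
      · obtain ⟨n, hn⟩ := ih i hi
        refine ⟨n, fun j x hx => ?_⟩
        have := hn (k' * j) x hx
        rwa [← mul_assoc] at this
      · refine ⟨n, fun j x hx => ?_⟩
        have := h (k * j) x hx
        rwa [show k' * (k * j) = k * k' * j by ring] at this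
  obtain ⟨k, hk1, hk⟩ := hk c
  refine ⟨k, hk1, ?_⟩
  set τ := t ^ k with hτ
  set L : Subgroup H := M ⊔ Subgroup.zpowers τ with hL
  have hML : M ≤ L := le_sup_left
  have hτL : τ ∈ L := (le_sup_right : _ ≤ L) (Subgroup.mem_zpowers τ)
  let W : ℕ → Subgroup L := fun s => Subgroup.upperCentralSeries L s
  have hWmono : Monotone W := Subgroup.upperCentralSeries_mono L
  -- it suffices to test centrality modulo `W s` on `M` and `τ`
  have hgen : ∀ s (x : L), (∀ y : L, (y : H) ∈ M → ⁅x, y⁆ ∈ W s) → ⁅x, (⟨τ, hτL⟩ : L)⁆ ∈ W s →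
      x ∈ W (s + 1) := by
    intro s x h1 h2
    refine Subgroup.mem_upperCentralSeries_succ_iff.mpr ?_
    let C : Subgroup L := (Subgroup.centralizer {QuotientGroup.mk' (W s) x}).comap
      (QuotientGroup.mk' (W s))
    have hC : ∀ y : L, y ∈ C ↔ ⁅x, y⁆ ∈ W s := by
      intro y
      rw [Subgroup.mem_comap, Subgroup.mem_centralizer_singleton_iff, eq_comm,
        ← commutatorElement_eq_one_iff_mul_comm, ← map_commutatorElement]
      exact QuotientGroup.eq_one_iff _
    have hLC : L ≤ C.map L.subtype := by
      refine sup_le ?_ ?_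
      · intro y hy
        exact ⟨⟨y, hML hy⟩, (hC _).mpr (h1 _ hy), rfl⟩
      · rw [Subgroup.zpowers_le]
        exact ⟨⟨τ, hτL⟩, (hC _).mpr h2, rfl⟩
    intro y
    obtain ⟨y', hy', h⟩ := hLC y.2
    have : y' = y := Subtype.ext h
    exact (hC y).mp (this ▸ hy')
  -- By induction, each term of the upper central series of `M` lies in a term of the upper central
  -- series `W` of `L`; unipotence of `t ^ k` bounds how many steps each factor takes.
  have hstep : ∀ i ≤ c, ∃ s, ∀ x : L, (x : H) ∈ Z i → x ∈ W s := by
    intro i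
    induction i with
    | zero =>
      intro _
      refine ⟨0, fun x hx => ?_⟩
      have hx1 : (x : H) = 1 := by
        obtain ⟨y, hy, h⟩ := hx
        have hy1 : y = 1 := by simpa using hy
        rw [← h, hy1]; rfl
      have : x = 1 := Subtype.ext hx1
      rw [this]; exact one_mem _
    | succ i ih =>
      intro hi
      obtain ⟨s, hs⟩ := ih (by omega)
      obtain ⟨n, hn⟩ := hk i (by omega)
      have hn1 : ∀ x ∈ Z (i + 1), (fun x => ⁅τ, x⁆)^[n] x ∈ Z i := by
        intro x hx
        simpa using hn 1 x hx
      have hcl : ∀ x ∈ Z (i + 1), ⁅τ, x⁆ ∈ Z (i + 1) := by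
        intro x hx
        rw [commutatorElement_def]
        exact mul_mem ((hZn (i + 1)).conj_mem x hx _) (inv_mem hx)
      have : ∀ j, ∀ x : L, (x : H) ∈ Z (i + 1) → (fun x => ⁅τ, x⁆)^[j] (x : H) ∈ Z i →
          x ∈ W (s + j) := by
        intro j
        induction j with
        | zero => intro x _ h; exact hs x h
        | succ j ihj =>
          intro x hx h
          refine hgen (s + j) x ?_ ?_
          · intro y hy
            exact hWmono (Nat.le_add_right s j) (hs _ (hZs i x hx y hy))
          · rw [← commutatorElement_inv]
            exact inv_mem (ihj ⁅(⟨τ, hτL⟩ : L), x⁆ (hcl x hx) h)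
      exact ⟨s + n, fun x hx => this n x hx (hn1 x hx)⟩
  obtain ⟨s, hs⟩ := hstep c le_rfl
  rw [hZc] at hs
  refine ⟨⟨s + 1 + 1, ?_⟩⟩
  rw [eq_top_iff]
  have hτW : (⟨τ, hτL⟩ : L) ∈ W (s + 1) := by
    refine hgen s _ (fun y hy => hs _ ?_) (by simp)
    change ⁅τ, (y : H)⁆ ∈ M
    rw [commutatorElement_def]
    exact mul_mem (Subgroup.Normal.conj_mem inferInstance _ hy _) (inv_mem hy)
  intro x _
  refine hgen (s + 1) x (fun y hy => hWmono (Nat.le_succ s) (hs _ ?_)) ?_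
  · change ⁅(x : H), (y : H)⁆ ∈ M
    rw [commutatorElement_def, mul_assoc, mul_assoc, ← mul_assoc (x : H)]
    rw [← mul_assoc]
    exact mul_mem (Subgroup.Normal.conj_mem inferInstance _ hy _) (inv_mem hy)
  · rw [commutatorElement_def]
    exact mul_mem (Subgroup.Normal.conj_mem inferInstance _ hτW _) (inv_mem hτW)

end

end

/-! ### Random-walk vectors in a Hilbert space -/

section

universe uG uV

/-- A semi-inner product preserved by a group action gives an isometric representation on a
Hilbert space, by separation and completion. -/
theorem exists_hilbertize {G : Type uG} {V : Type uV} [Group G] [AddCommGroup V] [Module ℝ V]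
    (c : PreInnerProductSpace.Core ℝ V) (L : G →* Module.End ℝ V)
    (hL : ∀ g x y, c.inner (L g x) (L g y) = c.inner x y) :
    ∃ (H : Type uV) (_ : NormedAddCommGroup H) (_ : InnerProductSpace ℝ H) (_ : CompleteSpace H)
      (π : G →* (H ≃ₗᵢ[ℝ] H)) (j : V →ₗ[ℝ] H),
      (∀ x y, inner ℝ (j x) (j y) = c.inner x y) ∧ ∀ g x, j (L g x) = π g (j x) := by
  letI : SeminormedAddCommGroup V := @InnerProductSpace.Core.toSeminormedAddCommGroup ℝ V _ _ _ c
  letI : InnerProductSpace ℝ V := InnerProductSpace.ofCore c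
  have hin : ∀ x y : V, inner ℝ x y = c.inner x y := fun x y => rfl
  let Li : G → (V →ₗᵢ[ℝ] V) := fun g => 
    { toLinearMap := L g
      norm_map' := fun x => by
        have h1 : ‖L g x‖ ^ 2 = ‖x‖ ^ 2 := by
          rw [← real_inner_self_eq_norm_sq, ← real_inner_self_eq_norm_sq, hin, hin, hL]
        exact (pow_left_inj₀ (norm_nonneg _) (norm_nonneg _) two_ne_zero).1 h1 }
  let P : G → (UniformSpace.Completion V →L[ℝ] UniformSpace.Completion V) :=
    fun g => (Li g).toContinuousLinearMap.completion
  have hP : ∀ g (x : V), P g (x : UniformSpace.Completion V) = ((L g x : V) : UniformSpace.Completion V) :=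
    fun g x => ContinuousLinearMap.completion_apply_coe _ _
  have hPn : ∀ g x, ‖P g x‖ = ‖x‖ := by
    intro g x
    induction x using UniformSpace.Completion.induction_on with
    | hp => exact isClosed_eq (by fun_prop) (by fun_prop)
    | ih x => 
      rw [hP, UniformSpace.Completion.norm_coe, UniformSpace.Completion.norm_coe]
      exact (Li g).norm_map x
  have hP1 : ∀ x, P 1 x = x := by
    intro x
    induction x using UniformSpace.Completion.induction_on with
    | hp => exact isClosed_eq (by fun_prop) (by fun_prop)
    | ih x => rw [hP]; simp
  have hPm : ∀ g h x, P (g * h) x = P g (P h x) := by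
    intro g h x
    induction x using UniformSpace.Completion.induction_on with
    | hp => exact isClosed_eq (by fun_prop) (by fun_prop)
    | ih x => rw [hP, hP, hP]; simp
  let π : G →* (UniformSpace.Completion V ≃ₗᵢ[ℝ] UniformSpace.Completion V) :=
    { toFun := fun g =>
        { toLinearEquiv := LinearEquiv.ofLinearMap (P g).toLinearMap (P g⁻¹).toLinearMap
            (by ext x; simp [← hPm, hP1]) (by ext x; simp [← hPm, hP1])
          norm_map' := hPn g }
      map_one' := by ext x; exact hP1 x
      map_mul' := fun g h => by ext x; exact hPm g h x }
  refine ⟨UniformSpace.Completion V, inferInstance, inferInstance, inferInstance, π,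
    (UniformSpace.Completion.toComplₗᵢ (𝕜 := ℝ) (E := V)).toLinearMap, ?_, ?_⟩
  · intro x y
    exact UniformSpace.Completion.inner_coe x y
  · intro g x
    exact (hP g x).symm

open scoped Pointwise in
/-- The distributions `f j` of the random walk, viewed in `ℓ²(G)` with its regular representation.
Cauchy–Schwarz on the support gives `‖f j‖² ≥ 1 / #(S ^ j)`, and the correlations of the
translates of `f j` add up to at most `1` since `f j` has total mass `1`. -/
theorem exists_walk_vectors {G : Type uG} [Group G] (S : Finset G) (hne : S.Nonempty) :
    ∃ (H : Type uG) (_ : NormedAddCommGroup H) (_ : InnerProductSpace ℝ H) (_ : CompleteSpace H)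
      (π : G →* (H ≃ₗᵢ[ℝ] H)) (f : ℕ → H),
      (∀ j, f (j + 1) = (S.card : ℝ)⁻¹ • ∑ s ∈ S, π s (f j)) ∧
      (∀ j, 1 ≤ (((S : Set G) ^ j).ncard : ℝ) * ‖f j‖ ^ 2) ∧
      ∀ j (X : Finset G), ∑ x ∈ X, inner ℝ (π x (f j)) (f j) ≤ 1 := by
  classical
  have hcard : (0 : ℝ) < S.card := by exact_mod_cast hne.card_pos
  let c : PreInnerProductSpace.Core ℝ (G →₀ ℝ) :=
    { inner := fun f g => f.sum fun x a => a * g x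
      conj_inner_symm := fun f g => by
        simp only [conj_trivial]
        rw [Finsupp.sum_of_support_subset f (s := f.support ∪ g.support) Finset.subset_union_left
          _ (by simp), Finsupp.sum_of_support_subset g (s := f.support ∪ g.support)
          Finset.subset_union_right _ (by simp)]
        exact Finset.sum_congr rfl fun x _ => mul_comm _ _
      re_inner_nonneg := fun f => by
        simp only [Finsupp.sum, RCLike.re_to_real]
        exact Finset.sum_nonneg fun x _ => mul_self_nonneg _
      add_left := fun f g h => by
        rw [Finsupp.sum_add_index'] <;> intros <;> simp [add_mul]
      smul_left := fun f g r => by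
        simp only [conj_trivial]
        rw [Finsupp.sum_smul_index (by simp), Finsupp.mul_sum]
        simp [mul_assoc] }
  have hc : ∀ f g : G →₀ ℝ, c.inner f g = f.sum fun x a => a * g x := fun f g => rfl
  let L : G →* Module.End ℝ (G →₀ ℝ) :=
    { toFun := fun g => Finsupp.lmapDomain ℝ ℝ (fun x => g * x)
      map_one' := by ext; simp
      map_mul' := fun g h => by ext; simp [mul_assoc] }
  have hLa : ∀ g (f : G →₀ ℝ) x, L g f x = f (g⁻¹ * x) := by
    intro g f x
    have : x = g * (g⁻¹ * x) := by group
    conv_lhs => rw [this]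
    exact Finsupp.mapDomain_apply (mul_right_injective g) _ _
  have hLs : ∀ g (f : G →₀ ℝ) (k : G → ℝ → ℝ), (∀ x, k x 0 = 0) →
      (L g f).sum k = f.sum fun x a => k (g * x) a := by
    intro g f k hk
    exact Finsupp.sum_mapDomain_index_inj (mul_right_injective g)
  have hL : ∀ g x y, c.inner (L g x) (L g y) = c.inner x y := by
    intro g x y
    rw [hc, hc, hLs _ _ _ (by simp)]
    simp [hLa]
  obtain ⟨H, i1, i2, i3, π, j, hj, hjL⟩ := exists_hilbertize c L hL
  let m : Module.End ℝ (G →₀ ℝ) := (S.card : ℝ)⁻¹ • ∑ s ∈ S, L s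
  let F : ℕ → (G →₀ ℝ) := fun n => (m ^ n) (Finsupp.single 1 1)
  have hFs : ∀ n, F (n + 1) = (S.card : ℝ)⁻¹ • ∑ s ∈ S, L s (F n) := by
    intro n
    simp only [F, pow_succ', Module.End.mul_apply]
    simp [m]
  have hFx : ∀ n x, F (n + 1) x = (S.card : ℝ)⁻¹ * ∑ s ∈ S, F n (s⁻¹ * x) := by
    intro n x
    rw [hFs]; simp [Finsupp.finsetSum_apply, hLa]
  have hF0 : ∀ n x, 0 ≤ F n x := by
    intro n
    induction n with
    | zero => intro x; simp only [F, pow_zero, Module.End.one_apply, Finsupp.single_apply]; split_ifs <;> norm_num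
    | succ n ih =>
      intro x
      rw [hFx]
      exact mul_nonneg (by positivity) (Finset.sum_nonneg fun s _ => ih _)
  let tot : (G →₀ ℝ) →ₗ[ℝ] ℝ := Finsupp.linearCombination ℝ (fun _ => (1 : ℝ))
  have htot : ∀ f, tot f = f.sum fun _ a => a := by
    intro f; simp [tot, Finsupp.linearCombination_apply]
  have htotL : ∀ g f, tot (L g f) = tot f := by
    intro g f; rw [htot, htot, hLs _ _ _ (by simp)]
  have hFt : ∀ n, tot (F n) = 1 := by
    intro n
    induction n with
    | zero => simp [F, tot]
    | succ n ih =>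
      rw [hFs]
      simp only [map_smul, map_sum, htotL, ih]
      simp [hcard.ne']
  have hsupp : ∀ n, ((F n).support : Set G) ⊆ (S : Set G) ^ n := by
    intro n
    induction n with
    | zero =>
      intro x hx
      simp only [F, pow_zero, Module.End.one_apply] at hx
      by_contra h
      have : x ≠ 1 := by simpa using h
      simp [Finsupp.single_apply, this.symm] at hx
      exact this hx
    | succ n ih =>
      intro x hx
      have h1 : F (n + 1) x ≠ 0 := by simpa using hx
      rw [hFx] at h1
      have h2 : ∑ s ∈ S, F n (s⁻¹ * x) ≠ 0 := fun h => h1 (by rw [h, mul_zero])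
      obtain ⟨s, hs, h3⟩ := Finset.exists_ne_zero_of_sum_ne_zero h2
      rw [pow_succ']
      exact ⟨s, hs, s⁻¹ * x, ih (by simpa using h3), by simp⟩
  have hfin : ∀ n, ((S : Set G) ^ n).Finite := by
    intro n
    rw [← Finset.coe_pow]; exact Finset.finite_toSet _
  refine ⟨H, i1, i2, i3, π, fun n => j (F n), ?_, ?_, ?_⟩
  · intro n
    change j (F (n + 1)) = (S.card : ℝ)⁻¹ • ∑ s ∈ S, π s (j (F n))
    rw [hFs]; simp [hjL]
  · intro n
    have h1 : ‖j (F n)‖ ^ 2 = ∑ x ∈ (F n).support, (F n x) ^ 2 := by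
      rw [← real_inner_self_eq_norm_sq, hj, hc, Finsupp.sum]
      exact Finset.sum_congr rfl fun x _ => (sq _).symm
    have h2 : (1 : ℝ) ≤ ((F n).support.card : ℝ) * ∑ x ∈ (F n).support, (F n x) ^ 2 := by
      have := sq_sum_le_card_mul_sum_sq (s := (F n).support) (f := fun x => F n x)
      have h3 : ∑ x ∈ (F n).support, F n x = 1 := by
        rw [← hFt n, htot]; rfl
      rw [h3] at this; simpa using this
    rw [h1]
    refine h2.trans ?_
    refine mul_le_mul_of_nonneg_right ?_ (Finset.sum_nonneg fun x _ => sq_nonneg _)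
    have := Set.ncard_le_ncard (hsupp n) (hfin n)
    rw [Set.ncard_coe_finset] at this
    exact_mod_cast this
  · intro n X
    have h1 : ∀ x, inner ℝ (π x (j (F n))) (j (F n)) = ∑ y ∈ (F n).support, F n y * F n (x * y) := by
      intro x
      rw [← hjL, hj, hc, hLs _ _ _ (by simp)]
      rfl
    simp only [h1]
    rw [Finset.sum_comm]
    have h3 : ∑ x ∈ (F n).support, F n x = 1 := by
      rw [← hFt n, htot]; rfl
    calc _ ≤ ∑ y ∈ (F n).support, F n y * 1 := by
          refine Finset.sum_le_sum fun y _ => ?_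
          rw [← Finset.mul_sum]
          refine mul_le_mul_of_nonneg_left ?_ (hF0 _ _)
          rw [← Finset.sum_image (f := fun z => F n z) (g := fun x => x * y) (fun a _ b _ h => mul_right_cancel h)]
          rw [← h3, ← Finset.sum_filter_ne_zero]
          refine Finset.sum_le_sum_of_subset_of_nonneg ?_ (fun _ _ _ => hF0 _ _)
          intro z hz
          simp only [Finset.mem_filter] at hz
          simpa using hz.2
      _ = 1 := by simpa using h3

end

/-! ### Almost harmonic vectors -/

section

open scoped Pointwise

section Walk
variable {G H : Type*} [Group G] [NormedAddCommGroup H] [InnerProductSpace ℝ H]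
  (π : G →* (H ≃ₗᵢ[ℝ] H)) (S : Finset G) (f : ℕ → H)

theorem rep_inner (g : G) (v w : H) : inner ℝ (π g v) w = inner ℝ v (π g⁻¹ w) := by
  rw [← (π g⁻¹).inner_map_map (π g v) w]
  congr 1
  change (π g⁻¹ * π g) v = v
  rw [← map_mul]; simp

theorem rep_mul (g h : G) (v : H) : π (g * h) v = π g (π h v) := by
  rw [map_mul]; rfl

variable (hne : S.Nonempty) (hsymm : ∀ s ∈ S, s⁻¹ ∈ S)
  (hf : ∀ j, f (j + 1) = (S.card : ℝ)⁻¹ • ∑ s ∈ S, π s (f j))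

include hne hf in
theorem walk_sum (j : ℕ) : ∑ s ∈ S, π s (f j) = (S.card : ℝ) • f (j + 1) := by
  have : (S.card : ℝ) ≠ 0 := by exact_mod_cast hne.card_pos.ne'
  rw [hf, smul_smul, mul_inv_cancel₀ this, one_smul]

include hsymm hf in
theorem walk_inner_symm (i j : ℕ) : inner ℝ (f (i + 1)) (f j) = inner ℝ (f i) (f (j + 1)) := by
  rw [hf, hf, real_inner_smul_left, real_inner_smul_right, sum_inner, inner_sum]
  congr 1
  refine Finset.sum_bij' (fun s _ => s⁻¹) (fun s _ => s⁻¹) (by simpa using hsymm)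
    (by simpa using hsymm) (by simp) (by simp) ?_
  intro s _
  exact rep_inner π s _ _

include hne hf in
theorem walk_sum_prod (j : ℕ) :
    ∑ p ∈ S ×ˢ S, π (p.1 * p.2) (f j) = (S.card : ℝ) ^ 2 • f (j + 2) := by
  rw [Finset.sum_product]
  simp only [rep_mul]
  simp only [← map_sum, walk_sum π S f hne hf]
  simp only [map_smul, ← Finset.smul_sum, walk_sum π S f hne hf, smul_smul, sq]

include hne hf hsymm in
/-- The decrement of `‖f j‖²` measures the squared displacement of `f j` under two-step products.
-/
theorem walk_sum_sq (j : ℕ) : ∑ p ∈ S ×ˢ S, ‖π (p.1 * p.2) (f j) - f j‖ ^ 2 =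
    (S.card : ℝ) ^ 2 * (2 * (‖f j‖ ^ 2 - ‖f (j + 1)‖ ^ 2)) := by
  have h1 : ∀ p : G × G, ‖π (p.1 * p.2) (f j) - f j‖ ^ 2 =
      2 * ‖f j‖ ^ 2 - 2 * inner ℝ (π (p.1 * p.2) (f j)) (f j) := by
    intro p
    rw [norm_sub_sq_real, LinearIsometryEquiv.norm_map]; ring
  simp only [h1]
  rw [Finset.sum_sub_distrib, ← Finset.mul_sum, ← Finset.mul_sum, ← sum_inner, walk_sum_prod π S f hne hf,
    real_inner_smul_left, walk_inner_symm π S f hsymm hf, real_inner_self_eq_norm_sq]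
  simp only [Finset.sum_const, Finset.card_product, nsmul_eq_mul]
  push_cast; ring

include hne hf hsymm in
/-- The second difference of `‖f j‖²` measures the mean displacement of `f j`. -/
theorem walk_sum_norm (j : ℕ) : ‖∑ p ∈ S ×ˢ S, (π (p.1 * p.2) (f j) - f j)‖ ^ 2 =
    (S.card : ℝ) ^ 4 * ((‖f j‖ ^ 2 - ‖f (j + 1)‖ ^ 2) - (‖f (j + 1)‖ ^ 2 - ‖f (j + 2)‖ ^ 2)) := by
  rw [Finset.sum_sub_distrib, walk_sum_prod π S f hne hf, Finset.sum_const, Finset.card_product,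
    ← Nat.cast_smul_eq_nsmul ℝ]
  push_cast
  rw [← sq, ← smul_sub, norm_smul, mul_pow, norm_sub_sq_real,
    walk_inner_symm π S f hsymm hf, real_inner_self_eq_norm_sq]
  simp only [norm_pow, Real.norm_natCast]
  ring

include hne hf hsymm in
/-- A positive limit `q` of `‖f j‖²` would correlate arbitrarily many translates of `f j` by
nearly `q` each, while the correlations add up to at most `1`. -/
theorem walk_tendsto_zero [Infinite G] (h1S : (1 : G) ∈ S)
    (hgen : Subgroup.closure (S : Set G) = ⊤)
    (h3 : ∀ j (X : Finset G), ∑ x ∈ X, inner ℝ (π x (f j)) (f j) ≤ 1) :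
    Tendsto (fun j => ‖f j‖ ^ 2) atTop (nhds 0) := by
  have hanti : Antitone fun j => ‖f j‖ ^ 2 := by
    refine antitone_nat_of_succ_le fun j => ?_
    have h := walk_sum_sq π S f hne hsymm hf j
    have h0 : (0 : ℝ) ≤ ∑ p ∈ S ×ˢ S, ‖π (p.1 * p.2) (f j) - f j‖ ^ 2 :=
      Finset.sum_nonneg fun _ _ => sq_nonneg _
    have hc : (0 : ℝ) < (S.card : ℝ) ^ 2 := by
      have : (0 : ℝ) < S.card := by exact_mod_cast hne.card_pos
      positivity
    rw [h] at h0
    have := nonneg_of_mul_nonneg_right h0 hc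
    linarith
  obtain ⟨q, hq⟩ : ∃ q, Tendsto (fun j => ‖f j‖ ^ 2) atTop (nhds q) :=
    ⟨_, tendsto_atTop_ciInf hanti ⟨0, by rintro _ ⟨j, rfl⟩; positivity⟩⟩
  have hq0 : 0 ≤ q := ge_of_tendsto' hq fun j => by positivity
  have hS0 : ∀ s ∈ S, Tendsto (fun j => ‖π s (f j) - f j‖) atTop (nhds 0) := by
    intro s hs
    have h : Tendsto (fun j => ‖π s (f j) - f j‖ ^ 2) atTop (nhds 0) := by
      have hlim : Tendsto (fun j => (S.card : ℝ) ^ 2 * (2 * (‖f j‖ ^ 2 - ‖f (j + 1)‖ ^ 2)))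
          atTop (nhds ((S.card : ℝ) ^ 2 * (2 * (q - q)))) :=
        ((hq.sub (hq.comp (tendsto_add_atTop_nat 1))).const_mul 2).const_mul _
      rw [sub_self, mul_zero, mul_zero] at hlim
      refine squeeze_zero (fun _ => sq_nonneg _) (fun j => ?_) hlim
      rw [← walk_sum_sq π S f hne hsymm hf j]
      have := Finset.single_le_sum (f := fun p : G × G => ‖π (p.1 * p.2) (f j) - f j‖ ^ 2)
        (fun _ _ => sq_nonneg _) (Finset.mk_mem_product hs h1S)
      simpa using this
    have := h.sqrt
    simpa using this
  have hall : ∀ x : G, Tendsto (fun j => ‖π x (f j) - f j‖) atTop (nhds 0) := by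
    intro x
    have hx : x ∈ Subgroup.closure (S : Set G) := by rw [hgen]; trivial
    induction hx using Subgroup.closure_induction with
    | mem s hs => exact hS0 s hs
    | one => simp
    | mul x y _ _ hx hy =>
      have := hx.add hy
      rw [add_zero] at this
      refine squeeze_zero (fun _ => norm_nonneg _) (fun j => ?_) this
      have e : π (x * y) (f j) - f j = (π x (f j) - f j) + π x (π y (f j) - f j) := by
        rw [rep_mul, map_sub]; abel
      rw [e]
      refine (norm_add_le _ _).trans ?_
      rw [LinearIsometryEquiv.norm_map]
    | inv x _ hx =>
      refine hx.congr fun j => ?_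
      have e : π x⁻¹ (f j) - f j = - π x⁻¹ (π x (f j) - f j) := by
        rw [map_sub, ← rep_mul]; simp
      rw [e, norm_neg, LinearIsometryEquiv.norm_map]
  have hin : ∀ x : G, Tendsto (fun j => inner ℝ (π x (f j)) (f j)) atTop (nhds q) := by
    intro x
    have h : ∀ j, inner ℝ (π x (f j)) (f j) = ‖f j‖ ^ 2 - ‖π x (f j) - f j‖ ^ 2 / 2 := by
      intro j
      rw [norm_sub_sq_real, LinearIsometryEquiv.norm_map]; ring
    simp only [h]
    have := hq.sub (((hall x).pow 2).div_const 2)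
    simpa using this
  -- Infinitely many translates would have limiting correlation `q` with `f j`.
  have hX : ∀ n : ℕ, (n : ℝ) * q ≤ 1 := by
    intro n
    obtain ⟨X, hX⟩ := Infinite.exists_subset_card_eq G n
    have h : Tendsto (fun j => ∑ x ∈ X, inner ℝ (π x (f j)) (f j)) atTop (nhds (∑ x ∈ X, q)) :=
      tendsto_finsetSum _ fun x _ => hin x
    have := le_of_tendsto' h fun j => h3 j X
    simpa [hX] using this
  have : q = 0 := by
    by_contra hne0
    have hqpos : 0 < q := lt_of_le_of_ne hq0 (Ne.symm hne0)
    obtain ⟨n, hn⟩ := exists_nat_gt (1 / q)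
    have := hX n
    rw [div_lt_iff₀ hqpos] at hn
    linarith
  rwa [this] at hq

/-- A sequence decreasing to `0` no faster than polynomially has nearly equal consecutive
decrements. -/
theorem exists_slow_decrement (q : ℕ → ℝ) (hq0 : Tendsto q atTop (nhds 0)) (C : ℝ) (d : ℕ)
    (hlow : ∀ j : ℕ, 1 ≤ C * ((j : ℝ) + 1) ^ d * q j)
    (hconv : ∀ j, q (j + 1) - q (j + 2) ≤ q j - q (j + 1)) (hmono : ∀ j, q (j + 1) ≤ q j)
    (δ : ℝ) (hδ : 0 < δ) : ∃ j, 0 < q j - q (j + 1) ∧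
      (q j - q (j + 1)) - (q (j + 1) - q (j + 2)) ≤ δ * (q j - q (j + 1)) := by
  wlog hδ1 : δ < 1 generalizing δ
  · obtain ⟨j, hj, hj2⟩ := this (1 / 2) (by norm_num) (by norm_num)
    refine ⟨j, hj, hj2.trans ?_⟩
    push Not at hδ1
    exact mul_le_mul_of_nonneg_right (by linarith) hj.le
  have hanti : Antitone q := antitone_nat_of_succ_le hmono
  have hqpos : ∀ j, 0 < q j := by
    intro j
    have h0 : 0 ≤ q j := le_of_tendsto hq0 (eventually_atTop.2 ⟨j, fun k hk => hanti hk⟩)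
    refine lt_of_le_of_ne h0 fun h => ?_
    have := hlow j
    rw [← h, mul_zero] at this
    linarith
  by_cases hu : ∃ j, q j - q (j + 1) ≤ 0
  · exfalso
    obtain ⟨j, hj⟩ := hu
    have hconst : ∀ k, q (j + k) - q (j + k + 1) ≤ 0 := by
      intro k
      induction k with
      | zero => exact hj
      | succ k ih => exact (hconv (j + k)).trans ih
    have hge : ∀ k, q j ≤ q (j + k) := by
      intro k
      induction k with
      | zero => exact le_rfl
      | succ k ih => have := hconst k; rw [← add_assoc]; linarith
    have : q j ≤ 0 := ge_of_tendsto hq0 (eventually_atTop.2 ⟨j, fun k hk => by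
      obtain ⟨i, rfl⟩ := Nat.exists_eq_add_of_le hk
      exact hge i⟩)
    exact absurd (hqpos j) (not_lt.2 this)
  push Not at hu
  by_contra hcon
  push Not at hcon
  set ρ := 1 - δ with hρ
  have hρ0 : 0 ≤ ρ := by linarith
  have hstep : ∀ j, q (j + 1) - q (j + 2) ≤ ρ * (q j - q (j + 1)) := by
    intro j
    have := hcon j (hu j)
    rw [hρ]; linarith
  have hgeo : ∀ j k, q (j + k) - q (j + k + 1) ≤ ρ ^ k * (q j - q (j + 1)) := by
    intro j k
    induction k with
    | zero => simp
    | succ k ih =>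
      refine (hstep (j + k)).trans ?_
      rw [pow_succ', mul_assoc]
      exact mul_le_mul_of_nonneg_left ih hρ0
  -- the decrements dominate the sequence itself
  have hsum : ∀ j k, δ * (q j - q (j + k)) ≤ (1 - ρ ^ k) * (q j - q (j + 1)) := by
    intro j k
    induction k with
    | zero => simp
    | succ k ih =>
      have h1 := hgeo j k
      have h2 : δ * (q (j + k) - q (j + k + 1)) ≤ δ * (ρ ^ k * (q j - q (j + 1))) :=
        mul_le_mul_of_nonneg_left h1 hδ.le
      have h3 : (1 - ρ ^ (k + 1)) = (1 - ρ ^ k) + δ * ρ ^ k := by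
        rw [pow_succ]; rw [show δ = 1 - ρ by rw [hρ]; ring]; ring
      rw [h3, ← add_assoc]
      nlinarith
  have hqu : ∀ j, δ * q j ≤ q j - q (j + 1) := by
    intro j
    have hlim : Tendsto (fun k => δ * (q j - q (j + k))) atTop (nhds (δ * (q j - 0))) := by
      refine (tendsto_const_nhds.sub ?_).const_mul δ
      have := hq0.comp (tendsto_add_atTop_nat j)
      refine this.congr fun k => by simp [add_comm]
    rw [sub_zero] at hlim
    refine le_of_tendsto' hlim fun k => (hsum j k).trans ?_
    have : 0 ≤ ρ ^ k * (q j - q (j + 1)) := mul_nonneg (pow_nonneg hρ0 k) (hu j).le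
    linarith
  have hqexp : ∀ j, q j ≤ ρ ^ j * q 0 := by
    intro j
    induction j with
    | zero => simp
    | succ j ih =>
      have := hqu j
      have h2 : q (j + 1) ≤ ρ * q j := by rw [hρ]; linarith
      refine h2.trans ?_
      rw [pow_succ', mul_assoc]
      exact mul_le_mul_of_nonneg_left ih hρ0
  have hC : 0 < C := by
    have := hlow 0
    simp at this
    by_contra h
    push Not at h
    nlinarith [hqpos 0]
  have hlim : Tendsto (fun j : ℕ => C * q 0 * (((j : ℝ) + 1) ^ d * ρ ^ j)) atTop (nhds 0) := by
    have h1 : Tendsto (fun j : ℕ => ((j + 1 : ℕ) : ℝ) ^ d * ρ ^ (j + 1)) atTop (nhds 0) :=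
      (tendsto_pow_const_mul_const_pow_of_abs_lt_one d
        (by rw [abs_of_nonneg hρ0]; linarith)).comp (tendsto_add_atTop_nat 1)
    have hρpos : 0 < ρ := by linarith
    have h2 := h1.const_mul (C * q 0 / ρ)
    rw [mul_zero] at h2
    refine h2.congr fun j => ?_
    push_cast; rw [pow_succ]; field_simp
  have h1 : (1 : ℝ) ≤ 0 := by
    refine ge_of_tendsto' hlim fun j => (hlow j).trans ?_
    have := mul_le_mul_of_nonneg_left (hqexp j) (by positivity : 0 ≤ C * ((j : ℝ) + 1) ^ d)
    linarith
  linarith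

include hne hf hsymm in
/-- Vectors of normalized displacement with arbitrarily small mean displacement; they are
multiples of `f j` for a time `j` of slow decrement. -/
theorem exists_almost_harmonic [Infinite G] (h1S : (1 : G) ∈ S)
    (hgen : Subgroup.closure (S : Set G) = ⊤) (C d : ℕ)
    (hgrow : ∀ n, ((S : Set G) ^ n).ncard ≤ C * (n + 1) ^ d)
    (h2 : ∀ j, 1 ≤ (((S : Set G) ^ j).ncard : ℝ) * ‖f j‖ ^ 2)
    (h3 : ∀ j (X : Finset G), ∑ x ∈ X, inner ℝ (π x (f j)) (f j) ≤ 1) (δ : ℝ) (hδ : 0 < δ) :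
    ∃ w : H, ∑ p ∈ S ×ˢ S, ‖π (p.1 * p.2) w - w‖ ^ 2 = 2 * (S.card : ℝ) ^ 2 ∧
      ‖∑ p ∈ S ×ˢ S, (π (p.1 * p.2) w - w)‖ ^ 2 ≤ δ := by
  have hc : (0 : ℝ) < S.card := by exact_mod_cast hne.card_pos
  obtain ⟨j, hj, hj2⟩ := exists_slow_decrement (fun j => ‖f j‖ ^ 2)
    (walk_tendsto_zero π S f hne hsymm hf h1S hgen h3) C d
    (fun j => (h2 j).trans (mul_le_mul_of_nonneg_right (by exact_mod_cast hgrow j) (sq_nonneg _)))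
    (fun j => by
      have h := walk_sum_norm π S f hne hsymm hf j
      have h0 : 0 ≤ ‖∑ p ∈ S ×ˢ S, (π (p.1 * p.2) (f j) - f j)‖ ^ 2 := sq_nonneg _
      rw [h] at h0
      have := nonneg_of_mul_nonneg_right h0 (by positivity)
      linarith)
    (fun j => by
      have h := walk_sum_sq π S f hne hsymm hf j
      have h0 : (0 : ℝ) ≤ ∑ p ∈ S ×ˢ S, ‖π (p.1 * p.2) (f j) - f j‖ ^ 2 :=
        Finset.sum_nonneg fun _ _ => sq_nonneg _
      rw [h] at h0
      have := nonneg_of_mul_nonneg_right h0 (by positivity)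
      linarith)
    (δ / (S.card : ℝ) ^ 4) (by positivity)
  have hn := walk_sum_norm π S f hne hsymm hf j
  have hs := walk_sum_sq π S f hne hsymm hf j
  set u := ‖f j‖ ^ 2 - ‖f (j + 1)‖ ^ 2 with hu
  set a : ℝ := (√u)⁻¹ with ha
  have ha2 : a ^ 2 * u = 1 := by
    rw [ha, inv_pow, Real.sq_sqrt hj.le, inv_mul_cancel₀ hj.ne']
  have hsm : ∀ g, π g (a • f j) - a • f j = a • (π g (f j) - f j) := by
    intro g; rw [map_smul, smul_sub]
  have hnorm : ∀ v : H, ‖a • v‖ ^ 2 = a ^ 2 * ‖v‖ ^ 2 := by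
    intro v; rw [norm_smul, mul_pow, Real.norm_eq_abs, sq_abs]
  refine ⟨a • f j, ?_, ?_⟩
  · simp only [hsm, hnorm]
    rw [← Finset.mul_sum, hs]
    linear_combination (S.card : ℝ) ^ 2 * 2 * ha2
  · simp only [hsm]
    rw [← Finset.smul_sum, hnorm, hn]
    have h4 : a ^ 2 * ((S.card : ℝ) ^ 4 * (u - (‖f (j + 1)‖ ^ 2 - ‖f (j + 2)‖ ^ 2))) ≤
        a ^ 2 * ((S.card : ℝ) ^ 4 * (δ / (S.card : ℝ) ^ 4 * u)) := by
      gcongr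
    have h5 : a ^ 2 * ((S.card : ℝ) ^ 4 * (δ / (S.card : ℝ) ^ 4 * u)) = δ * (a ^ 2 * u) := by
      generalize a = b
      generalize u = v
      field_simp
    rw [h5, ha2, mul_one] at h4
    exact h4

end Walk

end

/-! ### Harmonic cocycles -/

section

open scoped Pointwise

/-- Limit of a bounded real sequence along an ultrafilter. -/
noncomputable def ulim (ω : Ultrafilter ℕ) (f : ℕ → ℝ) : ℝ := limUnder (ω : Filter ℕ) f

theorem tendsto_ulim (ω : Ultrafilter ℕ) {f : ℕ → ℝ} {C : ℝ} (h : ∀ n, |f n| ≤ C) :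
    Tendsto f ω (nhds (ulim ω f)) := by
  refine tendsto_nhds_limUnder ?_
  obtain ⟨x, _, hx⟩ := (isCompact_Icc (a := -C) (b := C)).ultrafilter_le_nhds (ω.map f) (by
    rw [le_principal_iff]
    exact mem_map.2 (Eventually.of_forall fun n => abs_le.1 (h n)))
  exact ⟨x, hx⟩

theorem ulim_eq (ω : Ultrafilter ℕ) {f : ℕ → ℝ} {a : ℝ} (h : Tendsto f ω (nhds a)) :
    ulim ω f = a := h.limUnder_eq

/-- The space of bounded sequences. -/
def bddSeq (H : Type*) [NormedAddCommGroup H] [InnerProductSpace ℝ H] :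
    Submodule ℝ (ℕ → H) where
  carrier := {u | ∃ C, ∀ n, ‖u n‖ ≤ C}
  zero_mem' := ⟨0, by simp⟩
  add_mem' := by
    rintro u v ⟨C, hC⟩ ⟨D, hD⟩
    exact ⟨C + D, fun n => (norm_add_le _ _).trans (add_le_add (hC n) (hD n))⟩
  smul_mem' := by
    rintro c u ⟨C, hC⟩
    refine ⟨|c| * C, fun n => ?_⟩
    rw [Pi.smul_apply, norm_smul, Real.norm_eq_abs]
    exact mul_le_mul_of_nonneg_left (hC n) (abs_nonneg c)

section
variable {H : Type*} [NormedAddCommGroup H] [InnerProductSpace ℝ H]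

theorem bddSeq_inner (u v : bddSeq H) : ∃ C, ∀ n, |inner ℝ (u.1 n) (v.1 n)| ≤ C := by
  obtain ⟨C, hC⟩ := u.2
  obtain ⟨D, hD⟩ := v.2
  refine ⟨C * D, fun n => (abs_real_inner_le_norm _ _).trans ?_⟩
  exact mul_le_mul (hC n) (hD n) (norm_nonneg _) ((norm_nonneg _).trans (hC n))

theorem bddSeq_tendsto (ω : Ultrafilter ℕ) (u v : bddSeq H) :
    Tendsto (fun n => inner ℝ (u.1 n) (v.1 n)) ω
      (nhds (ulim ω fun n => inner ℝ (u.1 n) (v.1 n))) := by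
  obtain ⟨C, hC⟩ := bddSeq_inner u v
  exact tendsto_ulim ω hC

/-- The semi-inner product `lim_ω ⟪u n, v n⟫` on bounded sequences. -/
noncomputable def bddSeqCore (ω : Ultrafilter ℕ) : PreInnerProductSpace.Core ℝ (bddSeq H) where
  inner u v := ulim ω fun n => inner ℝ (u.1 n) (v.1 n)
  conj_inner_symm u v := by
    simp only [conj_trivial]
    congr 1; ext n; exact real_inner_comm _ _
  re_inner_nonneg u := by
    simp only [RCLike.re_to_real]
    exact ge_of_tendsto' (bddSeq_tendsto ω u u) fun n => real_inner_self_nonneg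
  add_left u v w := by
    refine ulim_eq ω ?_
    refine ((bddSeq_tendsto ω u w).add (bddSeq_tendsto ω v w)).congr fun n => ?_
    simp [inner_add_left]
  smul_left u v r := by
    refine ulim_eq ω ?_
    refine ((bddSeq_tendsto ω u v).const_mul r).congr fun n => ?_
    simp [real_inner_smul_left]

end

universe u

/-- A nonzero harmonic cocycle for the two-step walk. It is the limit, along an ultrafilter, of
the coboundaries `x ↦ π x (w n) - w n` of almost harmonic vectors `w n`, which are bounded for
each `x` because the displacement on the generating products is normalized. -/
theorem exists_harmonic_cocycle {G : Type u} [Group G] [Infinite G] (S : Finset G)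
    (hsymm : ∀ s ∈ S, s⁻¹ ∈ S) (h1S : (1 : G) ∈ S) (hgen : Subgroup.closure (S : Set G) = ⊤)
    (C d : ℕ) (hgrow : ∀ n, ((S : Set G) ^ n).ncard ≤ C * (n + 1) ^ d) :
    ∃ (H : Type u) (_ : NormedAddCommGroup H) (_ : InnerProductSpace ℝ H) (_ : CompleteSpace H)
      (π : G →* (H ≃ₗᵢ[ℝ] H)) (b : G → H),
      (∀ x y, b (x * y) = b x + π x (b y)) ∧ (∑ p ∈ S ×ˢ S, b (p.1 * p.2) = 0) ∧
      ∃ p ∈ S ×ˢ S, b (p.1 * p.2) ≠ 0 := by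
  have hne : S.Nonempty := ⟨1, h1S⟩
  have hcard : (0 : ℝ) < S.card := by exact_mod_cast hne.card_pos
  obtain ⟨K, i1, i2, _, π, f, hf, h2, h3⟩ := exists_walk_vectors S hne
  have hw := fun n : ℕ => exists_almost_harmonic π S f hne hsymm hf h1S hgen C d hgrow h2 h3
    (1 / ((n : ℝ) + 1)) (by positivity)
  choose w hw1 hw2 using hw
  let b0 : G → ℕ → K := fun x n => π x (w n) - w n
  have hb0 : ∀ x y n, b0 (x * y) n = b0 x n + π x (b0 y n) := by
    intro x y n
    simp only [b0, rep_mul, map_sub]; abel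
  have hbS : ∀ p ∈ S ×ˢ S, ∀ n, ‖b0 (p.1 * p.2) n‖ ^ 2 ≤ 2 * (S.card : ℝ) ^ 2 := by
    intro p hp n
    rw [← hw1 n]
    exact Finset.single_le_sum (f := fun p : G × G => ‖π (p.1 * p.2) (w n) - w n‖ ^ 2)
      (fun _ _ => sq_nonneg _) hp
  have hbdd : ∀ x, b0 x ∈ bddSeq K := by
    intro x
    have hx : x ∈ Subgroup.closure (S : Set G) := by rw [hgen]; trivial
    induction hx using Subgroup.closure_induction with
    | mem s hs =>
      refine ⟨√(2 * (S.card : ℝ) ^ 2), fun n => ?_⟩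
      have := hbS (s, 1) (Finset.mk_mem_product hs h1S) n
      simp only [mul_one] at this
      exact Real.le_sqrt_of_sq_le this
    | one => exact ⟨0, fun n => by simp [b0]⟩
    | mul x y _ _ hx hy =>
      obtain ⟨A, hA⟩ := hx
      obtain ⟨B, hB⟩ := hy
      refine ⟨A + B, fun n => ?_⟩
      rw [hb0]
      refine (norm_add_le _ _).trans ?_
      rw [LinearIsometryEquiv.norm_map]
      exact add_le_add (hA n) (hB n)
    | inv x _ hx =>
      obtain ⟨A, hA⟩ := hx
      refine ⟨A, fun n => ?_⟩
      have e : b0 x⁻¹ n = - π x⁻¹ (b0 x n) := by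
        have := hb0 x⁻¹ x n
        simp only [inv_mul_cancel] at this
        have h1 : b0 1 n = 0 := by simp [b0]
        rw [h1] at this
        exact eq_neg_of_add_eq_zero_left this.symm
      rw [e, norm_neg, LinearIsometryEquiv.norm_map]
      exact hA n
  -- The limit representation lives on bounded sequences with the limiting semi-inner product.
  let ω : Ultrafilter ℕ := hyperfilter ℕ
  have hω : (ω : Filter ℕ) ≤ atTop := by
    rw [← Nat.cofinite_eq_atTop]; exact hyperfilter_le_cofinite
  let L : G →* Module.End ℝ (bddSeq K) :=
    { toFun := fun g =>
        { toFun := fun u => ⟨fun n => π g (u.1 n), by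
            obtain ⟨A, hA⟩ := u.2
            exact ⟨A, fun n => by rw [LinearIsometryEquiv.norm_map]; exact hA n⟩⟩
          map_add' := fun u v => by ext n; simp
          map_smul' := fun r u => by ext n; simp }
      map_one' := by ext u n; simp
      map_mul' := fun g h => by ext u n; simp }
  obtain ⟨H, j1, j2, j3, Q, j, hj, hjL⟩ := exists_hilbertize (bddSeqCore (H := K) ω) L (by
    intro g x y
    change ulim ω (fun n => inner ℝ (π g (x.1 n)) (π g (y.1 n))) = _
    simp only [LinearIsometryEquiv.inner_map_map]
    rfl)
  have hjn : ∀ u : bddSeq K, Tendsto (fun n => ‖u.1 n‖ ^ 2) ω (nhds (‖j u‖ ^ 2)) := by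
    intro u
    rw [← real_inner_self_eq_norm_sq, hj]
    refine (bddSeq_tendsto ω u u).congr fun n => ?_
    rw [real_inner_self_eq_norm_sq]
  let β : G → bddSeq K := fun x => ⟨b0 x, hbdd x⟩
  refine ⟨H, j1, j2, j3, Q, fun x => j (β x), ?_, ?_, ?_⟩
  · intro x y
    have e : β (x * y) = β x + L x (β y) := Subtype.ext (funext fun n => hb0 x y n)
    change j (β (x * y)) = j (β x) + Q x (j (β y))
    rw [← hjL, ← map_add, e]
  · rw [← map_sum]
    have h := hjn (∑ p ∈ S ×ˢ S, β (p.1 * p.2))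
    have h0 : Tendsto (fun n => ‖(∑ p ∈ S ×ˢ S, β (p.1 * p.2)).1 n‖ ^ 2) ω (nhds 0) := by
      refine squeeze_zero (fun _ => sq_nonneg _) (fun n => ?_)
        (tendsto_one_div_add_atTop_nhds_zero_nat.mono_left hω)
      refine le_trans (le_of_eq ?_) (hw2 n)
      congr 2
      simp only [Submodule.coe_sum, Finset.sum_apply]
      rfl
    have := tendsto_nhds_unique h h0
    simpa using this
  · by_contra hcon
    push Not at hcon
    have h : Tendsto (fun n => ∑ p ∈ S ×ˢ S, ‖(β (p.1 * p.2)).1 n‖ ^ 2) ω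
        (nhds (∑ p ∈ S ×ˢ S, ‖j (β (p.1 * p.2))‖ ^ 2)) :=
      tendsto_finsetSum _ fun p _ => hjn _
    have h0 : ∑ p ∈ S ×ˢ S, ‖j (β (p.1 * p.2))‖ ^ 2 = 0 :=
      Finset.sum_eq_zero fun p hp => by rw [hcon p hp]; simp
    rw [h0] at h
    have h1 : Tendsto (fun n => ∑ p ∈ S ×ˢ S, ‖(β (p.1 * p.2)).1 n‖ ^ 2) ω
        (nhds (2 * (S.card : ℝ) ^ 2)) :=
      tendsto_const_nhds.congr fun n => (hw1 n).symm
    have := tendsto_nhds_unique h h1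
    have : 0 < 2 * (S.card : ℝ) ^ 2 := by positivity
    linarith

end

/-! ### Entropy of random walks -/

section

open scoped Pointwise

section RW
variable {G ι : Type*} [Group G] [Fintype ι] (s : ι → G)

open Classical in
/-- The `n`-step distribution of the random walk on `G` whose steps are uniform among `s i`. -/
noncomputable def wp : ℕ → G → ℝ
  | 0 => fun x => if x = 1 then 1 else 0
  | n + 1 => fun x => (Fintype.card ι : ℝ)⁻¹ * ∑ i, wp n ((s i)⁻¹ * x)

theorem wp_succ (n : ℕ) (x : G) :
    wp s (n + 1) x = (Fintype.card ι : ℝ)⁻¹ * ∑ i, wp s n ((s i)⁻¹ * x) := rfl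

theorem wp_nonneg (n : ℕ) : ∀ x, 0 ≤ wp s n x := by
  induction n with
  | zero => intro x; simp only [wp]; split_ifs <;> norm_num
  | succ n ih => intro x; exact mul_nonneg (by positivity) (Finset.sum_nonneg fun i _ => ih _)

theorem wp_succ_right (n : ℕ) : ∀ x : G,
    wp s (n + 1) x = (Fintype.card ι : ℝ)⁻¹ * ∑ i, wp s n (x * (s i)⁻¹) := by
  induction n with
  | zero =>
    intro x
    simp only [wp]
    congr 1
    refine Finset.sum_congr rfl fun i _ => ?_
    have : ((s i)⁻¹ * x = 1) ↔ (x * (s i)⁻¹ = 1) := by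
      rw [inv_mul_eq_one, mul_inv_eq_one, eq_comm]
    by_cases h : (s i)⁻¹ * x = 1
    · rw [if_pos h, if_pos (this.1 h)]
    · rw [if_neg h, if_neg fun h' => h (this.2 h')]
  | succ n ih =>
    intro x
    rw [wp_succ]
    conv_lhs => simp only [ih]
    conv_rhs => simp only [wp_succ]
    simp only [← Finset.mul_sum]
    rw [Finset.sum_comm]
    simp only [mul_assoc]

theorem wp_support (n : ℕ) : Function.support (wp s n) ⊆ (Set.range s) ^ n := by
  induction n with
  | zero =>
    intro x hx
    simp only [wp, Function.mem_support] at hx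
    simpa using hx
  | succ n ih =>
    intro x hx
    rw [Function.mem_support, wp_succ] at hx
    have h2 : ∑ i, wp s n ((s i)⁻¹ * x) ≠ 0 := fun h => hx (by rw [h, mul_zero])
    obtain ⟨i, _, h3⟩ := Finset.exists_ne_zero_of_sum_ne_zero h2
    rw [pow_succ']
    exact ⟨s i, ⟨i, rfl⟩, (s i)⁻¹ * x, ih h3, by simp⟩

theorem range_pow_finite (n : ℕ) : ((Set.range s) ^ n).Finite := by
  induction n with
  | zero => simp
  | succ n ih => rw [pow_succ]; exact ih.mul (Set.finite_range s)

theorem wp_finite (n : ℕ) : (Function.support (wp s n)).Finite :=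
  (range_pow_finite s n).subset (wp_support s n)

theorem wp_shift_finite (n : ℕ) (g : G) : (Function.support fun x => wp s n (g * x)).Finite := by
  refine ((wp_finite s n).image fun x => g⁻¹ * x).subset fun x hx => ?_
  exact ⟨g * x, hx, by simp⟩

theorem summable_of_wp (n : ℕ) {k : G → ℝ} (hk : ∀ x, wp s n x = 0 → k x = 0) : Summable k :=
  summable_of_hasFiniteSupport ((wp_finite s n).subset fun x hx h => hx (hk x h))

theorem summable_of_wp_shift (n : ℕ) (g : G) {k : G → ℝ} (hk : ∀ x, wp s n (g * x) = 0 → k x = 0) :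
    Summable k :=
  summable_of_hasFiniteSupport ((wp_shift_finite s n g).subset fun x hx h => hx (hk x h))

/-- Expectation of `f` at time `n` of the random walk. -/
noncomputable def wE (n : ℕ) (f : G → ℝ) : ℝ := ∑' x, wp s n x * f x

theorem summable_wE (n : ℕ) (f : G → ℝ) : Summable fun x => wp s n x * f x :=
  summable_of_wp s n fun x hx => by rw [hx, zero_mul]

theorem wE_add (n : ℕ) (f g : G → ℝ) : wE s n (fun x => f x + g x) = wE s n f + wE s n g := by
  simp only [wE, mul_add]
  exact (summable_wE s n f).tsum_add (summable_wE s n g)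

theorem wE_sum {κ : Type*} (A : Finset κ) (n : ℕ) (f : κ → G → ℝ) :
    wE s n (fun x => ∑ a ∈ A, f a x) = ∑ a ∈ A, wE s n (f a) := by
  simp only [wE, Finset.mul_sum]
  exact Summable.tsum_finsetSum fun a _ => summable_wE s n (f a)

theorem wE_const_mul (n : ℕ) (c : ℝ) (f : G → ℝ) :
    wE s n (fun x => c * f x) = c * wE s n f := by
  simp only [wE]
  rw [← tsum_mul_left]
  exact tsum_congr fun x => by ring

theorem wE_mono (n : ℕ) {f g : G → ℝ} (h : ∀ x, f x ≤ g x) : wE s n f ≤ wE s n g :=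
  (summable_wE s n f).tsum_le_tsum (fun x => mul_le_mul_of_nonneg_left (h x) (wp_nonneg s n x))
    (summable_wE s n g)

theorem wE_succ_left (n : ℕ) (f : G → ℝ) :
    wE s (n + 1) f = (Fintype.card ι : ℝ)⁻¹ * ∑ i, wE s n (fun x => f (s i * x)) := by
  have h : ∀ i, wE s n (fun x => f (s i * x)) = ∑' x, wp s n ((s i)⁻¹ * x) * f x := by
    intro i
    rw [wE, ← (Equiv.mulLeft (s i)⁻¹).tsum_eq]
    simp
  simp only [h]
  rw [← Summable.tsum_finsetSum, ← tsum_mul_left, wE]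
  · refine tsum_congr fun x => ?_
    rw [wp_succ, ← Finset.sum_mul, mul_assoc]
  · intro i _
    exact summable_of_wp_shift s n _ fun x hx => by rw [hx, zero_mul]

theorem wE_succ_right (n : ℕ) (f : G → ℝ) :
    wE s (n + 1) f = (Fintype.card ι : ℝ)⁻¹ * ∑ i, wE s n (fun x => f (x * s i)) := by
  have h : ∀ i, wE s n (fun x => f (x * s i)) = ∑' x, wp s n (x * (s i)⁻¹) * f x := by
    intro i
    rw [wE, ← (Equiv.mulRight (s i)⁻¹).tsum_eq]
    simp
  simp only [h]
  rw [← Summable.tsum_finsetSum, ← tsum_mul_left, wE]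
  · refine tsum_congr fun x => ?_
    rw [wp_succ_right, ← Finset.sum_mul, mul_assoc]
  · intro i _
    refine (Equiv.mulRight (s i)).summable_iff.1 ?_
    refine (summable_wE s n fun x => f (x * s i)).congr fun x => ?_
    simp

theorem wE_zero (f : G → ℝ) : wE s 0 f = f 1 := by
  classical
  rw [wE, tsum_eq_single 1]
  · simp [wp]
  · intro x hx; simp [wp, hx]

variable [Nonempty ι]

theorem wE_const (n : ℕ) (c : ℝ) : wE s n (fun _ => c) = c := by
  have : (Fintype.card ι : ℝ) ≠ 0 := by exact_mod_cast Fintype.card_ne_zero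
  induction n with
  | zero => rw [wE_zero]
  | succ n ih => rw [wE_succ_left]; simp [ih, this]

theorem wp_tsum (n : ℕ) : ∑' x, wp s n x = 1 := by
  have := wE_const s n 1
  simpa [wE] using this

theorem summable_wp (n : ℕ) : Summable (wp s n) := summable_of_wp s n fun _ h => h

theorem wp_le_one (n : ℕ) (x : G) : wp s n x ≤ 1 := by
  rw [← wp_tsum s n]
  exact (summable_wp s n).le_tsum x fun _ _ => wp_nonneg s n _

/-- Entropy of the random walk at time `n`. -/
noncomputable def wH (n : ℕ) : ℝ := ∑' x, Real.negMulLog (wp s n x)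

theorem summable_wH (n : ℕ) : Summable fun x => Real.negMulLog (wp s n x) :=
  summable_of_wp s n fun x hx => by rw [hx, Real.negMulLog_zero]

theorem wH_nonneg (n : ℕ) : 0 ≤ wH s n :=
  tsum_nonneg fun x => Real.negMulLog_nonneg (wp_nonneg s n x) (wp_le_one s n x)

theorem wH_zero : wH s 0 = 0 := by
  rw [wH]
  have : ∀ x, Real.negMulLog (wp s 0 x) = 0 := by
    intro x; simp only [wp]; split_ifs <;> simp
  simp [this]

/-- Entropy is at most the logarithm of the size of the support, by concavity. -/
theorem wH_le_log (n : ℕ) : wH s n ≤ Real.log (((Set.range s) ^ n).ncard) := by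
  set V := (range_pow_finite s n).toFinset with hV
  have hVs : ∀ x, x ∉ V → wp s n x = 0 := by
    intro x hx
    by_contra h
    exact hx ((range_pow_finite s n).mem_toFinset.2 (wp_support s n h))
  have hcard : ((Set.range s) ^ n).ncard = V.card := Set.ncard_eq_toFinset_card _ _
  have h1 : wH s n = ∑ x ∈ V, Real.negMulLog (wp s n x) :=
    tsum_eq_sum fun x hx => by rw [hVs x hx, Real.negMulLog_zero]
  have h2 : ∑ x ∈ V, wp s n x = 1 := by
    rw [← wp_tsum s n]; exact (tsum_eq_sum fun x hx => hVs x hx).symm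
  have hVpos : (0 : ℝ) < V.card := by
    rcases V.eq_empty_or_nonempty with h | h
    · rw [h] at h2; simp at h2
    · exact_mod_cast h.card_pos
  have hJ := Real.concaveOn_negMulLog.le_map_sum (t := V) (w := fun _ => (V.card : ℝ)⁻¹)
    (p := fun x => wp s n x) (fun _ _ => by positivity) (by simp [hVpos.ne'])
    (fun x _ => wp_nonneg s n x)
  simp only [smul_eq_mul, ← Finset.mul_sum, h2, ← h1, mul_one] at hJ
  rw [Real.negMulLog, Real.log_inv] at hJ
  rw [hcard]
  have : (V.card : ℝ)⁻¹ * wH s n ≤ (V.card : ℝ)⁻¹ * Real.log V.card := by linarith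
  exact le_of_mul_le_mul_left this (by positivity)

/-- Pointwise form of the bound of squared Hellinger distance by relative entropy; the linear term
`a - b` disappears after summation over probability distributions. -/
theorem sq_sqrt_sub_le {a b : ℝ} (ha : 0 ≤ a) (hb : 0 < b) :
    a - b + (√a - √b) ^ 2 ≤ a * Real.log a - a * Real.log b := by
  rcases ha.eq_or_lt with rfl | ha
  · simp [Real.sq_sqrt hb.le]
  have hsa : 0 < √a := Real.sqrt_pos.2 ha
  have hsb : 0 < √b := Real.sqrt_pos.2 hb
  have h1 := Real.log_le_sub_one_of_pos (div_pos hsb hsa)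
  rw [Real.log_div hsb.ne' hsa.ne', Real.log_sqrt hb.le, Real.log_sqrt ha.le] at h1
  have h2 : a * (√b / √a) = √a * √b := by
    nth_rewrite 1 [← Real.mul_self_sqrt ha.le]; field_simp
  have h3 := mul_le_mul_of_nonneg_left h1 ha.le
  rw [mul_sub, mul_sub, h2] at h3
  have e1 := Real.sq_sqrt ha.le
  have e2 := Real.sq_sqrt hb.le
  nlinarith

/-- Strong concavity of entropy for the step from time `n` to time `n + 1`. -/
theorem wH_gap (n : ℕ) : (Fintype.card ι : ℝ)⁻¹ *
    ∑ i, ∑' x, (√(wp s n ((s i)⁻¹ * x)) - √(wp s (n + 1) x)) ^ 2 ≤ wH s (n + 1) - wH s n := by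
  have hN : (0 : ℝ) < Fintype.card ι := by exact_mod_cast Fintype.card_pos
  set N : ℝ := ((Fintype.card ι : ℕ) : ℝ) with hNdef
  have hzero : ∀ x, wp s (n + 1) x = 0 → ∀ i, wp s n ((s i)⁻¹ * x) = 0 := by
    intro x hx i
    rw [wp_succ] at hx
    have := (mul_eq_zero.1 hx).resolve_left (by positivity)
    exact (Finset.sum_eq_zero_iff_of_nonneg fun i _ => wp_nonneg s n _).1 this i (Finset.mem_univ _)
  have hshift : ∀ i, wH s n = ∑' x, Real.negMulLog (wp s n ((s i)⁻¹ * x)) := fun i =>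
    ((Equiv.mulLeft (s i)⁻¹).tsum_eq _).symm
  have hsum1 : ∀ i, Summable fun x => (√(wp s n ((s i)⁻¹ * x)) - √(wp s (n + 1) x)) ^ 2 := fun i =>
    summable_of_wp s (n + 1) fun x hx => by rw [hx, hzero x hx i]; simp
  have hsum2 : ∀ i, Summable fun x => Real.negMulLog (wp s n ((s i)⁻¹ * x)) := fun i =>
    summable_of_wp s (n + 1) fun x hx => by rw [hzero x hx i]; simp
  have hav : wH s n = ∑' x, N⁻¹ * ∑ i, Real.negMulLog (wp s n ((s i)⁻¹ * x)) := by
    rw [tsum_mul_left, Summable.tsum_finsetSum fun i _ => hsum2 i]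
    simp only [← hshift]
    simp [← hNdef, hN.ne']
  have hsum3 : Summable fun x => N⁻¹ * ∑ i, Real.negMulLog (wp s n ((s i)⁻¹ * x)) :=
    (summable_sum fun i _ => hsum2 i).mul_left _
  rw [hav, wH, ← (summable_wH s (n + 1)).tsum_sub hsum3,
    ← Summable.tsum_finsetSum fun i _ => hsum1 i, ← tsum_mul_left]
  refine Summable.tsum_le_tsum (fun x => ?_) ((summable_sum fun i _ => hsum1 i).mul_left _)
    ((summable_wH s (n + 1)).sub hsum3)
  rcases (wp_nonneg s (n + 1) x).eq_or_lt with h0 | hpos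
  · have h0' := h0.symm
    simp [h0', hzero x h0']
  · have hb : ∑ i, wp s n ((s i)⁻¹ * x) = N * wp s (n + 1) x := by
      rw [wp_succ, ← hNdef]; field_simp
    have h := Finset.sum_le_sum fun i (_ : i ∈ Finset.univ) =>
      sq_sqrt_sub_le (wp_nonneg s n ((s i)⁻¹ * x)) hpos
    rw [Finset.sum_add_distrib, Finset.sum_sub_distrib, Finset.sum_sub_distrib, ← Finset.sum_mul,
      hb, Finset.sum_const, Finset.card_univ, nsmul_eq_mul, ← hNdef, sub_self, zero_add] at h
    have h' := mul_le_mul_of_nonneg_left h (inv_nonneg.2 hN.le)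
    refine h'.trans (le_of_eq ?_)
    simp only [Real.negMulLog, neg_mul, Finset.sum_neg_distrib]
    field_simp
    ring

end RW

end

/-! ### Entropy increments -/

section

open scoped Pointwise

section RW
variable {G ι : Type*} [Group G] [Fintype ι] (s : ι → G)

/-- Squared Hellinger distance between the translate of the time-`n` distribution by `s i` and the
time-`n + 1` distribution. -/
noncomputable def wD (n : ℕ) (i : ι) : ℝ :=
  ∑' x, (√(wp s n ((s i)⁻¹ * x)) - √(wp s (n + 1) x)) ^ 2

theorem wp_shift_eq_zero (n : ℕ) (i : ι) (x : G) (hx : wp s (n + 1) x = 0) :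
    wp s n ((s i)⁻¹ * x) = 0 := by
  have hN : (0 : ℝ) < Fintype.card ι := by exact_mod_cast Fintype.card_pos_iff.2 ⟨i⟩
  rw [wp_succ] at hx
  have := (mul_eq_zero.1 hx).resolve_left (by positivity)
  exact (Finset.sum_eq_zero_iff_of_nonneg fun i _ => wp_nonneg s n _).1 this i (Finset.mem_univ _)

theorem wD_nonneg (n : ℕ) (i : ι) : 0 ≤ wD s n i := tsum_nonneg fun _ => sq_nonneg _

theorem wE_shift (n : ℕ) (i : ι) (f : G → ℝ) :
    wE s n (fun x => f (s i * x)) = ∑' x, wp s n ((s i)⁻¹ * x) * f x := by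
  rw [wE, ← (Equiv.mulLeft (s i)⁻¹).tsum_eq]
  simp

variable [Nonempty ι]

theorem wD_sum_le (n : ℕ) : ∑ i, wD s n i ≤ Fintype.card ι * (wH s (n + 1) - wH s n) := by
  have hN : (0 : ℝ) < Fintype.card ι := by exact_mod_cast Fintype.card_pos
  have := wH_gap s n
  rwa [inv_mul_le_iff₀ hN] at this

theorem wD_le (n : ℕ) (i : ι) : wD s n i ≤ Fintype.card ι * (wH s (n + 1) - wH s n) :=
  (Finset.single_le_sum (fun j _ => wD_nonneg s n j) (Finset.mem_univ i)).trans (wD_sum_le s n)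

/-- Expectations of bounded functions at times `n` and `n + 1`, the first after a shift by `s i`,
differ by a quantity governed by the Hellinger distance; `ε` comes from the inequality between
arithmetic and geometric means. -/
theorem abs_wE_shift_sub_le (n : ℕ) (i : ι) {f : G → ℝ} {c : ℝ} (hf : ∀ x, |f x| ≤ c) {ε : ℝ}
    (hε : 0 < ε) : |wE s n (fun x => f (s i * x)) - wE s (n + 1) f| ≤
      c * (wD s n i / (2 * ε) + 2 * ε) := by
  have hc : 0 ≤ c := (abs_nonneg _).trans (hf 1)
  have hz := wp_shift_eq_zero s n i
  have hs : ∀ k : G → ℝ, (∀ x, wp s (n + 1) x = 0 → k x = 0) → Summable k := fun k hk =>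
    summable_of_wp s (n + 1) hk
  have s1 : Summable fun x => wp s n ((s i)⁻¹ * x) := hs _ hz
  have s2 : Summable fun x => wp s (n + 1) x := hs _ fun _ h => h
  have s3 : Summable fun x => (√(wp s n ((s i)⁻¹ * x)) - √(wp s (n + 1) x)) ^ 2 :=
    hs _ fun x hx => by rw [hx, hz x hx]; simp
  have s4 : Summable fun x => c * ((√(wp s n ((s i)⁻¹ * x)) - √(wp s (n + 1) x)) ^ 2 / (2 * ε) +
      ε * (wp s n ((s i)⁻¹ * x) + wp s (n + 1) x)) :=
    ((s3.div_const _).add ((s1.add s2).mul_left _)).mul_left _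
  have e1 : ∑' x, wp s n ((s i)⁻¹ * x) = 1 := by
    rw [← wp_tsum s n]; exact (Equiv.mulLeft (s i)⁻¹).tsum_eq _
  have e2 : c * (wD s n i / (2 * ε) + 2 * ε) =
      ∑' x, c * ((√(wp s n ((s i)⁻¹ * x)) - √(wp s (n + 1) x)) ^ 2 / (2 * ε) +
      ε * (wp s n ((s i)⁻¹ * x) + wp s (n + 1) x)) := by
    rw [tsum_mul_left, (s3.div_const _).tsum_add ((s1.add s2).mul_left _), tsum_div_const,
      tsum_mul_left, s1.tsum_add s2, e1, wp_tsum, wD]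
    ring
  rw [wE_shift, wE, ← Summable.tsum_sub (hs _ fun x hx => by rw [hz x hx, zero_mul])
    (summable_wE s _ _), e2]
  have key : ∀ x, |wp s n ((s i)⁻¹ * x) * f x - wp s (n + 1) x * f x| ≤
      c * ((√(wp s n ((s i)⁻¹ * x)) - √(wp s (n + 1) x)) ^ 2 / (2 * ε) +
      ε * (wp s n ((s i)⁻¹ * x) + wp s (n + 1) x)) := by
    intro x
    have ha := wp_nonneg s n ((s i)⁻¹ * x)
    have hb := wp_nonneg s (n + 1) x
    set a := wp s n ((s i)⁻¹ * x)
    set b := wp s (n + 1) x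
    rw [← sub_mul, abs_mul, mul_comm]
    refine mul_le_mul (hf x) ?_ (abs_nonneg _) hc
    have h1 : a - b = (√a - √b) * (√a + √b) := by
      have e1 := Real.sq_sqrt ha
      have e2 := Real.sq_sqrt hb
      linear_combination e2 - e1
    have h2 : (√a + √b) ^ 2 ≤ 2 * (a + b) := by
      have e1 := Real.sq_sqrt ha
      have e2 := Real.sq_sqrt hb
      nlinarith [sq_nonneg (√a - √b)]
    have h3 : |√a - √b| * |√a + √b| ≤ |√a - √b| ^ 2 / (2 * ε) + ε * |√a + √b| ^ 2 / 2 := by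
      rw [div_add_div _ _ (by positivity) (by norm_num), le_div_iff₀ (by positivity)]
      nlinarith [sq_nonneg (|√a - √b| - ε * |√a + √b|)]
    rw [h1, abs_mul]
    rw [sq_abs, sq_abs] at h3
    have h4 : ε * (√a + √b) ^ 2 / 2 ≤ ε * (a + b) := by
      have := mul_le_mul_of_nonneg_left h2 hε.le
      linarith
    linarith
  have hsum : Summable fun x => wp s n ((s i)⁻¹ * x) * f x - wp s (n + 1) x * f x :=
    hs _ fun x hx => by rw [hx, hz x hx]; simp
  have hnorm := norm_tsum_le_tsum_norm hsum.norm
  simp only [Real.norm_eq_abs] at hnorm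
  exact hnorm.trans (Summable.tsum_le_tsum key hsum.abs s4)

/-- The analogous bound for unbounded functions, in terms of the second moment. -/
theorem sq_wE_shift_sub_le (n : ℕ) (i : ι) (F : G → ℝ) :
    (wE s n (fun x => F (s i * x)) - wE s (n + 1) F) ^ 2 ≤
      wD s n i * (2 * (Fintype.card ι + 1) * wE s (n + 1) fun x => F x ^ 2) := by
  have hN : (0 : ℝ) < Fintype.card ι := by exact_mod_cast Fintype.card_pos
  have hz := wp_shift_eq_zero s n i
  set V := (wp_finite s (n + 1)).toFinset with hV
  have hVz : ∀ x, x ∉ V → wp s (n + 1) x = 0 := by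
    intro x hx
    by_contra h
    exact hx ((wp_finite s (n + 1)).mem_toFinset.2 h)
  have e1 : wE s n (fun x => F (s i * x)) = ∑ x ∈ V, wp s n ((s i)⁻¹ * x) * F x := by
    rw [wE_shift]
    exact tsum_eq_sum fun x hx => by rw [hz x (hVz x hx), zero_mul]
  have e2 : wE s (n + 1) F = ∑ x ∈ V, wp s (n + 1) x * F x :=
    tsum_eq_sum fun x hx => by rw [hVz x hx, zero_mul]
  have e3 : wE s n (fun x => F (s i * x) ^ 2) = ∑ x ∈ V, wp s n ((s i)⁻¹ * x) * F x ^ 2 := by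
    rw [wE_shift s n i fun x => F x ^ 2]
    exact tsum_eq_sum fun x hx => by rw [hz x (hVz x hx), zero_mul]
  have e4 : wE s (n + 1) (fun x => F x ^ 2) = ∑ x ∈ V, wp s (n + 1) x * F x ^ 2 :=
    tsum_eq_sum fun x hx => by rw [hVz x hx, zero_mul]
  have e5 : wD s n i = ∑ x ∈ V, (√(wp s n ((s i)⁻¹ * x)) - √(wp s (n + 1) x)) ^ 2 :=
    tsum_eq_sum fun x hx => by rw [hVz x hx, hz x (hVz x hx)]; simp
  have h1 : wE s n (fun x => F (s i * x) ^ 2) ≤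
      Fintype.card ι * wE s (n + 1) (fun x => F x ^ 2) := by
    rw [wE_succ_left, mul_inv_cancel_left₀ hN.ne']
    refine Finset.single_le_sum (f := fun i => wE s n fun x => F (s i * x) ^ 2)
      (fun j _ => ?_) (Finset.mem_univ i)
    exact tsum_nonneg fun x => mul_nonneg (wp_nonneg s n x) (sq_nonneg _)
  have h2 : wE s n (fun x => F (s i * x)) - wE s (n + 1) F =
      ∑ x ∈ V, (√(wp s n ((s i)⁻¹ * x)) - √(wp s (n + 1) x)) *
        ((√(wp s n ((s i)⁻¹ * x)) + √(wp s (n + 1) x)) * F x) := by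
    rw [e1, e2, ← Finset.sum_sub_distrib]
    refine Finset.sum_congr rfl fun x _ => ?_
    have e1 := Real.sq_sqrt (wp_nonneg s n ((s i)⁻¹ * x))
    have e2 := Real.sq_sqrt (wp_nonneg s (n + 1) x)
    linear_combination (e2 - e1) * F x
  rw [h2]
  refine (Finset.sum_mul_sq_le_sq_mul_sq _ _ _).trans ?_
  rw [← e5]
  refine mul_le_mul_of_nonneg_left ?_ (wD_nonneg s n i)
  calc _ ≤ ∑ x ∈ V, (2 * (wp s n ((s i)⁻¹ * x) * F x ^ 2) + 2 * (wp s (n + 1) x * F x ^ 2)) := by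
        refine Finset.sum_le_sum fun x _ => ?_
        have e1 := Real.sq_sqrt (wp_nonneg s n ((s i)⁻¹ * x))
        have e2 := Real.sq_sqrt (wp_nonneg s (n + 1) x)
        rw [mul_pow]
        have : (√(wp s n ((s i)⁻¹ * x)) + √(wp s (n + 1) x)) ^ 2 ≤
            2 * wp s n ((s i)⁻¹ * x) + 2 * wp s (n + 1) x := by
          nlinarith [sq_nonneg (√(wp s n ((s i)⁻¹ * x)) - √(wp s (n + 1) x))]
        nlinarith [sq_nonneg (F x)]
    _ = 2 * wE s n (fun x => F (s i * x) ^ 2) + 2 * wE s (n + 1) (fun x => F x ^ 2) := by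
        rw [Finset.sum_add_distrib, ← Finset.mul_sum, ← Finset.mul_sum, e3, e4]
    _ ≤ _ := by linarith

variable {C d : ℕ} (hgrow : ∀ n, ((Set.range s) ^ n).ncard ≤ C * (n + 1) ^ d)

include hgrow in
theorem wH_le (n : ℕ) : wH s n ≤ Real.log C + d * Real.log (n + 1) := by
  have hpos : 0 < ((Set.range s) ^ n).ncard := by
    rw [Set.ncard_pos (range_pow_finite s n)]
    exact (Set.range_nonempty s).pow
  have hC : (C : ℝ) ≠ 0 := by
    rintro h
    have : C = 0 := by exact_mod_cast h
    have := hgrow n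
    subst C; omega
  refine (wH_le_log s n).trans ?_
  rw [← Real.log_pow, ← Real.log_mul hC (by positivity)]
  refine Real.log_le_log (by exact_mod_cast hpos) ?_
  exact_mod_cast hgrow n

include hgrow in
/-- Entropy grows at most like `d log n`, so its increments are infinitely often at most `(d + 1)
/ (n + 1)`. -/
theorem frequently_gap : ∃ᶠ n : ℕ in atTop,
    wH s (n + 1) - wH s n ≤ ((d : ℝ) + 1) / (n + 1) := by
  intro hcon
  obtain ⟨N, hN⟩ := eventually_atTop.1 hcon
  have hlb : ∀ k : ℕ, ((d : ℝ) + 1) * (Real.log (N + k + 1) - Real.log (N + 1)) ≤ wH s (N + k) := by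
    intro k
    induction k with
    | zero => simpa using wH_nonneg s N
    | succ k ih =>
      have h1 := hN (N + k) (by omega)
      push Not at h1
      have h2 : Real.log ((N : ℝ) + k + 1 + 1) - Real.log ((N : ℝ) + k + 1) ≤
          1 / ((N : ℝ) + k + 1) := by
        rw [← Real.log_div (by positivity) (by positivity)]
        refine (Real.log_le_sub_one_of_pos (by positivity)).trans (le_of_eq ?_)
        field_simp; ring
      have h3 := mul_le_mul_of_nonneg_left h2 (by positivity : (0 : ℝ) ≤ (d : ℝ) + 1)
      rw [mul_one_div] at h3
      push_cast at h1 ⊢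
      rw [show (N : ℝ) + (k + 1) + 1 = (N : ℝ) + k + 1 + 1 by ring]
      rw [← add_assoc]
      nlinarith
  have hb : ∀ k : ℕ, Real.log ((N : ℝ) + k + 1) ≤ Real.log C + (d + 1) * Real.log (N + 1) := by
    intro k
    have h1 := hlb k
    have h2 := wH_le s hgrow (N + k)
    push_cast at h2
    nlinarith
  have hlim : Tendsto (fun k : ℕ => Real.log ((N : ℝ) + k + 1)) atTop atTop := by
    refine Real.tendsto_log_atTop.comp ?_
    refine tendsto_atTop_add_const_right _ _ ?_
    exact tendsto_atTop_add_const_left _ _ tendsto_natCast_atTop_atTop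
  obtain ⟨k, hk⟩ := (hlim.eventually_gt_atTop (Real.log C + (d + 1) * Real.log (N + 1))).exists
  exact absurd (hb k) (not_le.2 hk)

include hgrow in
theorem wH_div_tendsto : Tendsto (fun n : ℕ => wH s (n + 1) / ((n : ℝ) + 1)) atTop (nhds 0) := by
  have h1 : Tendsto (fun x : ℝ => Real.log x / x) atTop (nhds 0) := by
    have := Real.isLittleO_log_id_atTop.tendsto_div_nhds_zero
    simpa using this
  have h2 : Tendsto (fun n : ℕ => (n : ℝ) + 1 + 1) atTop atTop :=
    tendsto_atTop_add_const_right _ _ (tendsto_atTop_add_const_right _ _ tendsto_natCast_atTop_atTop)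
  have h3 := h1.comp h2
  have h4 : Tendsto (fun n : ℕ => 1 / ((n : ℝ) + 1)) atTop (nhds 0) :=
    tendsto_one_div_add_atTop_nhds_zero_nat
  have h5 := (h4.const_mul (Real.log C)).add (h3.const_mul (2 * (d : ℝ)))
  simp only [mul_zero, add_zero] at h5
  refine squeeze_zero (fun n => div_nonneg (wH_nonneg s _) (by positivity)) (fun n => ?_) h5
  have hle := wH_le s hgrow (n + 1)
  push_cast at hle
  simp only [Function.comp]
  have hlog : 0 ≤ Real.log ((n : ℝ) + 1 + 1) := Real.log_nonneg (by linarith [(Nat.cast_nonneg n : (0:ℝ) ≤ n)])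
  have hfrac : Real.log ((n : ℝ) + 1 + 1) / ((n : ℝ) + 1) ≤
      2 * (Real.log ((n : ℝ) + 1 + 1) / ((n : ℝ) + 1 + 1)) := by
    rw [← mul_div_assoc, div_le_div_iff₀ (by positivity) (by positivity)]
    nlinarith [(Nat.cast_nonneg n : (0:ℝ) ≤ n), mul_nonneg hlog (Nat.cast_nonneg n : (0:ℝ) ≤ n)]
  calc wH s (n + 1) / ((n : ℝ) + 1) ≤
        (Real.log C + d * Real.log ((n : ℝ) + 1 + 1)) / ((n : ℝ) + 1) := by gcongr
    _ = Real.log C * (1 / ((n : ℝ) + 1)) + d * (Real.log ((n : ℝ) + 1 + 1) / ((n : ℝ) + 1)) := by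
        ring
    _ ≤ _ := by
        have := mul_le_mul_of_nonneg_left hfrac (Nat.cast_nonneg d : (0:ℝ) ≤ d)
        linarith

end RW

end

/-! ### The covariance form of a harmonic cocycle -/

section

open scoped Pointwise

section Form
variable {G ι H : Type*} [Group G] [Fintype ι] [Nonempty ι] [NormedAddCommGroup H]
  [InnerProductSpace ℝ H] (s : ι → G) (π : G →* (H ≃ₗᵢ[ℝ] H)) (b : G → H)
  (hb : ∀ x y, b (x * y) = b x + π x (b y)) (hbs : ∑ i, b (s i) = 0)

/-- The carré du champ of the harmonic function `x ↦ ⟪b x, v⟫`. -/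
noncomputable def wΓ (v : H) (x : G) : ℝ :=
  (Fintype.card ι : ℝ)⁻¹ * ∑ i, (inner ℝ (π x (b (s i))) v) ^ 2

/-- Mean squared increment `avg ‖b (s i)‖²`. -/
noncomputable def wc : ℝ := (Fintype.card ι : ℝ)⁻¹ * ∑ i, ‖b (s i)‖ ^ 2

/-- Normalized second moment of `x ↦ ⟪b x, v⟫` at time `n + 1`. -/
noncomputable def wT (n : ℕ) (v : H) : ℝ :=
  wE s (n + 1) (fun x => (inner ℝ (b x) v) ^ 2) / ((n : ℝ) + 1)

theorem wc_nonneg : 0 ≤ wc s b :=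
  mul_nonneg (by positivity) (Finset.sum_nonneg fun _ _ => sq_nonneg _)

theorem wΓ_nonneg (v : H) (x : G) : 0 ≤ wΓ s π b v x :=
  mul_nonneg (by positivity) (Finset.sum_nonneg fun _ _ => sq_nonneg _)

theorem wΓ_sum_le {κ : Type*} [Fintype κ] (e : κ → H) (he : Orthonormal ℝ e) (x : G) :
    ∑ k, wΓ s π b (e k) x ≤ wc s b := by
  simp only [wΓ]
  rw [← Finset.mul_sum, Finset.sum_comm, wc]
  refine mul_le_mul_of_nonneg_left (Finset.sum_le_sum fun i _ => ?_) (by positivity)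
  have := he.sum_inner_products_le (x := π x (b (s i))) (s := Finset.univ)
  rw [LinearIsometryEquiv.norm_map] at this
  refine le_trans (le_of_eq ?_) this
  refine Finset.sum_congr rfl fun k _ => ?_
  rw [real_inner_comm, Real.norm_eq_abs, sq_abs]

theorem wΓ_le (v : H) (x : G) : wΓ s π b v x ≤ wc s b * ‖v‖ ^ 2 := by
  rw [wΓ, wc, mul_assoc, Finset.sum_mul]
  refine mul_le_mul_of_nonneg_left (Finset.sum_le_sum fun i _ => ?_) (by positivity)
  rw [← mul_pow, ← sq_abs]
  refine pow_le_pow_left₀ (abs_nonneg _) ?_ 2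
  refine (abs_real_inner_le_norm _ _).trans ?_
  rw [LinearIsometryEquiv.norm_map]

include hb in
theorem cocycle_one : b 1 = 0 := by
  have := hb 1 1
  simpa using this

include hb hbs in
theorem wE_harm (v : H) (n : ℕ) : wE s n (fun x => inner ℝ (b x) v) = 0 := by
  have hN : (Fintype.card ι : ℝ) ≠ 0 := by exact_mod_cast Fintype.card_ne_zero
  induction n with
  | zero => rw [wE_zero, cocycle_one π b hb, inner_zero_left]
  | succ n ih =>
    rw [wE_succ_right]
    simp only [hb, inner_add_left, wE_add, ih, zero_add]
    rw [← wE_sum]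
    have : ∀ x, ∑ i, inner ℝ (π x (b (s i))) v = 0 := by
      intro x
      rw [← sum_inner, ← map_sum, hbs, map_zero, inner_zero_left]
    simp [this, wE_const]

include hb hbs in
/-- Orthogonality of martingale increments for `x ↦ ⟪b x, v⟫`. -/
theorem wE_sq_succ (v : H) (n : ℕ) : wE s (n + 1) (fun x => (inner ℝ (b x) v) ^ 2) =
    wE s n (fun x => (inner ℝ (b x) v) ^ 2) + wE s n (wΓ s π b v) := by
  have hN : (Fintype.card ι : ℝ) ≠ 0 := by exact_mod_cast Fintype.card_ne_zero
  rw [wE_succ_right, ← wE_sum, ← wE_const_mul, ← wE_add]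
  congr 1
  ext x
  have h0 : ∑ i, inner ℝ (π x (b (s i))) v = 0 := by
    rw [← sum_inner, ← map_sum, hbs, map_zero, inner_zero_left]
  have : ∑ i, inner ℝ (b (x * s i)) v ^ 2 =
      Fintype.card ι * inner ℝ (b x) v ^ 2 + ∑ i, inner ℝ (π x (b (s i))) v ^ 2 := by
    simp only [hb, inner_add_left, add_sq, Finset.sum_add_distrib, mul_assoc]
    rw [← Finset.mul_sum, ← Finset.mul_sum, h0]
    simp
  rw [this, wΓ]
  field_simp

include hb hbs in
theorem wE_sq_eq (v : H) (n : ℕ) : wE s n (fun x => (inner ℝ (b x) v) ^ 2) =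
    ∑ k ∈ Finset.range n, wE s k (wΓ s π b v) := by
  induction n with
  | zero => rw [wE_zero, cocycle_one π b hb]; simp
  | succ n ih => rw [wE_sq_succ s π b hb hbs, ih, Finset.sum_range_succ]

theorem wT_nonneg (n : ℕ) (v : H) : 0 ≤ wT s b n v :=
  div_nonneg (tsum_nonneg fun x => mul_nonneg (wp_nonneg _ _ _) (sq_nonneg _)) (by positivity)

include hb hbs in
theorem wT_sum_le {κ : Type*} [Fintype κ] (e : κ → H) (he : Orthonormal ℝ e) (n : ℕ) :
    ∑ k, wT s b n (e k) ≤ wc s b := by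
  simp only [wT]
  rw [← Finset.sum_div, div_le_iff₀ (by positivity)]
  simp only [wE_sq_eq s π b hb hbs]
  rw [Finset.sum_comm]
  have : ∀ j, ∑ k, wE s j (wΓ s π b (e k)) ≤ wc s b := by
    intro j
    rw [← wE_sum, ← wE_const s j (wc s b)]
    exact wE_mono s j fun x => wΓ_sum_le s π b e he x
  refine (Finset.sum_le_sum fun j _ => this j).trans (le_of_eq ?_)
  simp; ring

include hb hbs in
theorem wT_le (n : ℕ) (v : H) : wT s b n v ≤ wc s b * ‖v‖ ^ 2 := by
  rw [wT, div_le_iff₀ (by positivity), wE_sq_eq s π b hb hbs]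
  have : ∀ j, wE s j (wΓ s π b v) ≤ wc s b * ‖v‖ ^ 2 := by
    intro j
    rw [← wE_const s j (wc s b * ‖v‖ ^ 2)]
    exact wE_mono s j fun x => wΓ_le s π b v x
  refine (Finset.sum_le_sum fun j _ => this j).trans (le_of_eq ?_)
  simp; ring

theorem wT_smul (n : ℕ) (r : ℝ) (v : H) : wT s b n (r • v) = r ^ 2 * wT s b n v := by
  simp only [wT, real_inner_smul_right, mul_pow, wE_const_mul, mul_div_assoc]

theorem wT_parallelogram (n : ℕ) (v w : H) :
    wT s b n (v + w) + wT s b n (v - w) = 2 * wT s b n v + 2 * wT s b n w := by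
  simp only [wT]
  rw [← add_div, ← wE_add, ← mul_div_assoc, ← mul_div_assoc, ← add_div, ← wE_const_mul,
    ← wE_const_mul, ← wE_add]
  congr 2
  ext x
  rw [inner_add_right, inner_sub_right]; ring

theorem wΓ_rep (g : G) (v : H) (x : G) : wΓ s π b (π g⁻¹ v) x = wΓ s π b v (g * x) := by
  simp only [wΓ]
  congr 1
  refine Finset.sum_congr rfl fun i _ => ?_
  rw [rep_mul, rep_inner π g]

include hb hbs in
/-- Asymptotic invariance of the normalized second moment: up to a boundary term it is the average
over time of expectations of the bounded function `wΓ`, and these are nearly shift invariant on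
average since the entropy is `o(n)`. -/
theorem wT_shift_sub_le (n : ℕ) (i : ι) (v : H) {ε : ℝ} (hε : 0 < ε) :
    |wT s b n (π (s i)⁻¹ v) - wT s b n v| ≤ (wc s b * ‖v‖ ^ 2) *
      (Fintype.card ι * (wH s (n + 1) / ((n : ℝ) + 1)) / (2 * ε) + 2 * ε +
        2 * (1 / ((n : ℝ) + 1))) := by
  set c := wc s b * ‖v‖ ^ 2 with hc
  have hc0 : 0 ≤ c := mul_nonneg (wc_nonneg s b) (sq_nonneg _)
  have habs : ∀ x, |wΓ s π b v x| ≤ c := fun x => by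
    rw [abs_of_nonneg (wΓ_nonneg s π b v x)]; exact wΓ_le s π b v x
  have hE : ∀ k, |wE s k (wΓ s π b v)| ≤ c := by
    intro k
    have h0 : 0 ≤ wE s k (wΓ s π b v) :=
      tsum_nonneg fun x => mul_nonneg (wp_nonneg _ _ _) (wΓ_nonneg s π b v x)
    rw [abs_of_nonneg h0, ← wE_const s k c]
    exact wE_mono s k fun x => wΓ_le s π b v x
  have hn : (0 : ℝ) < (n : ℝ) + 1 := by positivity
  have hΓ : wΓ s π b (π (s i)⁻¹ v) = fun x => wΓ s π b v (s i * x) :=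
    funext fun x => wΓ_rep s π b (s i) v x
  have h1 : wT s b n (π (s i)⁻¹ v) - wT s b n v =
      (∑ k ∈ Finset.range (n + 1), (wE s k (fun x => wΓ s π b v (s i * x)) -
        wE s (k + 1) (wΓ s π b v)) +
        (wE s (n + 1) (wΓ s π b v) - wE s 0 (wΓ s π b v))) / ((n : ℝ) + 1) := by
    rw [wT, wT, wE_sq_eq s π b hb hbs, wE_sq_eq s π b hb hbs, ← sub_div, hΓ,
      ← Finset.sum_range_sub (fun k => wE s k (wΓ s π b v)), ← Finset.sum_add_distrib,
      ← Finset.sum_sub_distrib]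
    congr 1
    refine Finset.sum_congr rfl fun k _ => ?_
    ring
  have h2 : |∑ k ∈ Finset.range (n + 1), (wE s k (fun x => wΓ s π b v (s i * x)) -
        wE s (k + 1) (wΓ s π b v))| ≤
      c * (Fintype.card ι * wH s (n + 1) / (2 * ε) + 2 * ε * (n + 1)) := by
    refine (Finset.abs_sum_le_sum_abs _ _).trans ?_
    calc _ ≤ ∑ k ∈ Finset.range (n + 1),
          c * (Fintype.card ι * (wH s (k + 1) - wH s k) / (2 * ε) + 2 * ε) := by
          refine Finset.sum_le_sum fun k _ => ?_
          refine (abs_wE_shift_sub_le s k i habs hε).trans ?_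
          have := wD_le s k i
          gcongr
      _ = _ := by
          rw [← Finset.mul_sum, Finset.sum_add_distrib, ← Finset.sum_div, ← Finset.mul_sum,
            Finset.sum_range_sub (wH s), wH_zero]
          simp; left; ring
  have h3 : |wE s (n + 1) (wΓ s π b v) - wE s 0 (wΓ s π b v)| ≤ c * 2 := by
    refine (abs_sub _ _).trans ?_
    linarith [hE (n + 1), hE 0]
  rw [h1, abs_div, abs_of_pos hn, div_le_iff₀ hn]
  refine (abs_add_le _ _).trans ((add_le_add h2 h3).trans (le_of_eq ?_))
  field_simp

include hb hbs in
/-- At times of small entropy increment the second moment controls the cocycle: shifting the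
harmonic function `x ↦ ⟪b x, v⟫` by `s i` on the left changes its expectation by `⟪b (s i), v⟫`.
-/
theorem sq_inner_le (n : ℕ) (i : ι) (v : H) {K : ℝ}
    (hgap : wH s (n + 1) - wH s n ≤ K / ((n : ℝ) + 1)) :
    (inner ℝ (b (s i)) v) ^ 2 ≤
      (Fintype.card ι * K * (2 * (Fintype.card ι + 1))) * wT s b n v := by
  have h := sq_wE_shift_sub_le s n i fun x => inner ℝ (b x) v
  have h1 : wE s n (fun x => inner ℝ (b (s i * x)) v) = inner ℝ (b (s i)) v := by
    have : ∀ x, inner ℝ (b (s i * x)) v = inner ℝ (b (s i)) v + inner ℝ (b x) (π (s i)⁻¹ v) := by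
      intro x
      rw [hb, inner_add_left, rep_inner]
    simp only [this]
    rw [wE_add, wE_const, wE_harm s π b hb hbs, add_zero]
  rw [h1, wE_harm s π b hb hbs, sub_zero] at h
  refine h.trans ?_
  have hn : (0 : ℝ) < (n : ℝ) + 1 := by positivity
  have h2 : wE s (n + 1) (fun x => (inner ℝ (b x) v) ^ 2) = ((n : ℝ) + 1) * wT s b n v := by
    rw [wT]; field_simp
  rw [h2]
  have h3 : wD s n i ≤ Fintype.card ι * (K / ((n : ℝ) + 1)) :=
    (wD_le s n i).trans (mul_le_mul_of_nonneg_left hgap (by positivity))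
  have h4 : 0 ≤ 2 * ((Fintype.card ι : ℝ) + 1) * (((n : ℝ) + 1) * wT s b n v) :=
    mul_nonneg (by positivity) (mul_nonneg hn.le (wT_nonneg s b n v))
  refine (mul_le_mul_of_nonneg_right h3 h4).trans (le_of_eq ?_)
  field_simp

variable {C d : ℕ} (hgrow : ∀ n, ((Set.range s) ^ n).ncard ≤ C * (n + 1) ^ d)
  (hgen : Subgroup.closure (Set.range s) = ⊤)

include hb hbs hgrow hgen in
/-- The asymptotic covariance form of a harmonic cocycle on a group of polynomial growth: an
invariant quadratic form of trace class that dominates the cocycle. -/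
theorem exists_invariant_form : ∃ (T : H → ℝ) (c D : ℝ), (∀ v, 0 ≤ T v) ∧
    (∀ v, T v ≤ c * ‖v‖ ^ 2) ∧ (∀ (r : ℝ) v, T (r • v) = r ^ 2 * T v) ∧
    (∀ v w, T (v + w) + T (v - w) = 2 * T v + 2 * T w) ∧ (∀ g v, T (π g v) = T v) ∧
    (∀ (n : ℕ) (e : Fin n → H), Orthonormal ℝ e → ∑ k, T (e k) ≤ c) ∧
    (∀ i v, (inner ℝ (b (s i)) v) ^ 2 ≤ D * T v) ∧
    ∀ v, T v ≠ 0 → ∃ x, inner ℝ (b x) v ≠ 0 := by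
  have hfreq := frequently_gap s hgrow
  have hne : NeBot (atTop ⊓ 𝓟 {n : ℕ | wH s (n + 1) - wH s n ≤ ((d : ℝ) + 1) / (n + 1)}) :=
    frequently_mem_iff_neBot.1 hfreq
  -- The limit is taken along an ultrafilter concentrated on times with small entropy increment,
  -- which makes the form dominate the cocycle.
  obtain ⟨ω, hω⟩ := Ultrafilter.exists_le (atTop ⊓ 𝓟 {n : ℕ | wH s (n + 1) - wH s n ≤ ((d : ℝ) + 1) / (n + 1)})
  have hω1 : (ω : Filter ℕ) ≤ atTop := hω.trans inf_le_left
  have hω2 : ∀ᶠ n in (ω : Filter ℕ), wH s (n + 1) - wH s n ≤ ((d : ℝ) + 1) / (n + 1) :=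
    (hω.trans inf_le_right) (mem_principal_self _)
  let T : H → ℝ := fun v => ulim ω fun n => wT s b n v
  have hT : ∀ v, Tendsto (fun n => wT s b n v) ω (nhds (T v)) := fun v =>
    tendsto_ulim ω (C := wc s b * ‖v‖ ^ 2) fun n => by
      rw [abs_of_nonneg (wT_nonneg s b n v)]; exact wT_le s π b hb hbs n v
  have hinv : ∀ i v, T (π (s i)⁻¹ v) = T v := by
    intro i v
    have hc0 : 0 ≤ wc s b * ‖v‖ ^ 2 := mul_nonneg (wc_nonneg s b) (sq_nonneg _)
    have hle : ∀ ε : ℝ, 0 < ε → |T (π (s i)⁻¹ v) - T v| ≤ (wc s b * ‖v‖ ^ 2) * (2 * ε) := by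
      intro ε hε
      have hR : Tendsto (fun n : ℕ => (wc s b * ‖v‖ ^ 2) *
          (Fintype.card ι * (wH s (n + 1) / ((n : ℝ) + 1)) / (2 * ε) + 2 * ε +
          2 * (1 / ((n : ℝ) + 1)))) atTop (nhds ((wc s b * ‖v‖ ^ 2) *
          (Fintype.card ι * 0 / (2 * ε) + 2 * ε + 2 * 0))) :=
        (((((wH_div_tendsto s hgrow).const_mul _).div_const _).add_const _).add
          (tendsto_one_div_add_atTop_nhds_zero_nat.const_mul 2)).const_mul _
      have := le_of_tendsto_of_tendsto' ((hT (π (s i)⁻¹ v)).sub (hT v)).abs (hR.mono_left hω1)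
        fun n => wT_shift_sub_le s π b hb hbs n i v hε
      simpa using this
    have h0 : |T (π (s i)⁻¹ v) - T v| ≤ 0 := by
      refine le_of_forall_pos_le_add fun ε hε => ?_
      rw [zero_add]
      refine (hle (ε / (2 * (wc s b * ‖v‖ ^ 2 + 1))) (by positivity)).trans ?_
      rw [← mul_div_assoc, ← mul_div_assoc, div_le_iff₀ (by positivity)]
      nlinarith
    exact sub_eq_zero.1 (abs_nonpos_iff.1 h0)
  refine ⟨T, wc s b, Fintype.card ι * ((d : ℝ) + 1) * (2 * (Fintype.card ι + 1)), ?_, ?_, ?_, ?_,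
    ?_, ?_, ?_, ?_⟩
  · exact fun v => ge_of_tendsto' (hT v) fun n => wT_nonneg s b n v
  · exact fun v => le_of_tendsto' (hT v) fun n => wT_le s π b hb hbs n v
  · intro r v
    refine ulim_eq ω (((hT v).const_mul (r ^ 2)).congr fun n => (wT_smul s b n r v).symm)
  · intro v w
    refine tendsto_nhds_unique ((hT (v + w)).add (hT (v - w)))
      ((((hT v).const_mul 2).add ((hT w).const_mul 2)).congr fun n =>
        (wT_parallelogram s b n v w).symm)
  · intro g
    have hg : g ∈ Subgroup.closure (Set.range s) := by rw [hgen]; trivial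
    induction hg using Subgroup.closure_induction with
    | mem x hx =>
      obtain ⟨i, rfl⟩ := hx
      intro v
      rw [← hinv i (π (s i) v), ← rep_mul]; simp
    | one => intro v; simp
    | mul x y _ _ hx hy => intro v; rw [rep_mul, hx, hy]
    | inv x _ hx => intro v; rw [← hx (π x⁻¹ v), ← rep_mul]; simp
  · intro n e he
    exact le_of_tendsto' (tendsto_finsetSum _ fun k _ => hT (e k))
      fun n => wT_sum_le s π b hb hbs e he n
  · intro i v
    refine ge_of_tendsto ((hT v).const_mul _) ?_
    filter_upwards [hω2] with n hn
    exact sq_inner_le s π b hb hbs n i v hn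
  · intro v hv
    by_contra hcon
    push Not at hcon
    refine hv (tendsto_nhds_unique (hT v) ?_)
    refine tendsto_const_nhds.congr fun n => ?_
    simp [wT, hcon, wE_const]

end Form

end

/-! ### Top eigenspace of a trace-class form -/

section

open scoped Pointwise

section Spectral
variable {H : Type*} [NormedAddCommGroup H] [InnerProductSpace ℝ H]

/-- The null set of a nonnegative quadratic form, as a subspace. -/
def nullSpace (B : H → ℝ) (h0 : ∀ v, 0 ≤ B v) (hr : ∀ (r : ℝ) v, B (r • v) = r ^ 2 * B v)
    (hp : ∀ v w, B (v + w) ≤ 2 * B v + 2 * B w) : Submodule ℝ H where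
  carrier := {v | B v = 0}
  add_mem' {v w} hv hw := by
    have h := hp v w
    rw [Set.mem_ofPred_eq] at hv hw
    exact le_antisymm (by linarith) (h0 _)
  zero_mem' := by
    have := hr 0 0
    simpa using this
  smul_mem' r v hv := by
    rw [Set.mem_ofPred_eq] at hv
    change B (r • v) = 0
    rw [hr, hv, mul_zero]

theorem orthonormal_cons {n : ℕ} {e : Fin n → H} (he : Orthonormal ℝ e) {v : H} (hv : ‖v‖ = 1)
    (hp : ∀ i, inner ℝ v (e i) = 0) : Orthonormal ℝ (Fin.cons v e : Fin (n + 1) → H) := by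
  constructor
  · intro i
    refine Fin.cases ?_ (fun i => ?_) i
    · simpa using hv
    · simpa using he.1 i
  · intro i j
    refine Fin.cases ?_ (fun i => ?_) i
    · refine Fin.cases ?_ (fun j => ?_) j
      · simp
      · intro _; simpa using hp j
    · refine Fin.cases ?_ (fun j => ?_) j
      · intro _; simpa [real_inner_comm] using hp i
      · intro hij
        simpa using he.2 (i := i) (j := j) (fun h => hij (by rw [h]))

/-- For a quadratic form of trace class and any `lam > 0`, the form is at most `lam / 2` on the
unit sphere of the orthogonal complement of some finite-dimensional subspace: the span of a
maximal orthonormal family on which it is at least `lam / 2`. -/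
theorem exists_finiteDimensional_half (T : H → ℝ) (c lam : ℝ) (hlam : 0 < lam)
    (hr : ∀ (r : ℝ) v, T (r • v) = r ^ 2 * T v)
    (htr : ∀ (n : ℕ) (e : Fin n → H), Orthonormal ℝ e → ∑ k, T (e k) ≤ c) :
    ∃ W : Submodule ℝ H, FiniteDimensional ℝ W ∧ ∀ v ∈ Wᗮ, T v ≤ lam / 2 * ‖v‖ ^ 2 := by
  classical
  let P : ℕ → Prop := fun n => ∃ e : Fin n → H, Orthonormal ℝ e ∧ ∀ i, lam / 2 ≤ T (e i)
  have hP0 : P 0 := ⟨Fin.elim0, ⟨fun i => i.elim0, fun i => i.elim0⟩, fun i => i.elim0⟩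
  have hbd : ∀ n, P n → n ≤ ⌈c / (lam / 2)⌉₊ := by
    rintro n ⟨e, he, hT⟩
    have h1 : (n : ℝ) * (lam / 2) ≤ c := by
      refine le_trans ?_ (htr n e he)
      have := Finset.card_nsmul_le_sum Finset.univ (fun k => T (e k)) (lam / 2) fun i _ => hT i
      simpa using this
    have h2 : (n : ℝ) ≤ c / (lam / 2) := (le_div_iff₀ (by positivity)).2 h1
    exact_mod_cast h2.trans (Nat.le_ceil _)
  set n := Nat.findGreatest P ⌈c / (lam / 2)⌉₊ with hn
  obtain ⟨e, he, hT⟩ : P n := Nat.findGreatest_spec (Nat.zero_le _) hP0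
  refine ⟨Submodule.span ℝ (Set.range e), FiniteDimensional.span_of_finite ℝ (Set.finite_range e),
    fun v hv => ?_⟩
  by_contra hcon
  push Not at hcon
  have hv0 : v ≠ 0 := by
    rintro rfl
    have := hr 0 0
    simp at this hcon
    linarith
  have hvn : 0 < ‖v‖ := norm_pos_iff.2 hv0
  have : P (n + 1) := by
    refine ⟨Fin.cons (‖v‖⁻¹ • v) e, orthonormal_cons he ?_ ?_, ?_⟩
    · rw [norm_smul, norm_inv, norm_norm, inv_mul_cancel₀ hvn.ne']
    · intro i
      rw [real_inner_smul_left, Submodule.inner_left_of_mem_orthogonal (K := Submodule.span ℝ (Set.range e))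
        (Submodule.subset_span ⟨i, rfl⟩) hv, mul_zero]
    · intro i
      refine Fin.cases ?_ (fun i => ?_) i
      · simp only [Fin.cons_zero]
        rw [hr, inv_pow, inv_mul_eq_div, le_div_iff₀ (by positivity)]
        exact hcon.le
      · simpa using hT i
  have h3 := Nat.le_findGreatest (hbd _ this) this
  omega

/-- A nonzero nonnegative quadratic form of trace class has a nonzero finite-dimensional top
eigenspace, which is preserved by every isometry preserving the form. -/
theorem exists_top_eigenspace [CompleteSpace H] (T : H → ℝ) (c : ℝ)
    (h0 : ∀ v, 0 ≤ T v) (hle : ∀ v, T v ≤ c * ‖v‖ ^ 2)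
    (hr : ∀ (r : ℝ) v, T (r • v) = r ^ 2 * T v)
    (hp : ∀ v w, T (v + w) + T (v - w) = 2 * T v + 2 * T w)
    (htr : ∀ (n : ℕ) (e : Fin n → H), Orthonormal ℝ e → ∑ k, T (e k) ≤ c)
    (hne : ∃ v, T v ≠ 0) :
    ∃ E : Submodule ℝ H, FiniteDimensional ℝ E ∧ (∃ v ∈ E, v ≠ 0) ∧
      (∀ v ∈ E, v ≠ 0 → T v ≠ 0) ∧
      ∀ U : H ≃ₗᵢ[ℝ] H, (∀ v, T (U v) = T v) → ∀ v ∈ E, U v ∈ E := by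
  obtain ⟨v₀, hv₀⟩ := hne
  have hT0 : T 0 = 0 := by have := hr 0 0; simpa using this
  have hv₀0 : v₀ ≠ 0 := fun h => hv₀ (h ▸ hT0)
  set L : Set ℝ := T '' {v | ‖v‖ = 1} with hL
  have hLb : BddAbove L := ⟨c, by
    rintro _ ⟨v, hv, rfl⟩
    have := hle v
    rw [Set.mem_ofPred_eq] at hv
    simpa [hv] using this⟩
  set lam := sSup L with hlamdef
  have hnorm : ∀ v : H, v ≠ 0 → T v / ‖v‖ ^ 2 ∈ L := by
    intro v hv
    have hvn : ‖v‖ ≠ 0 := norm_ne_zero_iff.2 hv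
    refine ⟨‖v‖⁻¹ • v, ?_, ?_⟩
    · rw [Set.mem_ofPred_eq, norm_smul, norm_inv, norm_norm, inv_mul_cancel₀ hvn]
    · rw [hr, inv_pow, inv_mul_eq_div]
  have hTlam : ∀ v, T v ≤ lam * ‖v‖ ^ 2 := by
    intro v
    by_cases hv : v = 0
    · subst hv; simp [hT0]
    · have hvn : 0 < ‖v‖ := norm_pos_iff.2 hv
      exact (div_le_iff₀ (by positivity)).1 (le_csSup hLb (hnorm v hv))
  have hlam : 0 < lam := by
    have hvn : 0 < ‖v₀‖ := norm_pos_iff.2 hv₀0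
    have h1 := le_csSup hLb (hnorm v₀ hv₀0)
    have h2 : 0 < T v₀ := lt_of_le_of_ne (h0 _) (Ne.symm hv₀)
    exact lt_of_lt_of_le (by positivity) h1
  let B : H → ℝ := fun v => lam * ‖v‖ ^ 2 - T v
  have hB : ∀ v, B v = lam * ‖v‖ ^ 2 - T v := fun _ => rfl
  have hB0 : ∀ v, 0 ≤ B v := fun v => sub_nonneg.2 (hTlam v)
  have hBle : ∀ v, B v ≤ lam * ‖v‖ ^ 2 := fun v => by rw [hB]; linarith [h0 v]
  have hBr : ∀ (r : ℝ) v, B (r • v) = r ^ 2 * B v := by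
    intro r v
    rw [hB, hB, hr, norm_smul, mul_pow, Real.norm_eq_abs, sq_abs]; ring
  have hBadd : ∀ v w, B (v + w) ≤ 2 * B v + 2 * B w := by
    intro v w
    have h1 := parallelogram_law_with_norm ℝ v w
    have h2 := hp v w
    have h3 := hB0 (v - w)
    rw [hB] at h3 ⊢
    rw [hB, hB]
    nlinarith
  have hBsub : ∀ v w, B (v - w) ≤ 2 * B v + 2 * B w := by
    intro v w
    have h1 := hBadd v ((-1 : ℝ) • w)
    rw [hBr] at h1
    simpa [sub_eq_add_neg] using h1
  obtain ⟨W, hW, hWT⟩ := exists_finiteDimensional_half T c lam hlam hr htr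
  have hWB : ∀ v ∈ Wᗮ, lam / 2 * ‖v‖ ^ 2 ≤ B v := by
    intro v hv
    rw [hB]; linarith [hWT v hv]
  refine ⟨nullSpace B hB0 hBr hBadd, ?_, ?_, ?_, ?_⟩
  · -- orthogonal projection to `W` is injective on the null space of `B`
    let f : nullSpace B hB0 hBr hBadd →ₗ[ℝ] W :=
      (W.orthogonalProjectionOnto : H →L[ℝ] W).toLinearMap ∘ₗ (nullSpace B hB0 hBr hBadd).subtype
    refine FiniteDimensional.of_injective f ?_
    rw [← LinearMap.ker_eq_bot, LinearMap.ker_eq_bot']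
    rintro ⟨v, hv⟩ hfv
    have h1 : W.orthogonalProjectionOnto v = 0 := hfv
    have h2 : v ∈ Wᗮ := W.orthogonalProjectionOnto_eq_zero_iff.1 h1
    have h3 := hWB v h2
    have h4 : B v = 0 := hv
    rw [h4] at h3
    have h5 : ‖v‖ = 0 := by
      by_contra hne
      have : 0 < ‖v‖ := lt_of_le_of_ne (norm_nonneg _) (Ne.symm hne)
      have : 0 < lam / 2 * ‖v‖ ^ 2 := by positivity
      linarith
    exact Subtype.ext (norm_eq_zero.1 h5)
  · have hex : ∀ n : ℕ, ∃ v : H, ‖v‖ = 1 ∧ B v < 1 / ((n : ℝ) + 1) := by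
      intro n
      have hLne : L.Nonempty := ⟨_, hnorm v₀ hv₀0⟩
      obtain ⟨_, ⟨v, hv, rfl⟩, hlt⟩ := exists_lt_of_lt_csSup hLne
        (show lam - 1 / ((n : ℝ) + 1) < lam by
          have : (0 : ℝ) < 1 / ((n : ℝ) + 1) := by positivity
          linarith)
      rw [Set.mem_ofPred_eq] at hv
      refine ⟨v, hv, ?_⟩
      rw [hB, hv]; linarith
    choose v hv1 hv2 using hex
    have hbd : ∀ n, W.orthogonalProjectionOnto (v n) ∈ Metric.closedBall (0 : W) 1 := by
      intro n
      rw [mem_closedBall_zero_iff]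
      have h1 := W.norm_orthogonalProjectionOnto_apply_le (v n)
      rwa [hv1] at h1
    obtain ⟨w, -, ψ, hψ, hlim⟩ := tendsto_subseq_of_bounded Metric.isBounded_closedBall hbd
    have hBlim : Tendsto (fun n => B (v (ψ n))) atTop (nhds 0) := by
      refine squeeze_zero (fun n => hB0 _) (fun n => (hv2 (ψ n)).le) ?_
      exact tendsto_one_div_add_atTop_nhds_zero_nat.comp hψ.tendsto_atTop
    -- A sequence maximizing `T` on the unit sphere has bounded, hence subconvergent, projection
    -- onto the finite-dimensional space `W`; the following estimate upgrades this to convergence of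
    -- the sequence. The null space of `B` is the top eigenspace.
    have key : ∀ x y : H, ‖x - y‖ ^ 2 ≤
        10 * ‖W.orthogonalProjectionOnto x - W.orthogonalProjectionOnto y‖ ^ 2 + 16 / lam * (B x + B y) := by
      intro x y
      set p : H := ((W.orthogonalProjectionOnto (x - y) : W) : H) with hpdef
      have hz : x - y - p ∈ Wᗮ := W.sub_starProjection_mem_orthogonal _
      have h1 := hWB _ hz
      have h2 := (hBsub (x - y) p)
      have h3 := hBsub x y
      have h4 := hBle p
      have h5 : ‖W.orthogonalProjectionOnto x - W.orthogonalProjectionOnto y‖ = ‖p‖ := by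
        rw [← map_sub, hpdef, Submodule.coe_norm]
      have h6 : ‖x - y‖ ^ 2 ≤ 2 * ‖p‖ ^ 2 + 2 * ‖x - y - p‖ ^ 2 := by
        have h7 : ‖x - y‖ ≤ ‖p‖ + ‖x - y - p‖ := by
          have := norm_add_le p (x - y - p)
          rwa [add_sub_cancel] at this
        nlinarith [norm_nonneg (x - y), norm_nonneg p, norm_nonneg (x - y - p),
          sq_nonneg (‖p‖ - ‖x - y - p‖)]
      rw [h5]
      have h8 : ‖x - y - p‖ ^ 2 ≤ (2 / lam) * (4 * B x + 4 * B y + 2 * (lam * ‖p‖ ^ 2)) := by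
        rw [div_mul_eq_mul_div, le_div_iff₀ hlam]
        linarith
      refine h6.trans ((add_le_add_right (mul_le_mul_of_nonneg_left h8 (by norm_num)) _).trans
        (le_of_eq ?_))
      field_simp
      ring
    have hcau : CauchySeq fun n => v (ψ n) := by
      rw [Metric.cauchySeq_iff]
      intro ε hε
      have hwc := hlim.cauchySeq
      rw [Metric.cauchySeq_iff] at hwc
      obtain ⟨N1, hN1⟩ := hwc (ε / 5) (by positivity)
      obtain ⟨N2, hN2⟩ := (eventually_atTop.1 (hBlim.eventually
        (gt_mem_nhds (show (0 : ℝ) < lam * ε ^ 2 / 64 by positivity))))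
      refine ⟨max N1 N2, fun m hm n hn => ?_⟩
      have h1 := hN1 m (le_of_max_le_left hm) n (le_of_max_le_left hn)
      have h2 := hN2 m (le_of_max_le_right hm)
      have h3 := hN2 n (le_of_max_le_right hn)
      have h4 := key (v (ψ m)) (v (ψ n))
      rw [dist_eq_norm] at h1 ⊢
      have h5 : ‖W.orthogonalProjectionOnto (v (ψ m)) - W.orthogonalProjectionOnto (v (ψ n))‖ ^ 2 ≤
          (ε / 5) ^ 2 := pow_le_pow_left₀ (norm_nonneg _) h1.le 2
      have h6 : 16 / lam * (B (v (ψ m)) + B (v (ψ n))) < ε ^ 2 / 2 := by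
        rw [div_mul_eq_mul_div, div_lt_iff₀ hlam]
        linarith
      refine lt_of_pow_lt_pow_left₀ 2 hε.le ?_
      nlinarith
    obtain ⟨x, hx⟩ := cauchySeq_tendsto_of_complete hcau
    refine ⟨x, ?_, ?_⟩
    · have h1 : Tendsto (fun n => 2 * B (v (ψ n)) + 2 * (lam * ‖x - v (ψ n)‖ ^ 2)) atTop
          (nhds (2 * 0 + 2 * (lam * ‖x - x‖ ^ 2))) :=
        (hBlim.const_mul 2).add ((((tendsto_const_nhds.sub hx).norm.pow 2).const_mul lam).const_mul 2)
      have h2 : B x ≤ 2 * 0 + 2 * (lam * ‖x - x‖ ^ 2) := ge_of_tendsto' h1 fun n => by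
        have h3 := hBadd (v (ψ n)) (x - v (ψ n))
        rw [add_sub_cancel] at h3
        linarith [hBle (x - v (ψ n))]
      simp only [sub_self, norm_zero] at h2
      exact le_antisymm (by simpa using h2) (hB0 x)
    · rintro rfl
      have := hx.norm
      simp only [hv1, norm_zero] at this
      exact one_ne_zero (tendsto_nhds_unique tendsto_const_nhds this)
  · intro v hv hv0 hT
    have h1 : B v = 0 := hv
    rw [hB, hT, sub_zero] at h1
    have : 0 < ‖v‖ := norm_pos_iff.2 hv0
    have : 0 < lam * ‖v‖ ^ 2 := by positivity
    linarith
  · intro U hU v hv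
    change B (U v) = 0
    have h1 : B v = 0 := hv
    rw [hB, hU, LinearIsometryEquiv.norm_map]
    exact h1

end Spectral

end

/-! ### Finite-dimensional cocycles -/

section

open scoped Pointwise

section Restrict
variable {G H : Type*} [Group G] [NormedAddCommGroup H] [InnerProductSpace ℝ H]
  (π : G →* (H ≃ₗᵢ[ℝ] H)) (E : Submodule ℝ H) (hE : ∀ g, ∀ v ∈ E, π g v ∈ E)

/-- Restriction of an isometric representation to an invariant subspace. -/
def restrictRep : G →* (E ≃ₗᵢ[ℝ] E) where
  toFun g :=
    { toFun := fun v => ⟨π g v, hE g v v.2⟩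
      invFun := fun v => ⟨π g⁻¹ v, hE g⁻¹ v v.2⟩
      map_add' := fun v w => Subtype.ext (by simp)
      map_smul' := fun r v => Subtype.ext (by simp)
      left_inv := fun v => Subtype.ext (by simp [← rep_mul])
      right_inv := fun v => Subtype.ext (by simp [← rep_mul])
      norm_map' := fun v => (π g).norm_map v }
  map_one' := by
    ext v
    change π 1 (v : H) = v
    simp
  map_mul' g h := by
    ext v
    change π (g * h) (v : H) = π g (π h v)
    exact rep_mul π g h v

theorem restrictRep_coe (g : G) (v : E) : ((restrictRep π E hE g v : E) : H) = π g v := rfl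

theorem restrictRep_proj [E.HasOrthogonalProjection] (g : G) (u : H) :
    E.orthogonalProjectionOnto (π g u) = restrictRep π E hE g (E.orthogonalProjectionOnto u) := by
  refine ext_inner_right ℝ fun v => ?_
  rw [rep_inner (restrictRep π E hE), Submodule.inner_orthogonalProjectionOnto_eq_of_mem_right,
    Submodule.inner_orthogonalProjectionOnto_eq_of_mem_right, rep_inner, restrictRep_coe]

end Restrict

universe u

/-- An infinite finitely generated group of polynomial growth has a nonzero harmonic cocycle in a
finite-dimensional orthogonal representation. -/
theorem PG.exists_finiteDimensional_cocycle {G : Type u} [Group G] [Infinite G] [Group.FG G] {d : ℕ}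
    (h : PG d G) :
    ∃ (E : Type u) (_ : NormedAddCommGroup E) (_ : InnerProductSpace ℝ E)
      (_ : FiniteDimensional ℝ E) (ρ : G →* (E ≃ₗᵢ[ℝ] E)) (c : G → E)
      (ι : Type u) (_ : Fintype ι) (_ : Nonempty ι) (s : ι → G),
      Subgroup.closure (Set.range s) = ⊤ ∧ (∀ x y, c (x * y) = c x + ρ x (c y)) ∧
      ∑ i, c (s i) = 0 ∧ ∃ x, c x ≠ 0 := by
  obtain ⟨S', hfin, h1, hinv, hcl⟩ := exists_symm_generators G
  obtain ⟨C, hC⟩ := h S' hfin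
  obtain ⟨S, rfl⟩ : ∃ S : Finset G, (S : Set G) = S' := ⟨hfin.toFinset, hfin.coe_toFinset⟩
  obtain ⟨H, i1, i2, i3, π, b, hb, hsum, p0, hp0, hbp⟩ :=
    exists_harmonic_cocycle S (fun s hs => hinv s hs) h1 hcl C d hC
  -- The cocycle is harmonic for the walk whose steps are products of two generators.
  let s : (S ×ˢ S : Finset (G × G)) → G := fun p => p.1.1 * p.1.2
  have : Nonempty (S ×ˢ S : Finset (G × G)) := ⟨⟨p0, hp0⟩⟩
  have hrange1 : (S : Set G) ⊆ Set.range s := fun x hx =>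
    ⟨⟨(x, 1), Finset.mem_product.2 ⟨hx, h1⟩⟩, mul_one x⟩
  have hrange2 : Set.range s ⊆ (S : Set G) ^ 2 := by
    rintro _ ⟨⟨p, hp⟩, rfl⟩
    rw [pow_two]
    exact Set.mul_mem_mul (Finset.mem_product.1 hp).1 (Finset.mem_product.1 hp).2
  have hgen : Subgroup.closure (Set.range s) = ⊤ := by
    rw [eq_top_iff, ← hcl]
    exact Subgroup.closure_mono hrange1
  have hgrow : ∀ n, ((Set.range s) ^ n).ncard ≤ (C * 2 ^ d) * (n + 1) ^ d := by
    intro n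
    have h3 : (Set.range s) ^ n ⊆ (S : Set G) ^ (2 * n) := by
      rw [pow_mul]; exact Set.pow_subset_pow_left hrange2
    refine (Set.ncard_le_ncard h3 (setFinite_pow hfin _)).trans ((hC _).trans ?_)
    rw [mul_assoc, ← mul_pow]
    gcongr
    omega
  have hbs : ∑ i, b (s i) = 0 := by
    rw [← hsum]
    exact Finset.sum_coe_sort (S ×ˢ S) fun p => b (p.1 * p.2)
  obtain ⟨T, c, D, hT0, hTle, hTr, hTp, hTinv, hTtr, hTD, hTne⟩ :=
    exists_invariant_form s π b hb hbs hgrow hgen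
  have hTex : ∃ v, T v ≠ 0 := by
    refine ⟨b (p0.1 * p0.2), fun h0 => ?_⟩
    have h4 := hTD ⟨p0, hp0⟩ (b (p0.1 * p0.2))
    rw [h0, mul_zero] at h4
    have h5 : inner ℝ (b (p0.1 * p0.2)) (b (p0.1 * p0.2)) = 0 :=
      pow_eq_zero_iff (two_ne_zero) |>.1 (le_antisymm h4 (sq_nonneg _))
    exact hbp (inner_self_eq_zero.1 h5)
  obtain ⟨E, hEf, ⟨v, hvE, hv0⟩, hET, hEU⟩ := exists_top_eigenspace T c hT0 hTle hTr hTp hTtr hTex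
  have hE : ∀ g, ∀ v ∈ E, π g v ∈ E := fun g => hEU (π g) (hTinv g)
  refine ⟨E, inferInstance, inferInstance, hEf, restrictRep π E hE,
    fun x => E.orthogonalProjectionOnto (b x), _, inferInstance, this, s, hgen, ?_, ?_, ?_⟩
  · intro x y
    change E.orthogonalProjectionOnto (b (x * y)) = E.orthogonalProjectionOnto (b x) +
      restrictRep π E hE x (E.orthogonalProjectionOnto (b y))
    rw [hb, map_add, restrictRep_proj]
  · rw [← map_sum, hbs, map_zero]
  · obtain ⟨x, hx⟩ := hTne v (hET v hvE hv0)
    refine ⟨x, fun h0 => hx ?_⟩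
    have h6 := Submodule.inner_orthogonalProjectionOnto_eq_of_mem_right (⟨v, hvE⟩ : E) (b x)
    change E.orthogonalProjectionOnto (b x) = 0 at h0
    rw [h0, inner_zero_left] at h6
    exact h6.symm

end

/-! ### Elements close to the identity -/

section

open scoped Pointwise commutatorElement

section Near
variable {Γ A : Type*} [Group Γ] [NormedRing A] [NormedAlgebra ℝ A] (R : Γ →* A)
  (hR : ∀ g, ‖R g‖ ≤ 1)

/-- Distance to the identity in a bounded linear representation. -/
def dev (g : Γ) : ℝ := ‖R g - 1‖

theorem dev_nonneg (g : Γ) : 0 ≤ dev R g := norm_nonneg _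

theorem dev_one : dev R 1 = 0 := by simp [dev]

theorem eq_one_of_dev (hinj : Function.Injective R) {g : Γ} (h : dev R g = 0) : g = 1 := by
  rw [dev, norm_eq_zero, sub_eq_zero] at h
  exact hinj (h.trans (map_one R).symm)

include hR in
theorem dev_mul (g h : Γ) : dev R (g * h) ≤ dev R g + dev R h := by
  have : R (g * h) - 1 = (R g - 1) + R g * (R h - 1) := by rw [map_mul]; noncomm_ring
  rw [dev, this]
  refine (norm_add_le _ _).trans (add_le_add le_rfl ((norm_mul_le _ _).trans ?_))
  exact mul_le_of_le_one_left (norm_nonneg _) (hR g)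

include hR in
theorem dev_inv_le (g : Γ) : dev R g⁻¹ ≤ dev R g := by
  have : R g⁻¹ - 1 = -(R g⁻¹ * (R g - 1)) := by
    rw [mul_sub, ← map_mul, inv_mul_cancel, map_one]; noncomm_ring
  rw [dev, this, norm_neg]
  exact (norm_mul_le _ _).trans (mul_le_of_le_one_left (norm_nonneg _) (hR _))

include hR in
/-- Commutators of near-identity elements are much nearer to the identity. -/
theorem dev_commutator (g h : Γ) : dev R ⁅g, h⁆ ≤ 2 * (dev R g * dev R h) := by
  have : R ⁅g, h⁆ - 1 = ((R g - 1) * (R h - 1) - (R h - 1) * (R g - 1)) * R (g⁻¹ * h⁻¹) := by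
    have h1 : (R g - 1) * (R h - 1) - (R h - 1) * (R g - 1) = R (g * h) - R (h * g) := by
      rw [map_mul, map_mul]; noncomm_ring
    rw [h1, sub_mul, ← map_mul, ← map_mul, commutatorElement_def]
    congr 1
    · congr 1; group
    · rw [← map_one R]; congr 1; group
  rw [dev, this]
  refine (norm_mul_le _ _).trans ((mul_le_of_le_one_right (norm_nonneg _) (hR _)).trans ?_)
  refine (norm_sub_le _ _).trans ?_
  have h1 := norm_mul_le (R g - 1) (R h - 1)
  have h2 := norm_mul_le (R h - 1) (R g - 1)
  rw [dev, dev]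
  linarith

include hR in
theorem dev_pow_le (g : Γ) (n : ℕ) : dev R (g ^ n) ≤ n * dev R g := by
  induction n with
  | zero => simp [dev_one]
  | succ n ih =>
    rw [pow_succ]
    refine (dev_mul R hR _ _).trans ?_
    push_cast
    linarith

include hR in
theorem dev_pow_sub (g : Γ) (n : ℕ) :
    ‖R (g ^ n) - 1 - (n : ℝ) • (R g - 1)‖ ≤ (n * dev R g) ^ 2 := by
  induction n with
  | zero => simp
  | succ n ih =>
    have : R (g ^ (n + 1)) - 1 - ((n + 1 : ℕ) : ℝ) • (R g - 1) =
        (R (g ^ n) - 1 - (n : ℝ) • (R g - 1)) + (R (g ^ n) - 1) * (R g - 1) := by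
      rw [pow_succ, map_mul, Nat.cast_succ, add_smul, one_smul]
      noncomm_ring
    rw [this]
    refine (norm_add_le _ _).trans ?_
    have h1 := norm_mul_le (R (g ^ n) - 1) (R g - 1)
    have h2 : ‖R (g ^ n) - 1‖ * ‖R g - 1‖ ≤ n * dev R g * dev R g :=
      mul_le_mul_of_nonneg_right (dev_pow_le R hR g n) (norm_nonneg _)
    have h3 := dev_nonneg R g
    push_cast
    nlinarith [mul_nonneg h3 h3, mul_nonneg (Nat.cast_nonneg (α := ℝ) n) (mul_nonneg h3 h3)]

include hR in
/-- Small powers of a near-identity element move away from the identity at least half as far as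
the element itself. -/
theorem dev_pow_ge (g : Γ) (n : ℕ) (h1 : 1 ≤ n) (h : n * dev R g ≤ 1 / 2) :
    dev R g / 2 ≤ dev R (g ^ n) := by
  have h2 := dev_pow_sub R hR g n
  have h3 : ‖(n : ℝ) • (R g - 1)‖ = n * dev R g := by
    rw [norm_smul, Real.norm_natCast, dev]
  have h4 : n * dev R g - dev R (g ^ n) ≤ (n * dev R g) ^ 2 := by
    rw [← h3]
    refine le_trans ?_ (h3 ▸ h2)
    rw [dev, ← norm_neg (R (g ^ n) - 1 - _), neg_sub]
    exact norm_sub_norm_le _ _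
  have h5 := dev_nonneg R g
  have h6 : (1 : ℝ) ≤ n := by exact_mod_cast h1
  have h7 : dev R g ≤ n * dev R g := le_mul_of_one_le_left h5 h6
  have h8 : (n * dev R g) ^ 2 ≤ n * dev R g * (1 / 2) := by
    rw [pow_two]
    exact mul_le_mul_of_nonneg_left h (h5.trans h7)
  linarith

/-- An element outside the term `k + 1` of the upper central series has a commutator with some
generator outside the term `k`. -/
theorem exists_commutator_not_mem {S : Set Γ} (hcl : Subgroup.closure S = ⊤) {k : ℕ} {g : Γ}
    (hg : g ∉ Subgroup.upperCentralSeries Γ (k + 1)) :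
    ∃ h ∈ S, ⁅g, h⁆ ∉ Subgroup.upperCentralSeries Γ k := by
  by_contra hcon
  push Not at hcon
  refine hg (Subgroup.mem_upperCentralSeries_succ_iff.2 fun y => ?_)
  have hy : y ∈ Subgroup.closure S := by rw [hcl]; trivial
  have hN : (Subgroup.upperCentralSeries Γ k).Normal := inferInstance
  induction hy using Subgroup.closure_induction with
  | mem x hx => exact hcon x hx
  | one => rw [commutatorElement_one_right]; exact one_mem _
  | mul x y _ _ hx hy =>
    have : ⁅g, x * y⁆ = ⁅g, x⁆ * (x * ⁅g, y⁆ * x⁻¹) := by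
      simp only [commutatorElement_def]; group
    rw [this]
    exact mul_mem hx (hN.conj_mem _ hy x)
  | inv x _ hx =>
    have : ⁅g, x⁻¹⁆ = x⁻¹ * ⁅g, x⁆⁻¹ * x⁻¹⁻¹ := by
      simp only [commutatorElement_def]; group
    rw [this]
    exact hN.conj_mem _ (inv_mem hx) _

include hR in
/-- Iterated commutators of near-identity elements yield many distinct products. -/
theorem exists_many_words (hinj : Function.Injective R) {S : Set Γ} (hS1 : 1 ∈ S)
    (hSinv : ∀ x ∈ S, x⁻¹ ∈ S)
    (hcl : Subgroup.closure S = ⊤) (m : ℕ) (hm : 1 ≤ m) {ε : ℝ} (hε : 32 * m * ε ≤ 1)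
    (hSε : ∀ x ∈ S, dev R x ≤ ε) (k : ℕ) :
    ∀ g : Γ, g ∉ Subgroup.upperCentralSeries Γ k → dev R g ≤ ε → ∀ L, 1 ≤ L → g ∈ S ^ L →
      ∃ W : Finset Γ, (m + 1) ^ k ≤ W.card ∧ (W : Set Γ) ⊆ S ^ (m * L * 5 ^ k) ∧
        ∀ w ∈ W, dev R w ≤ 2 * m * dev R g := by
  classical
  have hm' : (1 : ℝ) ≤ m := by exact_mod_cast hm
  induction k with
  | zero =>
    intro g _ _ L _ _
    refine ⟨{1}, by simp, by simpa using Set.one_mem_pow hS1, ?_⟩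
    intro w hw
    rw [Finset.mem_singleton] at hw
    rw [hw, dev_one]
    have := dev_nonneg R g
    positivity
  | succ k ih =>
    intro g hg hgε L hL hgL
    obtain ⟨h, hh, hgh⟩ := exists_commutator_not_mem hcl hg
    have hε0 : 0 ≤ ε := (dev_nonneg R g).trans hgε
    have hε1 : 32 * ε ≤ 1 := by nlinarith
    have hg0 := dev_nonneg R g
    have hgpos : 0 < dev R g := by
      refine lt_of_le_of_ne hg0 fun h0 => hg ?_
      rw [eq_one_of_dev R hinj h0.symm]
      exact one_mem _
    have hc : dev R ⁅g, h⁆ ≤ 2 * ε * dev R g := by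
      have h1 := dev_commutator R hR g h
      have h2 := mul_le_mul_of_nonneg_left (hSε h hh) hg0
      linarith
    have hcε : dev R ⁅g, h⁆ ≤ ε := by nlinarith
    have hlen : ⁅g, h⁆ ∈ S ^ (4 * L) := by
      have h1 : ⁅g, h⁆ ∈ S ^ (L + 1 + L + 1) := by
        rw [commutatorElement_def, pow_add, pow_add, pow_add, pow_one]
        exact Set.mul_mem_mul (Set.mul_mem_mul (Set.mul_mem_mul hgL hh) (inv_mem_pow hSinv hgL))
          (hSinv h hh)
      exact Set.pow_subset_pow_right hS1 (by omega) h1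
    obtain ⟨W, hW1, hW2, hW3⟩ := ih _ hgh hcε (4 * L) (by omega) hlen
    have hmε : m * dev R g ≤ 1 / 32 := by nlinarith
    have hWd : ∀ w ∈ W, dev R w ≤ dev R g / 8 := by
      intro w hw
      refine (hW3 w hw).trans ?_
      nlinarith
    -- Distinct powers of `g` are further apart than the elements of `W` are from the identity.
    have key : ∀ a b, a ≤ m → b ≤ m → ∀ w ∈ W, ∀ w' ∈ W, g ^ a * w = g ^ b * w' → b ≤ a := by
      intro a b ha hb w hw w' hw' heq
      by_contra hlt
      push Not at hlt
      have h1 : g ^ (b - a) = w * w'⁻¹ := by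
        rw [eq_mul_inv_iff_mul_eq, ← mul_right_inj (g ^ a), heq, ← mul_assoc, ← pow_add]
        congr 2; omega
      have h2 : dev R (w * w'⁻¹) ≤ dev R g / 4 := by
        have := dev_mul R hR w w'⁻¹
        have := dev_inv_le R hR w'
        have := hWd w hw
        have := hWd w' hw'
        linarith
      have h3 : ((b - a : ℕ) : ℝ) ≤ m := by exact_mod_cast (Nat.sub_le b a).trans hb
      have h4 := dev_pow_ge R hR g (b - a) (by omega) (by nlinarith)
      rw [h1] at h4
      linarith
    refine ⟨(Finset.range (m + 1) ×ˢ W).image fun p => g ^ p.1 * p.2, ?_, ?_, ?_⟩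
    · rw [Finset.card_image_of_injOn, Finset.card_product, Finset.card_range, pow_succ']
      · exact Nat.mul_le_mul_left _ hW1
      · rintro ⟨a, w⟩ haw ⟨b, w'⟩ hbw heq
        simp only [Finset.coe_product, Set.mem_prod, Finset.mem_coe, Finset.mem_range] at haw hbw
        have h1 := key a b (by omega) (by omega) w haw.2 w' hbw.2 heq
        have h2 := key b a (by omega) (by omega) w' hbw.2 w haw.2 heq.symm
        obtain rfl : a = b := le_antisymm h2 h1
        simpa using heq
    · intro x hx
      simp only [Finset.coe_image, Set.mem_image, Finset.mem_coe, Finset.mem_product,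
        Finset.mem_range] at hx
      obtain ⟨⟨a, w⟩, ⟨ha, hw⟩, rfl⟩ := hx
      have h1 : g ^ a ∈ S ^ (L * a) := by
        rw [pow_mul]; exact Set.pow_mem_pow hgL
      have h2 : g ^ a * w ∈ S ^ (L * a + m * (4 * L) * 5 ^ k) := by
        rw [pow_add]; exact Set.mul_mem_mul h1 (hW2 hw)
      refine Set.pow_subset_pow_right hS1 ?_ h2
      have h3 : L * a ≤ L * m := Nat.mul_le_mul_left _ (by omega)
      have h4 : L * m * 1 ≤ L * m * 5 ^ k := Nat.mul_le_mul_left _ (Nat.one_le_pow _ _ (by norm_num))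
      rw [pow_succ]
      nlinarith
    · intro x hx
      simp only [Finset.mem_image, Finset.mem_product, Finset.mem_range] at hx
      obtain ⟨⟨a, w⟩, ⟨ha, hw⟩, rfl⟩ := hx
      have h1 := dev_mul R hR (g ^ a) w
      have h2 := dev_pow_le R hR g a
      have h3 : (a : ℝ) ≤ m := by exact_mod_cast Nat.lt_succ_iff.1 ha
      have h4 := hWd w hw
      change dev R (g ^ a * w) ≤ _
      nlinarith

include hR in
/-- A group of polynomial growth that is faithfully and boundedly represented by matrices and
generated by elements close to the identity is nilpotent. -/
theorem PG.nilpotent_of_near {d : ℕ} (h : PG d Γ) (hinj : Function.Injective R) {S : Set Γ}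
    (hSfin : S.Finite) (hS1 : 1 ∈ S) (hSinv : ∀ x ∈ S, x⁻¹ ∈ S)
    (hcl : Subgroup.closure S = ⊤) {ε : ℝ} (hε : 32 * (2 * 5 ^ d : ℝ) * ε ≤ 1)
    (hSε : ∀ x ∈ S, dev R x ≤ ε) : Group.IsNilpotent Γ := by
  by_contra hnil
  have hZ : ∀ k, Subgroup.upperCentralSeries Γ k ≠ ⊤ := fun k hk => hnil ⟨⟨k, hk⟩⟩
  obtain ⟨C, hC⟩ := h S hSfin
  obtain ⟨m, hm⟩ : ∃ m, m + 1 = 2 * 5 ^ d :=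
    ⟨2 * 5 ^ d - 1, Nat.sub_add_cancel (Nat.one_le_iff_ne_zero.2 (by positivity))⟩
  have hm1 : 1 ≤ m := by
    have : 1 ≤ 5 ^ d := (Nat.one_le_pow _ _ (by norm_num))
    omega
  have hε0 : 0 ≤ ε := (dev_nonneg R 1).trans (hSε 1 hS1)
  have hmε : 32 * (m : ℝ) * ε ≤ 1 := by
    refine le_trans ?_ hε
    have : (m : ℝ) ≤ 2 * 5 ^ d := by
      have : m ≤ 2 * 5 ^ d := by omega
      exact_mod_cast this
    gcongr
  obtain ⟨k, hk⟩ : ∃ k, C * (m + 1) ^ d < 2 ^ k := ⟨_, Nat.lt_two_pow_self⟩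
  have hex : ∃ g ∈ S, g ∉ Subgroup.upperCentralSeries Γ k := by
    by_contra hcon
    push Not at hcon
    refine hZ k (eq_top_iff.2 ?_)
    rw [← hcl]
    exact (Subgroup.closure_le _).2 hcon
  obtain ⟨g, hgS, hg⟩ := hex
  obtain ⟨W, hW1, hW2, -⟩ := exists_many_words R hR hinj hS1 hSinv hcl m hm1 hmε hSε k g hg
    (hSε g hgS) 1 le_rfl (by simpa using hgS)
  have h1 : W.card ≤ C * (m * 1 * 5 ^ k + 1) ^ d := by
    rw [← Set.ncard_coe_finset]
    exact (Set.ncard_le_ncard hW2 (setFinite_pow hSfin _)).trans (hC _)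
  have h2 : (m * 1 * 5 ^ k + 1) ^ d ≤ (m + 1) ^ d * (5 ^ d) ^ k := by
    rw [← pow_mul, mul_comm d k, pow_mul, ← mul_pow]
    refine Nat.pow_le_pow_left ?_ d
    have : 1 ≤ 5 ^ k := (Nat.one_le_pow _ _ (by norm_num))
    nlinarith
  have h3 : 2 ^ k * (5 ^ d) ^ k ≤ (C * (m + 1) ^ d) * (5 ^ d) ^ k := by
    rw [← mul_pow, ← hm, mul_assoc]
    exact (hW1.trans h1).trans (Nat.mul_le_mul_left _ h2)
  exact absurd (Nat.le_of_mul_le_mul_right h3 (by positivity)) (by omega)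

end Near

end

/-! ### Groups of isometries -/

section

open scoped Pointwise commutatorElement

/-- A finitely generated group is generated by finitely many members of any generating set. -/
theorem Subgroup.exists_finite_closure {G : Type*} [Group G] {A : Set G}
    (h : (Subgroup.closure A).FG) : ∃ B ⊆ A, B.Finite ∧ Subgroup.closure B = Subgroup.closure A := by
  have key : ∀ g ∈ Subgroup.closure A, ∃ B ⊆ A, B.Finite ∧ g ∈ Subgroup.closure B := by
    intro g hg
    induction hg using Subgroup.closure_induction with
    | mem x hx =>
      exact ⟨{x}, by simpa using hx, Set.finite_singleton x, Subgroup.subset_closure rfl⟩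
    | one => exact ⟨∅, by simp, Set.finite_empty, one_mem _⟩
    | mul x y _ _ hx hy =>
      obtain ⟨B, h1, h2, h3⟩ := hx
      obtain ⟨B', h1', h2', h3'⟩ := hy
      exact ⟨B ∪ B', Set.union_subset h1 h1', h2.union h2',
        mul_mem (Subgroup.closure_mono Set.subset_union_left h3)
          (Subgroup.closure_mono Set.subset_union_right h3')⟩
    | inv x _ hx =>
      obtain ⟨B, h1, h2, h3⟩ := hx
      exact ⟨B, h1, h2, inv_mem h3⟩
  obtain ⟨T, hT, hTf⟩ := (Subgroup.fg_iff _).1 h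
  have hTA : ∀ t ∈ T, t ∈ Subgroup.closure A := fun t ht => hT ▸ Subgroup.subset_closure ht
  choose! f hf1 hf2 hf3 using key
  refine ⟨⋃ t ∈ T, f t, Set.iUnion₂_subset fun t ht => hf1 t (hTA t ht),
    hTf.biUnion fun t ht => hf2 t (hTA t ht), le_antisymm ?_ ?_⟩
  · exact Subgroup.closure_mono (Set.iUnion₂_subset fun t ht => hf1 t (hTA t ht))
  · rw [← hT]
    refine (Subgroup.closure_le _).2 fun t ht => ?_
    exact Subgroup.closure_mono (Set.subset_biUnion_of_mem ht) (hf3 t (hTA t ht))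

/-- If the near-identity elements of a faithful bounded representation always generate a subgroup
of finite index, then a finitely generated group of polynomial growth is virtually nilpotent. -/
theorem PG.virtuallyNilpotent_of_near {Γ A₀ : Type*} [Group Γ] [NormedRing A₀] [NormedAlgebra ℝ A₀]
    (R : Γ →* A₀) (hR : ∀ g, ‖R g‖ ≤ 1) (hinj : Function.Injective R) {d : ℕ} (h : PG d Γ)
    [Group.FG Γ]
    (hfi : ∀ ε : ℝ, 0 < ε → (Subgroup.closure {q : Γ | dev R q ≤ ε}).FiniteIndex) :
    Group.IsVirtuallyNilpotent Γ := by
  obtain ⟨ε, hε0, hε⟩ : ∃ ε : ℝ, 0 < ε ∧ 32 * (2 * 5 ^ d : ℝ) * ε ≤ 1 :=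
    ⟨(32 * (2 * 5 ^ d : ℝ))⁻¹, by positivity, (mul_inv_cancel₀ (by positivity)).le⟩
  set A : Set Γ := {q | dev R q ≤ ε} with hA
  have hfiA : (Subgroup.closure A).FiniteIndex := hfi ε hε0
  have : Group.FG (Subgroup.closure A) := inferInstance
  obtain ⟨B, hBA, hBf, hB⟩ := Subgroup.exists_finite_closure
    ((Group.fg_iff_subgroup_fg _).1 this)
  set S : Set Γ := insert 1 (B ∪ B⁻¹) with hS
  have hSA : S ⊆ A := by
    refine Set.insert_subset ?_ (Set.union_subset hBA ?_)
    · change dev R 1 ≤ ε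
      rw [dev_one]; exact hε0.le
    · intro x hx
      have h1 : dev R x⁻¹ ≤ ε := hBA hx
      have h2 := dev_inv_le R hR x⁻¹
      rw [inv_inv] at h2
      exact h2.trans h1
  have hcl : Subgroup.closure S = Subgroup.closure A :=
    le_antisymm (Subgroup.closure_mono hSA)
      (hB ▸ Subgroup.closure_mono (Set.subset_union_left.trans (Set.subset_insert _ _)))
  have hSf : S.Finite := (hBf.union hBf.inv).insert _
  refine ⟨Subgroup.closure S, ?_, by rw [hcl]; exact hfiA⟩
  have hS1 : (1 : Γ) ∈ S := Set.mem_insert _ _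
  have hSinv : ∀ x ∈ S, x⁻¹ ∈ S := by
    intro x hx
    rcases hx with hx | hx | hx
    · left
      rw [hx, inv_one]
    · right; right
      rwa [Set.mem_inv, inv_inv]
    · right; left
      exact hx
  clear_value S
  have hSε : ∀ x : Subgroup.closure S, (x : Γ) ∈ S →
      dev (R.comp (Subgroup.closure S).subtype) x ≤ ε := fun x hx => hSA hx
  have hcl2 : Subgroup.closure (Subtype.val ⁻¹' S : Set (Subgroup.closure S)) = ⊤ :=
    Subgroup.closure_closure_coe_preimage
  exact PG.nilpotent_of_near (R.comp (Subgroup.closure S).subtype) (fun q => hR q)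
    (h.subgroup _) (hinj.comp (Subgroup.subtype_injective _))
    (S := (Subtype.val ⁻¹' S : Set (Subgroup.closure S)))
    (hSf.preimage Subtype.val_injective.injOn) hS1 (fun x hx => hSinv x hx)
    hcl2 hε hSε

section Compact
variable {E : Type*} [NormedAddCommGroup E] [InnerProductSpace ℝ E]

/-- Linear isometries as bounded operators. -/
def isomToCLM : (E ≃ₗᵢ[ℝ] E) →* (E →L[ℝ] E) where
  toFun g := (g.toContinuousLinearEquiv : E →L[ℝ] E)
  map_one' := rfl
  map_mul' _ _ := rfl

theorem isomToCLM_apply (g : E ≃ₗᵢ[ℝ] E) (v : E) : isomToCLM g v = g v := rfl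

theorem isomToCLM_norm (g : E ≃ₗᵢ[ℝ] E) : ‖isomToCLM g‖ ≤ 1 :=
  ContinuousLinearMap.opNorm_le_bound _ zero_le_one fun v => by
    rw [isomToCLM_apply, g.norm_map, one_mul]

theorem isomToCLM_injective : Function.Injective (isomToCLM (E := E)) := by
  intro g h hgh
  ext v
  exact congrArg (fun f : E →L[ℝ] E => f v) hgh

variable [FiniteDimensional ℝ E]

/-- By compactness of the isometry group, finitely many balls of radius `ε` cover `Q`, so the
elements near the identity generate a subgroup with finitely many cosets. -/
theorem finiteIndex_near (Q : Subgroup (E ≃ₗᵢ[ℝ] E)) {ε : ℝ} (hε : 0 < ε) :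
    (Subgroup.closure {q : Q | dev (isomToCLM.comp Q.subtype) q ≤ ε}).FiniteIndex := by
  set N := Subgroup.closure {q : Q | dev (isomToCLM.comp Q.subtype) q ≤ ε} with hN
  have : ProperSpace (E →L[ℝ] E) := FiniteDimensional.proper ℝ _
  obtain ⟨t, -, htf, ht⟩ := finite_cover_balls_of_compact
    (isCompact_closedBall (0 : E →L[ℝ] E) 1) (half_pos hε)
  have hcov : ∀ q : Q, ∃ x ∈ t, dist (isomToCLM q.1) x < ε / 2 := by
    intro q
    have h1 : isomToCLM q.1 ∈ Metric.closedBall (0 : E →L[ℝ] E) 1 := by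
      rw [mem_closedBall_zero_iff]; exact isomToCLM_norm _
    have := ht h1
    simp only [Set.mem_iUnion, Metric.mem_ball] at this
    obtain ⟨x, hx, h2⟩ := this
    exact ⟨x, hx, h2⟩
  choose f hft hf using hcov
  have := htf.to_subtype
  have hinj : Function.Injective fun a : Q ⧸ N => (⟨f a.out, hft _⟩ : t) := by
    intro a b hab
    have h1 : f a.out = f b.out := congrArg Subtype.val hab
    have h2 : dist (isomToCLM (a.out).1) (isomToCLM (b.out).1) < ε := by
      have h3 := hf a.out
      have h4 := hf b.out
      rw [← h1, dist_comm] at h4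
      linarith [dist_triangle (isomToCLM (a.out).1) (f a.out) (isomToCLM (b.out).1)]
    have h5 : (a.out)⁻¹ * b.out ∈ N := by
      refine Subgroup.subset_closure ?_
      change ‖isomToCLM ((a.out)⁻¹ * b.out : Q).1 - 1‖ ≤ ε
      have h6 : isomToCLM ((a.out)⁻¹ * b.out : Q).1 - 1 =
          isomToCLM ((a.out)⁻¹ : Q).1 * (isomToCLM (b.out).1 - isomToCLM (a.out).1) := by
        rw [mul_sub, ← map_mul, ← map_mul, ← map_one isomToCLM]
        congr 2
        exact (congrArg Subtype.val (inv_mul_cancel a.out)).symm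
      rw [h6]
      refine (norm_mul_le _ _).trans ((mul_le_of_le_one_left (norm_nonneg _)
        (isomToCLM_norm _)).trans ?_)
      rw [← dist_eq_norm, dist_comm]
      exact h2.le
    rw [← Quotient.out_eq a, ← Quotient.out_eq b]
    exact QuotientGroup.eq.2 h5
  have := Finite.of_injective _ hinj
  exact Subgroup.finiteIndex_of_finite_quotient

/-- Finitely generated groups of isometries of a Euclidean space with polynomial growth are
virtually nilpotent. -/
theorem PG.virtuallyNilpotent_isometries (Q : Subgroup (E ≃ₗᵢ[ℝ] E)) {d : ℕ} (h : PG d Q)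
    [Group.FG Q] : Group.IsVirtuallyNilpotent Q :=
  PG.virtuallyNilpotent_of_near (isomToCLM.comp Q.subtype) (fun _ => isomToCLM_norm _)
    (isomToCLM_injective.comp Q.subtype_injective) h fun _ hε => finiteIndex_near Q hε

end Compact

end

/-! ### Virtual maps onto `ℤ` -/

section

open scoped Pointwise
universe u

/-- Some finite-index subgroup of `G` surjects onto `ℤ`. -/
def VirtuallyOntoInt (G : Type*) [Group G] : Prop :=
  ∃ N : Subgroup G, N.FiniteIndex ∧ ∃ φ : N →* Multiplicative ℤ, Function.Surjective φ

theorem VirtuallyOntoInt.of_surjective {G Q : Type*} [Group G] [Group Q]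
    (h : VirtuallyOntoInt Q) (f : G →* Q) (hf : Function.Surjective f) : VirtuallyOntoInt G := by
  obtain ⟨N, hN, φ, hφ⟩ := h
  refine ⟨N.comap f, ⟨by rw [N.index_comap_of_surjective hf]; exact hN.index_ne_zero⟩, φ.comp (f.subgroupComap N), hφ.comp ?_⟩
  exact f.subgroupComap_surjective_of_surjective N hf

theorem VirtuallyOntoInt.of_subgroup {G : Type*} [Group G] (N : Subgroup G) [hN : N.FiniteIndex]
    (h : VirtuallyOntoInt N) : VirtuallyOntoInt G := by
  obtain ⟨K, hK, φ, hφ⟩ := h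
  let e := K.equivMapOfInjective N.subtype N.subtype_injective
  refine ⟨K.map N.subtype, ⟨?_⟩, φ.comp e.symm.toMonoidHom, hφ.comp e.symm.surjective⟩
  rw [Subgroup.index_map_subtype]
  exact mul_ne_zero hK.index_ne_zero hN.index_ne_zero

theorem VirtuallyOntoInt.of_hom {G : Type*} [Group G] (φ : G →* Multiplicative ℤ)
    (hφ : Function.Surjective φ) : VirtuallyOntoInt G :=
  ⟨⊤, inferInstance, φ.comp (⊤ : Subgroup G).subtype, fun z =>
    let ⟨g, hg⟩ := hφ z
    ⟨⟨g, trivial⟩, hg⟩⟩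

theorem Subgroup.infinite_of_finiteIndex {G : Type*} [Group G] [Infinite G] (N : Subgroup G)
    [hN : N.FiniteIndex] : Infinite N := by
  by_contra hc
  rw [not_infinite_iff_finite] at hc
  have := (Subgroup.finite_iff_finite_and_finiteIndex N).2 ⟨hc, hN⟩
  exact not_finite G

theorem exists_hom_int_of_comm (A : Type*) [hA : Group A] (hcomm : ∀ a b : A, a * b = b * a)
    [Group.FG A] [Infinite A] :
    ∃ φ : A →* Multiplicative ℤ, Function.Surjective φ := by
  letI : CommGroup A := { hA with mul_comm := hcomm }
  obtain ⟨ι, j, hι, hj, p, hp, e, ⟨E⟩⟩ := CommGroup.equiv_free_prod_prod_multiplicative_zmod A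
  rcases isEmpty_or_nonempty j with hj' | ⟨⟨k⟩⟩
  · exfalso
    have : ∀ i, NeZero (p i ^ e i) := fun i => ⟨pow_ne_zero _ (hp i).ne_zero⟩
    have : ∀ i, Finite (Multiplicative (ZMod (p i ^ e i))) := fun i =>
      inferInstanceAs (Finite (ZMod (p i ^ e i)))
    have : Finite A := Finite.of_equiv _ E.symm.toEquiv
    exact not_finite A
  · classical
    refine ⟨((Pi.evalMonoidHom (fun _ : j => Multiplicative ℤ) k).comp
      (MonoidHom.fst _ _)).comp E.toMonoidHom, fun z => ⟨E.symm (fun _ => z, 1), ?_⟩⟩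
    simp

theorem virtuallyOntoInt_of_nilpotent (G : Type*) [Group G] [Group.IsNilpotent G] (hfg : Group.FG G)
    (hinf : Infinite G) : VirtuallyOntoInt G := by
  refine Group.nilpotent_center_quotient_ind
    (P := fun G [Group G] [Group.IsNilpotent G] => Group.FG G → Infinite G → VirtuallyOntoInt G) G
    ?_ ?_ hfg hinf
  · intro G _ _ _ hinf
    exact (not_finite G).elim
  · intro G _ _ ih hfg hinf
    rcases finite_or_infinite (G ⧸ Subgroup.center G) with hq | hq
    · have : (Subgroup.center G).FiniteIndex := Subgroup.finiteIndex_of_finite_quotient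
      have := Subgroup.infinite_of_finiteIndex (Subgroup.center G)
      obtain ⟨φ, hφ⟩ := exists_hom_int_of_comm (Subgroup.center G) fun a b =>
        Subtype.ext (Subgroup.mem_center_iff.1 b.2 a)
      exact VirtuallyOntoInt.of_subgroup _ (VirtuallyOntoInt.of_hom φ hφ)
    · exact (ih (Group.fg_of_surjective (QuotientGroup.mk'_surjective _)) hq).of_surjective
        (QuotientGroup.mk' _) (QuotientGroup.mk'_surjective _)

theorem virtuallyOntoInt_of_virtuallyNilpotent (G : Type*) [Group G] (h : Group.IsVirtuallyNilpotent G)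
    [Group.FG G] [Infinite G] : VirtuallyOntoInt G := by
  obtain ⟨N, hN, hfi⟩ := h
  have := hfi
  have := Subgroup.infinite_of_finiteIndex N
  exact VirtuallyOntoInt.of_subgroup N (virtuallyOntoInt_of_nilpotent N inferInstance inferInstance)

/-- A harmonic cocycle with finitely many values vanishes: at a point where the norm is maximal,
the increments must be zero. -/
theorem cocycle_eq_zero {G E ι : Type*} [Group G] [NormedAddCommGroup E] [InnerProductSpace ℝ E]
    [Fintype ι] [Nonempty ι] (ρ : G →* (E ≃ₗᵢ[ℝ] E)) (c : G → E) (s : ι → G)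
    (hcl : Subgroup.closure (Set.range s) = ⊤) (hc : ∀ x y, c (x * y) = c x + ρ x (c y))
    (hs : ∑ i, c (s i) = 0) (hfin : (Set.range c).Finite) (x : G) : c x = 0 := by
  obtain ⟨_, ⟨x0, rfl⟩, hmax⟩ := hfin.exists_maximalFor (fun v => ‖v‖) _ ⟨c 1, 1, rfl⟩
  have hmax' : ∀ y, ‖c y‖ ≤ ‖c x0‖ := fun y => by
    by_contra hlt
    exact hlt (hmax ⟨y, rfl⟩ (not_le.1 hlt).le)
  have h1 : ∀ i, ‖c (x0 * s i)‖ ^ 2 =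
      ‖c x0‖ ^ 2 + 2 * inner ℝ (c x0) (ρ x0 (c (s i))) + ‖c (s i)‖ ^ 2 := by
    intro i
    rw [hc, norm_add_sq_real, LinearIsometryEquiv.norm_map]
  have h2 : ∑ i, inner ℝ (c x0) (ρ x0 (c (s i))) = 0 := by
    rw [← inner_sum, ← map_sum, hs, map_zero, inner_zero_right]
  have h3 : ∑ i, ‖c (s i)‖ ^ 2 ≤ 0 := by
    have h4 : ∑ i, ‖c (x0 * s i)‖ ^ 2 ≤ ∑ _i : ι, ‖c x0‖ ^ 2 :=
      Finset.sum_le_sum fun i _ => pow_le_pow_left₀ (norm_nonneg _) (hmax' _) 2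
    simp only [h1, Finset.sum_add_distrib, ← Finset.mul_sum, h2] at h4
    linarith
  have h5 : ∀ i, c (s i) = 0 := by
    intro i
    have h6 := (Finset.sum_eq_zero_iff_of_nonneg (fun i _ => sq_nonneg ‖c (s i)‖)).1
      (le_antisymm h3 (Finset.sum_nonneg fun i _ => sq_nonneg _)) i (Finset.mem_univ i)
    simpa using h6
  have hc1 : c 1 = 0 := by
    have := hc 1 1
    simpa using this
  have hx : x ∈ Subgroup.closure (Set.range s) := by rw [hcl]; trivial
  induction hx using Subgroup.closure_induction with
  | mem y hy => obtain ⟨i, rfl⟩ := hy; exact h5 i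
  | one => exact hc1
  | mul a b _ _ ha hb => rw [hc, ha, hb, map_zero, add_zero]
  | inv a _ ha =>
    have := hc a⁻¹ a
    rw [inv_mul_cancel, hc1, ha, map_zero, add_zero] at this
    exact this.symm

/-- An infinite finitely generated group of polynomial growth has a finite-index subgroup mapping
onto `ℤ`. -/
theorem PG.virtuallyOntoInt {G : Type u} [Group G] [Infinite G] [Group.FG G] {d : ℕ}
    (h : PG d G) : VirtuallyOntoInt G := by
  obtain ⟨E, i1, i2, i3, ρ, c, ι, i4, i5, s, hcl, hc, hs, x, hx⟩ :=
    h.exists_finiteDimensional_cocycle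
  -- If the image of `ρ` is finite, `c` restricts to a homomorphism into a vector space on the
  -- kernel of `ρ`, which is nonzero since harmonic cocycles with finitely many values vanish. If it
  -- is infinite, the image is an infinite virtually nilpotent group.
  rcases finite_or_infinite ρ.range with hfin | hinf
  · have hker : ρ.ker.FiniteIndex := inferInstance
    have hcm : ∀ a b, a ∈ ρ.ker → c (a * b) = c a + c b := by
      intro a b ha
      rw [hc, MonoidHom.mem_ker.1 ha]; rfl
    let f : ρ.ker →* Multiplicative E :=
      { toFun := fun a => Multiplicative.ofAdd (c a)
        map_one' := by
          have := hc 1 1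
          have h1 : c 1 = 0 := by simpa using this
          simp [h1]
        map_mul' := fun a b => by
          rw [← ofAdd_add, ← hcm a b a.2]; rfl }
    by_cases hf : ∀ a, f a = 1
    · exfalso
      apply hx
      refine cocycle_eq_zero ρ c s hcl hc hs ?_ x
      have hf' : ∀ a ∈ ρ.ker, c a = 0 := fun a ha => by
        have := hf ⟨a, ha⟩
        exact Multiplicative.ofAdd.injective this
      have hinv : ∀ a b : G, (a : G ⧸ ρ.ker) = (b : G ⧸ ρ.ker) → c a = c b := by
        intro a b hab
        have h1 : a⁻¹ * b ∈ ρ.ker := QuotientGroup.eq.1 hab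
        have h2 := hc a (a⁻¹ * b)
        rw [hf' _ h1, mul_inv_cancel_left, map_zero, add_zero] at h2
        exact h2.symm
      have : Set.range c ⊆ Set.range fun q : G ⧸ ρ.ker => c q.out := by
        rintro _ ⟨a, rfl⟩
        exact ⟨(a : G ⧸ ρ.ker), hinv _ _ (QuotientGroup.out_eq' _)⟩
      exact (Set.finite_range _).subset this
    · push Not at hf
      obtain ⟨a, ha⟩ := hf
      have : Group.FG f.range := Group.fg_of_surjective f.rangeRestrict_surjective
      have : Infinite f.range := by
        have hne : c a ≠ 0 := fun h0 => ha (congrArg Multiplicative.ofAdd h0)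
        refine Infinite.of_injective (fun n : ℕ => f.rangeRestrict (a ^ n)) fun m n hmn => ?_
        have h1 : f (a ^ m) = f (a ^ n) := congrArg Subtype.val hmn
        rw [map_pow, map_pow] at h1
        have h2 : m • c a = n • c a := Multiplicative.ofAdd.injective h1
        rw [← Nat.cast_smul_eq_nsmul ℝ, ← Nat.cast_smul_eq_nsmul ℝ] at h2
        exact_mod_cast smul_left_injective ℝ hne h2
      obtain ⟨ψ, hψ⟩ := exists_hom_int_of_comm f.range fun a b => mul_comm a b
      exact VirtuallyOntoInt.of_subgroup ρ.ker (VirtuallyOntoInt.of_hom (ψ.comp f.rangeRestrict)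
        (hψ.comp f.rangeRestrict_surjective))
  · have : Group.FG ρ.range := Group.fg_of_surjective ρ.rangeRestrict_surjective
    have hPG : PG d ρ.range := h.of_surjective ρ.rangeRestrict ρ.rangeRestrict_surjective
    exact (virtuallyOntoInt_of_virtuallyNilpotent _
      (PG.virtuallyNilpotent_isometries ρ.range hPG)).of_surjective ρ.rangeRestrict
      ρ.rangeRestrict_surjective

end

/-! ### Gromov's theorem -/

section

open scoped Pointwise
universe u

theorem Group.fg_of_finiteIndex {G : Type*} [Group G] (P : Subgroup G) [P.FiniteIndex]
    (h : P.FG) : Group.FG G := by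
  rw [Group.fg_def]
  have hfin : (Set.range fun q : G ⧸ P => q.out).Finite := Set.finite_range _
  have : (P ⊔ Subgroup.closure (Set.range fun q : G ⧸ P => q.out)).FG :=
    h.sup ((Subgroup.fg_iff _).2 ⟨_, rfl, hfin⟩)
  convert this
  refine (eq_top_iff.2 fun g _ => ?_).symm
  obtain ⟨p, hp⟩ := QuotientGroup.mk_out_eq_mul P g
  have h1 : g = (g : G ⧸ P).out * (p : G)⁻¹ := by rw [hp]; group
  rw [h1]
  exact mul_mem (Subgroup.mem_sup_right (Subgroup.subset_closure ⟨_, rfl⟩))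
    (Subgroup.mem_sup_left (inv_mem p.2))

/-- All subgroups are finitely generated and some finite-index subgroup is nilpotent. -/
def NoetherianVirtuallyNilpotent (G : Type*) [Group G] : Prop :=
  (∀ K : Subgroup G, K.FG) ∧ Group.IsVirtuallyNilpotent G

theorem NoetherianVirtuallyNilpotent.of_finite (G : Type*) [Group G] [Finite G] :
    NoetherianVirtuallyNilpotent G := by
  refine ⟨fun K => (Group.fg_iff_subgroup_fg K).1 inferInstance, ⊥, ?_, inferInstance⟩
  infer_instance

theorem NoetherianVirtuallyNilpotent.of_finiteIndex {G : Type*} [Group G] (N : Subgroup G)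
    [hN : N.FiniteIndex] (h : NoetherianVirtuallyNilpotent N) : NoetherianVirtuallyNilpotent G := by
  obtain ⟨hfg, M, hM, hMfi⟩ := h
  refine ⟨fun K => ?_, M.map N.subtype, ?_, ⟨?_⟩⟩
  · rw [← Group.fg_iff_subgroup_fg]
    refine Group.fg_of_finiteIndex (N.subgroupOf K) ?_
    have h1 : Group.FG (K.subgroupOf N) := (Group.fg_iff_subgroup_fg _).2 (hfg _)
    rw [← Group.fg_iff_subgroup_fg]
    let f : K.subgroupOf N →* N.subgroupOf K :=
      { toFun := fun x => ⟨⟨x.1.1, x.2⟩, x.1.2⟩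
        map_one' := rfl
        map_mul' := fun _ _ => rfl }
    exact Group.fg_of_surjective (f := f) fun y => ⟨⟨⟨y.1.1, y.2⟩, y.1.2⟩, rfl⟩
  · exact Group.nilpotent_of_mulEquiv (M.equivMapOfInjective N.subtype N.subtype_injective)
  · rw [Subgroup.index_map_subtype]
    exact mul_ne_zero hMfi.index_ne_zero hN.index_ne_zero

theorem MonoidHom.finite_of_fg (N P : Type*) [Group N] [Group P] [Group.FG N] [Finite P] :
    Finite (N →* P) := by
  obtain ⟨X, hX, hfin⟩ := Group.fg_iff.1 ‹Group.FG N›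
  have : Finite X := hfin
  refine Finite.of_injective (fun (f : N →* P) (x : X) => f x) fun f g hfg => ?_
  exact MonoidHom.eq_of_eqOn_dense hX fun x hx => congrFun hfg ⟨x, hx⟩

/-- In a finitely generated group, every finite-index subgroup contains one which is invariant
under all automorphisms. -/
theorem exists_characteristic_le {N : Type*} [Group N] [Group.FG N] (M : Subgroup N)
    [M.FiniteIndex] : ∃ C ≤ M, C.Characteristic ∧ C.FiniteIndex := by
  have := MonoidHom.finite_of_fg N (Equiv.Perm (N ⧸ M))
  refine ⟨⨅ f : N →* Equiv.Perm (N ⧸ M), f.ker, ?_, ?_, Subgroup.finiteIndex_iInf fun f => inferInstance⟩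
  · refine (iInf_le _ (MulAction.toPermHom N (N ⧸ M))).trans ?_
    rw [← Subgroup.normalCore_eq_ker]
    exact Subgroup.normalCore_le M
  · refine Subgroup.characteristic_iff_le_comap.2 fun e x hx => ?_
    rw [Subgroup.mem_comap, Subgroup.mem_iInf]
    intro f
    exact Subgroup.mem_iInf.1 hx (f.comp e.toMonoidHom)

/-- A subgroup is generated by its intersection with the kernel and one lift of a generator of its
image in `ℤ`. -/
theorem fg_of_ker {H : Type*} [Group H] (φ : H →* Multiplicative ℤ)
    (h : ∀ K : Subgroup φ.ker, K.FG) (K : Subgroup H) : K.FG := by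
  obtain ⟨z, hz⟩ := (Subgroup.isCyclic_iff_exists_zpowers_eq_top (K.map φ)).1
    (inferInstance : IsCyclic (K.map φ))
  have hzm : z ∈ K.map φ := hz ▸ Subgroup.mem_zpowers z
  obtain ⟨t, ht, rfl⟩ := hzm
  have h1 : (K ⊓ φ.ker).FG := by
    have h2 := (Group.fg_iff_subgroup_fg _).2 (h (K.subgroupOf φ.ker))
    have h3 := Subgroup.equivMapOfInjective (K.subgroupOf φ.ker) φ.ker.subtype
      φ.ker.subtype_injective
    rw [Subgroup.subgroupOf_map_subtype] at h3
    exact (Group.fg_iff_subgroup_fg _).1 (Group.fg_of_surjective (f := h3.toMonoidHom) h3.surjective)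
  have h4 : (Subgroup.zpowers t).FG := (Subgroup.fg_iff _).2
    ⟨{t}, (Subgroup.zpowers_eq_closure t).symm, Set.finite_singleton t⟩
  convert h1.sup h4
  refine le_antisymm (fun g hg => ?_) (sup_le inf_le_left (by simpa using ht))
  have h5 : φ g ∈ Subgroup.zpowers (φ t) := by
    rw [hz]; exact Subgroup.mem_map_of_mem φ hg
  obtain ⟨k, hk⟩ := Subgroup.mem_zpowers_iff.1 h5
  have h6 : g = (g * (t ^ k)⁻¹) * t ^ k := by group
  rw [h6]
  refine mul_mem (Subgroup.mem_sup_left ⟨K.mul_mem hg (K.inv_mem (K.zpow_mem ht k)), ?_⟩)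
    (Subgroup.mem_sup_right (Subgroup.zpow_mem_zpowers t k))
  change _ ∈ φ.ker
  rw [MonoidHom.mem_ker, map_mul, map_inv, map_zpow, hk, mul_inv_cancel]

theorem finiteIndex_sup_zpowers {H : Type*} [Group H] (φ : H →* Multiplicative ℤ) (t : H)
    (ht : φ t = Multiplicative.ofAdd 1) (C : Subgroup φ.ker) [C.FiniteIndex]
    (M : Subgroup H) (hM : M = C.map φ.ker.subtype) [M.Normal] {k : ℕ} (hk : 1 ≤ k) :
    (M ⊔ Subgroup.zpowers (t ^ k)).FiniteIndex := by
  set L := M ⊔ Subgroup.zpowers (t ^ k) with hL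
  have hsurj : Function.Surjective
      (fun p : (φ.ker ⧸ C) × Fin k => ((p.1.out * t ^ (p.2 : ℕ) : H) : H ⧸ L)) := by
    intro q
    obtain ⟨h, rfl⟩ := QuotientGroup.mk_surjective q
    obtain ⟨a, ha⟩ : ∃ a : ℤ, φ h = Multiplicative.ofAdd a := ⟨Multiplicative.toAdd (φ h), rfl⟩
    have hφt : ∀ b : ℤ, φ (t ^ b) = Multiplicative.ofAdd b := fun b => by
      rw [map_zpow, ht, ← ofAdd_zsmul]; simp
    have hn : h * (t ^ a)⁻¹ ∈ φ.ker := by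
      rw [MonoidHom.mem_ker, map_mul, map_inv, hφt, ha, mul_inv_cancel]
    have hk0 : (k : ℤ) ≠ 0 := by omega
    have hr0 := Int.emod_nonneg a hk0
    have hrk := Int.emod_lt_of_pos a (by omega : (0 : ℤ) < k)
    set r : ℕ := (a % k).toNat with hr
    have hrr : (r : ℤ) = a % k := Int.toNat_of_nonneg hr0
    obtain ⟨m, hm⟩ := QuotientGroup.mk_out_eq_mul C ⟨_, hn⟩
    refine ⟨(((⟨_, hn⟩ : φ.ker) : φ.ker ⧸ C), ⟨r, by omega⟩), ?_⟩
    change (((((⟨_, hn⟩ : φ.ker) : φ.ker ⧸ C).out : H) * t ^ r : H) : H ⧸ L) = h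
    rw [hm, QuotientGroup.eq]
    have hta : t ^ a = t ^ r * (t ^ k) ^ (a / k) := by
      rw [← zpow_natCast t r, ← zpow_natCast t k, ← zpow_mul, ← zpow_add, hrr,
        Int.emod_add_mul_ediv]
    have hmM : ((m : φ.ker) : H)⁻¹ ∈ M := by
      rw [hM]; exact inv_mem (Subgroup.mem_map_of_mem φ.ker.subtype m.2)
    have h1 : (((⟨h * (t ^ a)⁻¹, hn⟩ : φ.ker) * (m : φ.ker) : φ.ker) * t ^ r : H)⁻¹ * h =
        ((t ^ r)⁻¹ * (m : φ.ker).1⁻¹ * (t ^ r)⁻¹⁻¹) * (t ^ k) ^ (a / k) := by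
      rw [Subgroup.coe_mul]
      change ((h * (t ^ a)⁻¹) * _ * t ^ r)⁻¹ * h = _
      rw [hta]; group
    rw [h1]
    exact mul_mem (Subgroup.mem_sup_left (Subgroup.Normal.conj_mem inferInstance _ hmM _))
      (Subgroup.mem_sup_right (Subgroup.zpow_mem_zpowers _ _))
  have := Finite.of_surjective _ hsurj
  exact Subgroup.finiteIndex_of_finite_quotient

/-- The inductive step. A finite-index nilpotent subgroup of the kernel may be chosen
characteristic, hence normal in `H`, and is then extended by a power of a lift `t` of `1`. -/
theorem NoetherianVirtuallyNilpotent.of_ker {H : Type*} [Group H] {d : ℕ} (hH : PG d H)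
    (φ : H →* Multiplicative ℤ) (hφ : Function.Surjective φ)
    (h : NoetherianVirtuallyNilpotent φ.ker) : NoetherianVirtuallyNilpotent H := by
  obtain ⟨hfg, M0, hM0, hfi⟩ := h
  have hall := fg_of_ker φ hfg
  have : Group.FG φ.ker := (Group.fg_iff_subgroup_fg _).2 (hall _)
  have := hfi
  obtain ⟨C, hCM, hCchar, hCfi⟩ := exists_characteristic_le M0
  obtain ⟨t, ht⟩ := hφ (Multiplicative.ofAdd 1)
  have : Group.IsNilpotent M0 := hM0
  have hCn : Group.IsNilpotent C :=
    Group.nilpotent_of_mulEquiv (Subgroup.subgroupOfEquivOfLe hCM)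
  let M : Subgroup H := C.map φ.ker.subtype
  have : M.Normal := inferInstance
  have hM : Group.IsNilpotent M :=
    Group.nilpotent_of_mulEquiv (C.equivMapOfInjective φ.ker.subtype φ.ker.subtype_injective)
  obtain ⟨k, hk, hnil⟩ := hH.nilpotent_sup_zpowers M hM (fun K _ => hall K) t
  exact ⟨hall, _, hnil, finiteIndex_sup_zpowers φ t ht C M rfl hk⟩

/-- Gromov's theorem, together with the finite generation of all subgroups. -/
theorem PG.noetherianVirtuallyNilpotent (d : ℕ) :
    ∀ (G : Type u) [Group G] [Group.FG G], PG d G → NoetherianVirtuallyNilpotent G := by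
  induction d with
  | zero =>
    intro G _ _ h
    have := h.finite_of_zero
    exact NoetherianVirtuallyNilpotent.of_finite G
  | succ d ih =>
    intro G _ _ h
    rcases finite_or_infinite G with hG | hG
    · exact NoetherianVirtuallyNilpotent.of_finite G
    · obtain ⟨H, hfi, φ, hφ⟩ := h.virtuallyOntoInt
      have := hfi
      have hH : PG (d + 1) H := h.subgroup H
      have : Group.FG φ.ker := (Group.fg_iff_subgroup_fg _).2 (hH.ker_fg φ hφ)
      exact NoetherianVirtuallyNilpotent.of_finiteIndex H
        (NoetherianVirtuallyNilpotent.of_ker hH φ hφ (ih φ.ker (hH.ker φ hφ)))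

end

/-! ### Doubling in polynomial growth -/

section

open scoped Pointwise
universe u

theorem exists_pow_of_finite {G : Type*} [Group G] {U : Set G} (h1 : (1 : G) ∈ U)
    {X : Set G} (hX : X.Finite) (h : ∀ x ∈ X, ∃ n, x ∈ U ^ n) : ∃ n, X ⊆ U ^ n := by
  choose! f hf using h
  obtain ⟨n, hn⟩ := (hX.image f).bddAbove
  exact ⟨n, fun x hx => Set.pow_subset_pow_right h1 (hn ⟨x, hx, rfl⟩) (hf x hx)⟩

/-- Balls in a group of polynomial growth are doubling: by Gromov's theorem this reduces to a
nilpotent group of finite index. -/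
theorem PG.doubling {G : Type u} [Group G] {d : ℕ} (hG : PG d G) {T : Set G} (hT : T.Finite)
    (h1 : (1 : G) ∈ T) (hinv : ∀ x ∈ T, x⁻¹ ∈ T) (hgen : Subgroup.closure T = ⊤) (K : ℕ) :
    ∃ M : ℕ, ∀ r : ℕ, 1 ≤ r → (T ^ (K * r)).ncard ≤ M * (T ^ r).ncard := by
  have : Group.FG G := Group.fg_iff.2 ⟨T, hgen, hT⟩
  obtain ⟨-, N, hN, hfi⟩ := PG.noetherianVirtuallyNilpotent d G hG
  have := hN
  have := hfi
  obtain ⟨U, hU, hU1, hUinv, hUgen⟩ := exists_symm_generators N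
  set V : Set G := N.subtype '' U with hV
  have hVfin : V.Finite := hU.image _
  have hV1 : (1 : G) ∈ V := ⟨1, hU1, rfl⟩
  have hVU : ∀ n, V ^ n = N.subtype '' (U ^ n) := fun n => (Set.image_pow N.subtype U n).symm
  have hcard : ∀ n, (V ^ n).ncard = (U ^ n).ncard := fun n => by
    rw [hVU, Set.ncard_image_of_injective _ N.subtype_injective]
  set F : Set G := insert 1 (Set.range fun q : G ⧸ N => q.out) with hF
  have hFfin : F.Finite := (Set.finite_range _).insert 1
  -- Schreier's rewriting: `T F ⊆ F V ^ a`
  obtain ⟨a, ha⟩ : ∃ a, T * F ⊆ F * V ^ a := by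
    obtain ⟨a, ha⟩ := exists_pow_of_finite (X := (fun x : G => (x : G ⧸ N).out⁻¹ * x) '' (T * F)) hV1
      ((hT.mul hFfin).image _) (by
        rintro _ ⟨x, -, rfl⟩
        have hx : (x : G ⧸ N).out⁻¹ * x ∈ N := QuotientGroup.eq.1 (QuotientGroup.out_eq' _)
        obtain ⟨n, hn⟩ := pow_symm_exhaust hUinv hUgen ⟨_, hx⟩
        exact ⟨n, by rw [hVU]; exact ⟨_, hn, rfl⟩⟩)
    refine ⟨a, fun x hx => ?_⟩
    exact Set.mem_mul.2 ⟨(x : G ⧸ N).out, Or.inr ⟨_, rfl⟩, _, ha ⟨x, hx, rfl⟩, by simp⟩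
  have hTn : ∀ n, T ^ n * F ⊆ F * V ^ (a * n) := by
    intro n
    induction n with
    | zero => simp
    | succ n ih =>
      calc T ^ (n + 1) * F = T ^ n * (T * F) := by rw [pow_succ, mul_assoc]
        _ ⊆ T ^ n * (F * V ^ a) := Set.mul_subset_mul_left ha
        _ = (T ^ n * F) * V ^ a := by rw [mul_assoc]
        _ ⊆ (F * V ^ (a * n)) * V ^ a := Set.mul_subset_mul_right ih
        _ = F * V ^ (a * (n + 1)) := by rw [mul_assoc, ← pow_add, mul_add, mul_one]
  obtain ⟨b, hb⟩ := exists_pow_of_finite h1 hVfin fun x _ => pow_symm_exhaust hinv hgen x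
  have hb' : V ⊆ T ^ (b + 1) := hb.trans (Set.pow_subset_pow_right h1 (Nat.le_succ b))
  have hTpos : ∀ n, 1 ≤ (T ^ n).ncard := fun n =>
    (Set.ncard_pos (setFinite_pow hT n)).2 ⟨1, Set.one_mem_pow h1⟩
  obtain ⟨M, hM⟩ := nilpotent_doubling hU hUinv hU1 (a * K * (2 * (b + 1)))
  refine ⟨F.ncard * M + (T ^ (K * (b + 1))).ncard, fun r hr => ?_⟩
  rw [add_mul]
  rcases lt_or_ge r (b + 1) with hlt | hge
  · calc (T ^ (K * r)).ncard ≤ (T ^ (K * (b + 1))).ncard :=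
          Set.ncard_le_ncard (Set.pow_subset_pow_right h1 (Nat.mul_le_mul_left _ hlt.le))
            (setFinite_pow hT _)
      _ ≤ (T ^ (K * (b + 1))).ncard * (T ^ r).ncard := Nat.le_mul_of_pos_right _ (hTpos r)
      _ ≤ _ := Nat.le_add_left _ _
  · set r' := r / (b + 1) with hr'
    have hr1 : 1 ≤ r' := (Nat.one_le_div_iff (Nat.succ_pos b)).2 hge
    have hr2 : (b + 1) * r' ≤ r := Nat.mul_div_le r (b + 1)
    have hr3 : r ≤ 2 * (b + 1) * r' := by
      have h4 := Nat.lt_mul_div_succ r (Nat.succ_pos b)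
      have h5 : (b + 1) * 1 ≤ (b + 1) * r' := Nat.mul_le_mul_left _ hr1
      change r < (b + 1) * (r' + 1) at h4
      nlinarith
    refine le_trans ?_ (Nat.le_add_right _ _)
    calc (T ^ (K * r)).ncard ≤ (F * V ^ (a * (K * r))).ncard := by
          refine Set.ncard_le_ncard (fun x hx => hTn _ ?_) (hFfin.mul (setFinite_pow hVfin _))
          exact Set.mem_mul.2 ⟨x, hx, 1, Or.inl rfl, mul_one x⟩
      _ ≤ F.ncard * (V ^ (a * (K * r))).ncard := Set.natCard_mul_le ..
      _ ≤ F.ncard * (V ^ (a * K * (2 * (b + 1)) * r')).ncard := by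
          refine Nat.mul_le_mul_left _ (Set.ncard_le_ncard (Set.pow_subset_pow_right hV1 ?_)
            (setFinite_pow hVfin _))
          rw [← mul_assoc, mul_assoc (a * K)]
          exact Nat.mul_le_mul_left _ hr3
      _ ≤ F.ncard * (M * (V ^ r').ncard) := by
          rw [hcard, hcard]; exact Nat.mul_le_mul_left _ (hM r' hr1)
      _ ≤ F.ncard * (M * (T ^ r).ncard) := by
          refine Nat.mul_le_mul_left _ (Nat.mul_le_mul_left _ (Set.ncard_le_ncard ?_
            (setFinite_pow hT _)))
          calc V ^ r' ⊆ (T ^ (b + 1)) ^ r' := Set.pow_subset_pow_left hb'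
            _ = T ^ ((b + 1) * r') := (pow_mul _ _ _).symm
            _ ⊆ T ^ r := Set.pow_subset_pow_right h1 hr2
      _ = F.ncard * M * (T ^ r).ncard := by rw [mul_assoc]

end

/-! ### Comparison of densities -/

section

open scoped Pointwise

theorem wordBall_eq_pow {G : Type*} [Group G] (S : Finset G) (r : ℕ) :
    wordBall S r = (insert 1 {x : G | x ∈ S ∨ x⁻¹ ∈ S} : Set G) ^ r := by
  apply Set.Subset.antisymm
  · rintro g ⟨l, hl, hlen, rfl⟩
    refine Set.pow_subset_pow_right (Set.mem_insert _ _) hlen ?_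
    clear hlen
    induction l with
    | nil => simp
    | cons a l ih =>
      rw [List.prod_cons, List.length_cons, pow_succ']
      exact Set.mul_mem_mul (Or.inr (hl a (by simp))) (ih fun x hx => hl x (by simp [hx]))
  · induction r with
    | zero =>
      intro g hg
      rw [pow_zero, Set.mem_one] at hg
      exact ⟨[], by simp, le_rfl, by simp [hg]⟩
    | succ r ih =>
      intro g hg
      rw [pow_succ'] at hg
      obtain ⟨x, hx, y, hy, rfl⟩ := Set.mem_mul.1 hg
      obtain ⟨l, hl, hlen, rfl⟩ := ih hy
      rcases hx with rfl | hx
      · exact ⟨l, hl, hlen.trans (Nat.le_succ r), (one_mul _).symm⟩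
      · refine ⟨x :: l, fun z hz => ?_, by simpa using hlen, by simp⟩
        rcases List.mem_cons.1 hz with rfl | hz
        · exact hx
        · exact hl z hz

theorem exists_eval_le (q : Polynomial ℕ) : ∃ C d : ℕ, ∀ m : ℕ, q.eval m ≤ C * (m + 1) ^ d := by
  refine ⟨∑ i ∈ Finset.range (q.natDegree + 1), q.coeff i, q.natDegree, fun m => ?_⟩
  rw [Polynomial.eval_eq_sum_range, Finset.sum_mul]
  refine Finset.sum_le_sum fun i hi => Nat.mul_le_mul_left _ ?_
  exact (Nat.pow_le_pow_left (Nat.le_succ m) i).trans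
    (Nat.pow_le_pow_right (Nat.succ_pos m) (Nat.lt_succ_iff.1 (Finset.mem_range.1 hi)))

/-- A polynomial bound for one symmetric generating set bounds the growth of every finite subset,
since that subset is contained in a ball. -/
theorem exists_PG {G : Type*} [Group G] {T : Set G} (hT : T.Finite)
    (h1 : (1 : G) ∈ T) (hinv : ∀ x ∈ T, x⁻¹ ∈ T) (hgen : Subgroup.closure T = ⊤)
    (q : Polynomial ℕ) (hq : ∀ r, (T ^ r).ncard ≤ q.eval r) : ∃ d, PG d G := by
  obtain ⟨C, d, hC⟩ := exists_eval_le q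
  refine ⟨d, fun X hX => ?_⟩
  obtain ⟨a, ha⟩ := exists_pow_of_finite h1 hX fun x _ => pow_symm_exhaust hinv hgen x
  refine ⟨C * (a + 1) ^ d, fun n => ?_⟩
  calc (X ^ n).ncard ≤ (T ^ (a * n)).ncard := by
        refine Set.ncard_le_ncard ?_ (setFinite_pow hT _)
        rw [pow_mul]; exact Set.pow_subset_pow_left ha
    _ ≤ C * (a * n + 1) ^ d := (hq _).trans (hC _)
    _ ≤ C * ((a + 1) * (n + 1)) ^ d :=
        Nat.mul_le_mul_left _ (Nat.pow_le_pow_left (by nlinarith) d)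
    _ = _ := by rw [mul_pow, mul_assoc]

/-- The translates of a fibre of `φ` in the ball of radius `r` by the first `r` powers of `t` are
disjoint and lie in the ball of radius `(L + 1) r`. -/
theorem mul_ncard_preimage_le {G : Type*} [Group G] {T : Set G} (hT : T.Finite)
    (φ : G → ℤ) (hhom : ∀ g h : G, φ (g * h) = φ g + φ h) {c : ℕ}
    (hc : ∀ x ∈ T, |φ x| ≤ c) (h1 : (1 : G) ∈ T) {t : G} (ht : φ t = 1) {L : ℕ} (htL : t ∈ T ^ L)
    (A : Set ℤ) (r : ℕ) :
    (φ ⁻¹' A ∩ T ^ r).ncard * r ≤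
      (A ∩ Set.Icc (-((c * r : ℕ) : ℤ)) ((c * r : ℕ) : ℤ)).ncard * (T ^ ((L + 1) * r)).ncard := by
  have hφ1 : φ 1 = 0 := by simpa using hhom 1 1
  have hpow : ∀ k : ℕ, φ (t ^ k) = k := by
    intro k
    induction k with
    | zero => simpa using hφ1
    | succ k ih => rw [pow_succ, hhom, ih, ht]; simp
  have hball : ∀ n : ℕ, ∀ g ∈ T ^ n, |φ g| ≤ (c * n : ℕ) := by
    intro n
    induction n with
    | zero =>
      intro g hg
      rw [pow_zero, Set.mem_one] at hg
      simp [hg, hφ1]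
    | succ n ih =>
      intro g hg
      rw [pow_succ] at hg
      obtain ⟨x, hx, y, hy, rfl⟩ := Set.mem_mul.1 hg
      rw [hhom]
      calc |φ x + φ y| ≤ |φ x| + |φ y| := abs_add_le _ _
        _ ≤ (c * n : ℕ) + c := add_le_add (ih x hx) (hc y hy)
        _ = _ := by push_cast; ring
  have hI : (Set.Iio r).ncard = r := by simp
  have hprod : (φ ⁻¹' A ∩ T ^ r).ncard * r = ((φ ⁻¹' A ∩ T ^ r) ×ˢ Set.Iio r).ncard := by
    rw [Set.ncard_prod, hI]
  rw [hprod, ← Set.ncard_prod]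
  refine Set.ncard_le_ncard_of_injOn (fun p => (φ p.1, p.1 * t ^ p.2)) ?_ ?_
    (((Set.finite_Icc _ _).inter_of_right _).prod (setFinite_pow hT _))
  · rintro ⟨g, k⟩ ⟨⟨hgA, hgT⟩, hk⟩
    refine ⟨⟨hgA, abs_le.1 (hball r g hgT)⟩, ?_⟩
    have h2 : t ^ k ∈ T ^ (L * r) := by
      have h3 : t ^ k ∈ T ^ (L * k) := by rw [pow_mul]; exact Set.pow_mem_pow htL
      exact Set.pow_subset_pow_right h1 (Nat.mul_le_mul_left _ (le_of_lt hk)) h3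
    have h4 := Set.mul_mem_mul hgT h2
    rw [← pow_add] at h4
    change g * t ^ k ∈ _
    convert h4 using 2
    ring
  · rintro ⟨g, k⟩ _ ⟨g', k'⟩ _ h
    have h2 : φ g = φ g' := congrArg Prod.fst h
    have h3 : g * t ^ k = g' * t ^ k' := congrArg Prod.snd h
    have h4 := congrArg φ h3
    rw [hhom, hhom, hpow, hpow, h2] at h4
    have h5 : k = k' := by exact_mod_cast add_left_cancel h4
    subst h5
    rw [mul_right_cancel h3]

/-- A comparison along the sparser sequence `c * r` passes to upper limits. -/
theorem limsup_le_mul_limsup {v u : ℕ → ℝ} {K : ℝ} (hK : 0 < K) {c : ℕ} (hc : 1 ≤ c)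
    (hv : ∀ r, 0 ≤ v r) (hu : ∀ r, u r ≤ 1) (h : ∀ r, 1 ≤ r → v r ≤ K * u (c * r)) :
    limsup v atTop ≤ K * limsup u atTop := by
  refine le_of_forall_pos_le_add fun ε hε => ?_
  have hbd : IsBoundedUnder (· ≤ ·) atTop u := isBoundedUnder_of ⟨1, hu⟩
  have hev : ∀ᶠ m in atTop, u m < limsup u atTop + ε / K :=
    eventually_lt_of_limsup_lt (lt_add_of_pos_right _ (div_pos hε hK)) hbd
  have ht : Tendsto (fun r : ℕ => c * r) atTop atTop := tendsto_id.const_mul_atTop' hc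
  have hcob : IsCoboundedUnder (· ≤ ·) atTop v :=
    (isBoundedUnder_of ⟨0, hv⟩ : IsBoundedUnder (· ≥ ·) atTop v).isCoboundedUnder_le
  refine limsup_le_of_le hcob ?_
  filter_upwards [ht.eventually hev, eventually_ge_atTop 1] with r hr h1
  calc v r ≤ K * u (c * r) := h r h1
    _ ≤ K * (limsup u atTop + ε / K) := mul_le_mul_of_nonneg_left hr.le hK.le
    _ = K * limsup u atTop + ε := by field_simp

end

open scoped Pointwise

/-- Let `G` be a group generated by a finite set `S`, of polynomial growth, and let `φ : G → ℤ`
be a surjective group homomorphism. Then there is a constant `C > 0` such that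
`d_{(G,S)}(φ⁻¹(A)) ≤ C · d_ℤ(A)` for every `A ⊆ ℤ`. -/
theorem wordDensity_preimage_le {G : Type*} [Group G]
    (S : Finset G) (hS : Subgroup.closure (S : Set G) = ⊤)
    (hpoly : ∃ q : Polynomial ℕ, ∀ r : ℕ, (wordBall S r).ncard ≤ q.eval r)
    (φ : G → ℤ) (hhom : ∀ g h : G, φ (g * h) = φ g + φ h)
    (hsurj : Function.Surjective φ) :
    ∃ C : ℝ, 0 < C ∧ ∀ A : Set ℤ, wordDensity S (φ ⁻¹' A) ≤ C * densityZ A := by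
  obtain ⟨q, hq⟩ := hpoly
  set T : Set G := insert 1 {x : G | x ∈ S ∨ x⁻¹ ∈ S} with hTdef
  have hTfin : T.Finite := by
    refine Set.Finite.insert 1 (S.finite_toSet.union (S.finite_toSet.inv) |>.subset ?_)
    rintro x (hx | hx)
    · exact Or.inl hx
    · exact Or.inr hx
  have h1 : (1 : G) ∈ T := Set.mem_insert _ _
  have hinv : ∀ x ∈ T, x⁻¹ ∈ T := by
    rintro x (rfl | hx | hx)
    · rw [inv_one]; exact h1
    · exact Or.inr (Or.inr (by rwa [inv_inv]))
    · exact Or.inr (Or.inl hx)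
  have hgen : Subgroup.closure T = ⊤ :=
    top_le_iff.1 (hS ▸ Subgroup.closure_mono fun x hx => Or.inr (Or.inl hx))
  have hball : ∀ r, wordBall S r = T ^ r := wordBall_eq_pow S
  obtain ⟨d, hPG⟩ := exists_PG hTfin h1 hinv hgen q fun r => by rw [← hball]; exact hq r
  obtain ⟨t, ht⟩ := hsurj 1
  obtain ⟨L, hL⟩ := pow_symm_exhaust hinv hgen t
  obtain ⟨c0, hc0⟩ := (hTfin.image fun x => (φ x).natAbs).bddAbove
  obtain ⟨M, hM⟩ := hPG.doubling hTfin h1 hinv hgen (L + 1)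
  set c := c0 + 1 with hcdef
  have hc : ∀ x ∈ T, |φ x| ≤ c := fun x hx => by
    have := hc0 ⟨x, hx, rfl⟩
    change (φ x).natAbs ≤ c0 at this
    rw [Int.abs_eq_natAbs]
    omega
  have hpos : ∀ r, 0 < ((T ^ r).ncard : ℝ) := fun r => by
    exact_mod_cast (Set.ncard_pos (setFinite_pow hTfin r)).2 ⟨1, Set.one_mem_pow h1⟩
  refine ⟨3 * c * (M + 1), by positivity, fun A => ?_⟩
  refine limsup_le_mul_limsup (c := c) (by positivity) (by omega) (fun r => by positivity)
    (fun r => ?_) fun r hr => ?_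
  · have h2 : (A ∩ Set.Icc (-(r : ℤ)) (r : ℤ)).ncard ≤ 2 * r + 1 := by
      refine (Set.ncard_le_ncard Set.inter_subset_right (Set.finite_Icc _ _)).trans ?_
      rw [← Finset.coe_Icc, Set.ncard_coe_finset, Int.card_Icc]
      omega
    rw [div_le_one (by positivity)]
    exact_mod_cast h2
  · rw [hball]
    set N := (A ∩ Set.Icc (-((c * r : ℕ) : ℤ)) ((c * r : ℕ) : ℤ)).ncard with hN
    have h3 : (φ ⁻¹' A ∩ T ^ r).ncard * r ≤ N * (M * (T ^ r).ncard) :=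
      (mul_ncard_preimage_le hTfin φ hhom hc h1 ht hL A r).trans
        (Nat.mul_le_mul_left _ (hM r hr))
    have h4 : ((φ ⁻¹' A ∩ T ^ r).ncard : ℝ) * r ≤ N * (M * (T ^ r).ncard) := by exact_mod_cast h3
    have hr' : (1 : ℝ) ≤ r := by exact_mod_cast hr
    have hc1 : (1 : ℝ) ≤ c := by rw [hcdef]; push_cast; linarith [(Nat.cast_nonneg c0 : (0:ℝ) ≤ c0)]
    have hr0 : (0 : ℝ) < r := by linarith
    have h5 : ((φ ⁻¹' A ∩ T ^ r).ncard : ℝ) / (T ^ r).ncard ≤ N * M / r := by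
      rw [div_le_div_iff₀ (hpos r) hr0]
      linarith
    refine h5.trans ?_
    have hcr : (1 : ℝ) ≤ c * r := by nlinarith
    have hMN : (0 : ℝ) ≤ N * M := by positivity
    have hN0 : (0 : ℝ) ≤ N := by positivity
    have h6 : 2 * ((c * r : ℕ) : ℝ) + 1 ≤ 3 * c * r := by push_cast; nlinarith
    rw [mul_div_assoc', div_le_div_iff₀ hr0 (by positivity)]
    calc (N : ℝ) * M * (2 * ((c * r : ℕ) : ℝ) + 1) ≤ N * M * (3 * c * r) :=
          mul_le_mul_of_nonneg_left h6 hMN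
      _ ≤ N * (M + 1) * (3 * c * r) := by
          refine mul_le_mul_of_nonneg_right ?_ (by positivity)
          nlinarith
      _ = 3 * c * (M + 1) * N * r := by ring
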